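/- arXiv:0901.0907 — 4 statements merged into one kernel-verified Lean document; each statement's English description precedes it below -/
import Mathlib

section
/- (Knese) Let f be analytic on 𝔻^d with sup_{𝔻^d}|f| ≤ 1, and suppose f depends on all d variables (for each r there exist two points of 𝔻^d differing only in the r-th coordinate at which f takes different values). Then equality ∑_{r=1}^d (1 − |λ^r|²)|∂f/∂λ^r(λ)| = 1 − |f(λ)|² holds at every λ ∈ 𝔻^d if and only if there is a (1+d) × (1+d) complex matrix V which is unitary and symmetric (equal to its own transpose), with block form V = [[A, B],[C, D]] where A ∈ ℂ, B is a 1×d row vector, C is a d×1 column vector, and D is a d×d matrix, such that for every λ ∈ 𝔻^d, writing E_λ = diag(λ¹,…,λ^d), the matrix I_d − D E_λ is invertible and f(λ) = A + B E_λ (I_d − D E_λ)^{-1} C. -/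
open Finset Matrix

/-- The open polydisk `𝔻^d` in `ℂ^d`. -/
def Polydisk (d : ℕ) : Set (Fin d → ℂ) := {lam | ∀ r, ‖lam r‖ < 1}


/-- Complex differentiability along complex lines at points of `U`. -/
def LineDiff {d : ℕ} (U : Set (Fin d → ℂ)) (g : (Fin d → ℂ) → ℂ) : Prop :=
  ∀ (a v : Fin d → ℂ) (t : ℂ), a + t • v ∈ U → DifferentiableAt ℂ (fun s : ℂ => g (a + s • v)) t

/-- The partial derivative, exactly as in the statement. -/
noncomputable def pd {d : ℕ} (f : (Fin d → ℂ) → ℂ) (r : Fin d) (z : Fin d → ℂ) : ℂ :=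
  deriv (fun t : ℂ => f (Function.update z r t)) (z r)

lemma polydisk_eq_ball (d : ℕ) : Polydisk d = Metric.ball 0 1 := by
  ext z
  simp [Polydisk, pi_norm_lt_iff]

lemma isOpen_polydisk (d : ℕ) : IsOpen (Polydisk d) := by
  rw [polydisk_eq_ball]; exact Metric.isOpen_ball

lemma update_eq_line {d : ℕ} (z : Fin d → ℂ) (r : Fin d) (t : ℂ) :
    Function.update z r t = z + (t - z r) • Pi.single r (1 : ℂ) := by
  ext i
  by_cases h : i = r
  · subst h; simp
  · simp [h]

lemma pd_eq {d : ℕ} (f : (Fin d → ℂ) → ℂ) (r : Fin d) (z : Fin d → ℂ) :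
    pd f r z = deriv (fun s : ℂ => f (z + s • Pi.single r (1 : ℂ))) 0 := by
  unfold pd
  simp_rw [update_eq_line]
  have := deriv_comp_sub_const (fun s : ℂ => f (z + s • (Pi.single r (1 : ℂ) : Fin d → ℂ))) (z r) (z r)
  simpa using this

lemma lineDiff_of_differentiableOn {d : ℕ} {U : Set (Fin d → ℂ)} (hU : IsOpen U)
    {f : (Fin d → ℂ) → ℂ} (hf : DifferentiableOn ℂ f U) : LineDiff U f := by
  intro a v t ht
  have h1 : DifferentiableAt ℂ f (a + t • v) := hf.differentiableAt (hU.mem_nhds ht)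
  have h2 : DifferentiableAt ℂ (fun s : ℂ => a + s • v) t := by fun_prop
  exact DifferentiableAt.comp t h1 h2

/-- Second order estimate for difference quotients. -/
lemma slope_estimate {g : ℂ → ℂ} {ρ : ℝ} (hρ : 0 < ρ)
    (hg : DifferentiableOn ℂ g (Metric.ball 0 ρ)) (hb : ∀ s ∈ Metric.ball (0 : ℂ) ρ, ‖g s‖ ≤ 1)
    {ε : ℂ} (hε0 : ε ≠ 0) (hε : ‖ε‖ < ρ) :
    ‖(g ε - g 0) / ε - deriv g 0‖ ≤ (4 / ρ / ρ) * ‖ε‖ := by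
  have h0 : (0 : ℂ) ∈ Metric.ball (0 : ℂ) ρ := Metric.mem_ball_self hρ
  have hεm : ε ∈ Metric.ball (0 : ℂ) ρ := by simpa using hε
  have hk1 : ∀ s ∈ Metric.ball (0 : ℂ) ρ, ‖dslope g 0 s‖ ≤ 2 / ρ := by
    intro s hs
    refine Complex.norm_dslope_le_div_of_mapsTo_ball hg ?_ hs
    intro w hw
    rw [Metric.mem_closedBall, dist_eq_norm]
    calc ‖g w - g 0‖ ≤ ‖g w‖ + ‖g 0‖ := norm_sub_le _ _
      _ ≤ 2 := by linarith [hb w hw, hb 0 h0]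
  have hkd : DifferentiableOn ℂ (dslope g 0) (Metric.ball 0 ρ) :=
    (Complex.differentiableOn_dslope (Metric.ball_mem_nhds _ hρ)).2 hg
  have hk2 : ‖dslope (dslope g 0) 0 ε‖ ≤ (4 / ρ) / ρ := by
    refine Complex.norm_dslope_le_div_of_mapsTo_ball hkd ?_ hεm
    intro w hw
    rw [Metric.mem_closedBall, dist_eq_norm]
    calc ‖dslope g 0 w - dslope g 0 0‖ ≤ ‖dslope g 0 w‖ + ‖dslope g 0 0‖ := norm_sub_le _ _
      _ ≤ 2 / ρ + 2 / ρ := add_le_add (hk1 w hw) (hk1 0 h0)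
      _ = 4 / ρ := by ring
  rw [dslope_of_ne _ hε0, slope_def_field, dslope_of_ne _ hε0, slope_def_field, dslope_same,
    sub_zero, norm_div, div_le_iff₀ (norm_pos_iff.2 hε0)] at hk2
  exact hk2

section partials
variable {d : ℕ} {f : (Fin d → ℂ) → ℂ}

lemma ball_line {ρ : ℝ} {z : Fin d → ℂ} (hz : z ∈ Metric.ball (0 : Fin d → ℂ) (1 - ρ)) (r : Fin d)
    {s : ℂ} (hs : ‖s‖ < ρ) : z + s • Pi.single r (1 : ℂ) ∈ Polydisk d := by
  intro i
  have h1 : ‖z i‖ < 1 - ρ := lt_of_le_of_lt (norm_le_pi_norm z i) (by simpa using hz)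
  have h2 : ‖s * (Pi.single r (1 : ℂ) : Fin d → ℂ) i‖ ≤ ‖s‖ := by
    by_cases h : i = r
    · subst h; simp
    · simp [h]
  calc ‖z i + s * (Pi.single r (1 : ℂ) : Fin d → ℂ) i‖
      ≤ ‖z i‖ + ‖s * (Pi.single r (1 : ℂ) : Fin d → ℂ) i‖ := norm_add_le _ _
    _ < 1 := by linarith

lemma pd_tendsto (hf : DifferentiableOn ℂ f (Polydisk d))
    (hb : ∀ z ∈ Polydisk d, ‖f z‖ ≤ 1) (r : Fin d) {ρ : ℝ} (hρ : 0 < ρ) :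
    TendstoUniformlyOn (fun (ε : ℂ) z => (f (z + ε • Pi.single r (1 : ℂ)) - f z) / ε) (pd f r)
      (nhdsWithin 0 {0}ᶜ) (Metric.ball 0 (1 - ρ)) := by
  rw [Metric.tendstoUniformlyOn_iff]
  intro η hη
  have hc : 0 < 4 / ρ / ρ := by positivity
  have h1 : ∀ᶠ ε : ℂ in nhdsWithin 0 {0}ᶜ, ‖ε‖ < min ρ (η / (4 / ρ / ρ)) := by
    have : Metric.ball (0 : ℂ) (min ρ (η / (4 / ρ / ρ))) ∈ nhdsWithin (0 : ℂ) {0}ᶜ :=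
      mem_nhdsWithin_of_mem_nhds (Metric.ball_mem_nhds _ (by positivity))
    filter_upwards [this] with ε hε
    simpa using hε
  filter_upwards [h1, self_mem_nhdsWithin] with ε hε hε0 z hz
  have hε0' : ε ≠ 0 := hε0
  rw [dist_comm, dist_eq_norm, pd_eq]
  have hl := lineDiff_of_differentiableOn (isOpen_polydisk d) hf
  have := slope_estimate (g := fun s : ℂ => f (z + s • Pi.single r (1 : ℂ))) hρ
    (fun s hs => (hl z _ s (ball_line hz r (by simpa using hs))).differentiableWithinAt)
    (fun s hs => hb _ (ball_line hz r (by simpa using hs))) hε0' (lt_of_lt_of_le hε (min_le_left _ _))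
  simp only [zero_smul, add_zero] at this
  refine lt_of_le_of_lt this ?_
  have h2 := lt_of_lt_of_le hε (min_le_right _ _)
  rw [lt_div_iff₀ hc] at h2
  linarith

lemma exists_ball {z : Fin d → ℂ} (hz : z ∈ Polydisk d) :
    ∃ ρ : ℝ, 0 < ρ ∧ z ∈ Metric.ball (0 : Fin d → ℂ) (1 - ρ) := by
  rw [polydisk_eq_ball] at hz
  simp only [Metric.mem_ball, dist_zero_right] at hz ⊢
  exact ⟨(1 - ‖z‖) / 2, by linarith, by linarith⟩

lemma quotient_differentiableOn (hf : DifferentiableOn ℂ f (Polydisk d)) (r : Fin d)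
    {ρ : ℝ} (hρ : 0 < ρ) : ∀ᶠ ε : ℂ in nhdsWithin 0 {0}ᶜ,
    DifferentiableOn ℂ (fun z => (f (z + ε • Pi.single r (1 : ℂ)) - f z) / ε)
      (Metric.ball 0 (1 - ρ)) := by
  have : Metric.ball (0 : ℂ) ρ ∈ nhdsWithin (0 : ℂ) {0}ᶜ :=
      mem_nhdsWithin_of_mem_nhds (Metric.ball_mem_nhds _ (by positivity))
  filter_upwards [this] with ε hε z hz
  have h1 : DifferentiableAt ℂ f z := by
    have := ball_line hz r (s := 0) (by simpa using hρ)
    simp only [zero_smul, add_zero] at this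
    exact hf.differentiableAt ((isOpen_polydisk d).mem_nhds this)
  have h2 : DifferentiableAt ℂ f (z + ε • Pi.single r (1 : ℂ)) :=
    hf.differentiableAt ((isOpen_polydisk d).mem_nhds (ball_line hz r (by simpa using hε)))
  have h3 : DifferentiableAt ℂ (fun z : Fin d → ℂ => f (z + ε • Pi.single r (1 : ℂ))) z :=
    DifferentiableAt.comp z h2 (by fun_prop)
  simp_rw [div_eq_mul_inv]
  exact ((h3.fun_sub h1).mul_const ε⁻¹).differentiableWithinAt

lemma pd_continuousOn (hf : DifferentiableOn ℂ f (Polydisk d))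
    (hb : ∀ z ∈ Polydisk d, ‖f z‖ ≤ 1) (r : Fin d) : ContinuousOn (pd f r) (Polydisk d) := by
  intro z hz
  obtain ⟨ρ, hρ, hzρ⟩ := exists_ball hz
  have := (pd_tendsto hf hb r hρ).continuousOn
    ((quotient_differentiableOn hf r hρ).frequently.mono fun ε h => h.continuousOn)
  exact (this.continuousAt (Metric.isOpen_ball.mem_nhds hzρ)).continuousWithinAt

lemma pd_lineDiff (hf : DifferentiableOn ℂ f (Polydisk d))
    (hb : ∀ z ∈ Polydisk d, ‖f z‖ ≤ 1) (r : Fin d) : LineDiff (Polydisk d) (pd f r) := by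
  intro a v t ht
  obtain ⟨ρ, hρ, hzρ⟩ := exists_ball ht
  have hc : Continuous (fun s : ℂ => a + s • v) := by fun_prop
  have hU : IsOpen ((fun s : ℂ => a + s • v) ⁻¹' Metric.ball 0 (1 - ρ)) :=
    Metric.isOpen_ball.preimage hc
  have h1 := ((pd_tendsto hf hb r hρ).comp (fun s : ℂ => a + s • v)).tendstoLocallyUniformlyOn
  have h2 := h1.differentiableOn
    ((quotient_differentiableOn hf r hρ).mono fun ε h =>
      h.comp (t := Metric.ball 0 (1 - ρ)) (f := fun s : ℂ => a + s • v)
        (by fun_prop) (fun _ hs => hs)) hU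
  exact h2.differentiableAt (hU.mem_nhds hzρ)

/-- Identity theorem on the polydisk via complex lines. -/
lemma line_identity {g : (Fin d → ℂ) → ℂ} (hg : LineDiff (Polydisk d) g) {p : Fin d → ℂ}
    (hp : p ∈ Polydisk d) (h0 : ∀ᶠ z in nhds p, g z = 0) : ∀ z ∈ Polydisk d, g z = 0 := by
  intro z hz
  have hc : Continuous (fun s : ℂ => p + s • (z - p)) := by fun_prop
  have hU : IsOpen ((fun s : ℂ => p + s • (z - p)) ⁻¹' Polydisk d) :=
    (isOpen_polydisk d).preimage hc
  have hconv : Convex ℝ ((fun s : ℂ => p + s • (z - p)) ⁻¹' Polydisk d) := by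
    rw [polydisk_eq_ball]
    intro x hx y hy a b ha hb hab
    have h := convex_ball (0 : Fin d → ℂ) 1 hx hy ha hb hab
    have e : p + (a • x + b • y) • (z - p) = a • (p + x • (z - p)) + b • (p + y • (z - p)) := by
      have hab' : (b : ℂ) = 1 - a := by
        rw [eq_sub_iff_add_eq']; exact_mod_cast hab
      ext i
      simp only [Pi.add_apply, Pi.smul_apply, Pi.sub_apply, smul_eq_mul, Complex.real_smul, hab']
      ring
    change p + (a • x + b • y) • (z - p) ∈ Metric.ball (0 : Fin d → ℂ) 1
    rw [e]
    exact h
  have hd : DifferentiableOn ℂ (fun s : ℂ => g (p + s • (z - p)))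
      ((fun s : ℂ => p + s • (z - p)) ⁻¹' Polydisk d) :=
    fun s hs => (hg p _ s hs).differentiableWithinAt
  have hev : (fun s : ℂ => g (p + s • (z - p))) =ᶠ[nhds 0] (fun _ => 0) := by
    have : Filter.Tendsto (fun s : ℂ => p + s • (z - p)) (nhds 0) (nhds p) := by
      have := hc.tendsto 0
      simpa using this
    exact this.eventually h0
  have := (hd.analyticOnNhd hU).eqOn_of_preconnected_of_eventuallyEq
    (analyticOnNhd_const) hconv.isPreconnected (z₀ := 0) (by simpa using hp) hev
  have h1 := this (x := 1) (by simpa using hz)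
  simpa using h1

lemma pd_ne_zero (hf : DifferentiableOn ℂ f (Polydisk d)) (r : Fin d)
    (hdep : ∃ mu ∈ Polydisk d, ∃ t : ℂ,
      Function.update mu r t ∈ Polydisk d ∧ f mu ≠ f (Function.update mu r t)) :
    ¬ ∀ z ∈ Polydisk d, pd f r z = 0 := by
  rintro h
  obtain ⟨mu, hmu, t, ht, hne⟩ := hdep
  apply hne
  have hl := lineDiff_of_differentiableOn (isOpen_polydisk d) hf
  have hin : ∀ s ∈ Metric.ball (0 : ℂ) 1, Function.update mu r s ∈ Polydisk d := by
    intro s hs i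
    by_cases hi : i = r
    · subst hi; simpa using hs
    · simpa [hi] using hmu i
  have hda : DifferentiableOn ℂ (fun s : ℂ => f (Function.update mu r s)) (Metric.ball 0 1) := by
    intro s hs
    have h1 : DifferentiableAt ℂ f (Function.update mu r s) :=
      hf.differentiableAt ((isOpen_polydisk d).mem_nhds (hin s hs))
    have h2 : DifferentiableAt ℂ (fun s : ℂ => Function.update mu r s) s := by
      simp_rw [update_eq_line]; fun_prop
    exact (DifferentiableAt.comp s h1 h2).differentiableWithinAt
  have := Metric.isOpen_ball.is_const_of_deriv_eq_zero
    (convex_ball (0 : ℂ) 1).isPreconnected hda (by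
      intro s hs
      have := h _ (hin s hs)
      unfold pd at this
      simpa using this) (x := mu r) (y := t) (by simpa using hmu r) (by simpa using ht r)
  simpa using this

lemma exists_good_point (hf : DifferentiableOn ℂ f (Polydisk d))
    (hb : ∀ z ∈ Polydisk d, ‖f z‖ ≤ 1)
    (hdep : ∀ r : Fin d, ∃ mu ∈ Polydisk d, ∃ t : ℂ,
      Function.update mu r t ∈ Polydisk d ∧ f mu ≠ f (Function.update mu r t)) :
    ∃ p ∈ Polydisk d, ∀ r, pd f r p ≠ 0 := by
  have key : ∀ S : Finset (Fin d), ∃ p ∈ Polydisk d, ∀ r ∈ S, pd f r p ≠ 0 := by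
    intro S
    induction S using Finset.induction_on with
    | empty => exact ⟨0, fun r => by simp, by simp⟩
    | insert r S hr ih =>
      obtain ⟨p, hp, hpS⟩ := ih
      have hev : ∀ᶠ z in nhds p, z ∈ Polydisk d ∧ ∀ q ∈ S, pd f q z ≠ 0 := by
        refine ((isOpen_polydisk d).mem_nhds hp |> Filter.Eventually.and <| ?_)
        rw [Filter.eventually_all_finset]
        intro q hq
        exact ((pd_continuousOn hf hb q).continuousAt
          ((isOpen_polydisk d).mem_nhds hp)).eventually_ne (hpS q hq)
      by_contra hcon
      push Not at hcon
      apply pd_ne_zero hf r (hdep r)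
      apply line_identity (pd_lineDiff hf hb r) hp
      filter_upwards [hev] with z hz
      by_contra hne
      obtain ⟨q, hq, hq0⟩ := hcon z hz.1
      rcases Finset.mem_insert.1 hq with rfl | hq
      · exact hne hq0
      · exact hz.2 q hq hq0
  obtain ⟨p, hp, h⟩ := key Finset.univ
  exact ⟨p, hp, fun r => h r (Finset.mem_univ _)⟩

end partials

section polar
variable {d : ℕ} {f : (Fin d → ℂ) → ℂ}

lemma local_roots (hf : DifferentiableOn ℂ f (Polydisk d))
    (hb : ∀ z ∈ Polydisk d, ‖f z‖ ≤ 1) {p : Fin d → ℂ} (hp : p ∈ Polydisk d)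
    (hne : ∀ r, pd f r p ≠ 0) :
    ∃ R : ℝ, 0 < R ∧ Metric.ball p R ⊆ Polydisk d ∧ ∃ h : Fin d → (Fin d → ℂ) → ℂ,
      ∀ r, LineDiff (Metric.ball p R) (h r) ∧
        ∀ z ∈ Metric.ball p R, h r z ^ 2 = pd f r z ∧ h r z ≠ 0 := by
  have hev : ∀ᶠ z in nhds p, z ∈ Polydisk d ∧ ∀ r, pd f r z / pd f r p ∈ Complex.slitPlane := by
    refine ((isOpen_polydisk d).mem_nhds hp |> Filter.Eventually.and <| ?_)
    rw [Filter.eventually_all]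
    intro r
    have hc : ContinuousAt (fun z => pd f r z / pd f r p) p :=
      ((pd_continuousOn hf hb r).continuousAt ((isOpen_polydisk d).mem_nhds hp)).div_const _
    apply hc.eventually_mem
    apply Complex.isOpen_slitPlane.mem_nhds
    rw [div_self (hne r)]
    exact Complex.one_mem_slitPlane
  obtain ⟨R, hR, hball⟩ := Metric.eventually_nhds_iff_ball.1 hev
  refine ⟨R, hR, fun z hz => (hball z hz).1,
    fun r z => (pd f r p) ^ (((2 : ℕ) : ℂ)⁻¹) * (pd f r z / pd f r p) ^ (((2 : ℕ) : ℂ)⁻¹), ?_⟩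
  intro r
  refine ⟨?_, ?_⟩
  · intro a v t ht
    have h1 := pd_lineDiff hf hb r a v t (hball _ ht).1
    have h2 : DifferentiableAt ℂ (fun s : ℂ => pd f r (a + s • v) / pd f r p) t := h1.div_const _
    exact (h2.cpow_const (hball _ ht |>.2 r)).const_mul _
  · intro z hz
    have h2 := Complex.slitPlane_ne_zero ((hball z hz).2 r)
    have e : ((pd f r p) ^ (((2 : ℕ) : ℂ)⁻¹) * (pd f r z / pd f r p) ^ (((2 : ℕ) : ℂ)⁻¹)) ^ 2
        = pd f r z := by
      rw [mul_pow, Complex.cpow_nat_inv_pow _ two_ne_zero, Complex.cpow_nat_inv_pow _ two_ne_zero,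
        mul_div_cancel₀ _ (hne r)]
    refine ⟨e, ?_⟩
    intro h0
    simp only [h0] at e
    apply h2
    rw [← e]; simp

lemma real_zero {g : ℂ → ℂ} (hg : DifferentiableOn ℂ g (Metric.ball 0 2))
    (h0 : ∀ t : ℝ, |t| < 2 → g t = 0) : ∀ z ∈ Metric.ball (0 : ℂ) 2, g z = 0 := by
  have hfreq : ∃ᶠ z in nhdsWithin (0 : ℂ) {0}ᶜ, g z = 0 := by
    have ht : Filter.Tendsto (fun t : ℝ => (t : ℂ)) (nhdsWithin 0 {0}ᶜ) (nhdsWithin 0 {0}ᶜ) := by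
      apply tendsto_nhdsWithin_of_tendsto_nhds_of_eventually_within
      · have := Complex.continuous_ofReal.tendsto 0
        simp only [Complex.ofReal_zero] at this
        exact this.mono_left nhdsWithin_le_nhds
      · filter_upwards [self_mem_nhdsWithin] with t ht
        simpa using ht
    apply ht.frequently
    apply Filter.Eventually.frequently
    have : Metric.ball (0 : ℝ) 2 ∈ nhdsWithin (0 : ℝ) {0}ᶜ :=
      mem_nhdsWithin_of_mem_nhds (Metric.ball_mem_nhds _ (by norm_num))
    filter_upwards [this] with t ht
    exact h0 t (by simpa using ht)
  intro z hz
  exact (hg.analyticOnNhd Metric.isOpen_ball).eqOn_of_preconnected_of_frequently_eq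
    (analyticOnNhd_const (v := (0 : ℂ))) (convex_ball (0 : ℂ) 2).isPreconnected
    (Metric.mem_ball_self (by norm_num)) hfreq hz

lemma conj_line_diff {U : Set (Fin d → ℂ)} {x : (Fin d → ℂ) → ℂ} (hx : LineDiff U x)
    (a v : Fin d → ℂ) {t : ℂ} (ht : a + (starRingEnd ℂ t) • v ∈ U) :
    DifferentiableAt ℂ (fun s : ℂ => starRingEnd ℂ (x (a + (starRingEnd ℂ s) • v))) t := by
  have := (hx a v _ ht).conj_conj
  rw [Complex.conj_conj] at this
  exact this

lemma polarize {ι : Type} [Fintype ι] {p : Fin d → ℂ} {R : ℝ}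
    (x y : ι → (Fin d → ℂ) → ℂ) (hx : ∀ k, LineDiff (Metric.ball p R) (x k))
    (hy : ∀ k, LineDiff (Metric.ball p R) (y k))
    (hdiag : ∀ z ∈ Metric.ball p R, ∑ k, x k z * starRingEnd ℂ (x k z) =
      ∑ k, y k z * starRingEnd ℂ (y k z)) :
    ∀ z ∈ Metric.ball p (R / 10), ∀ w ∈ Metric.ball p (R / 10),
      ∑ k, x k z * starRingEnd ℂ (x k w) = ∑ k, y k z * starRingEnd ℂ (y k w) := by
  intro z hz w hw
  set v := w - z with hv
  have hin : ∀ s : ℂ, ‖s‖ < 4 → z + s • v ∈ Metric.ball p R := by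
    intro s hs
    rw [Metric.mem_ball, dist_eq_norm] at hz hw ⊢
    have hvn : ‖v‖ ≤ R / 10 + R / 10 := by
      have : v = (w - p) - (z - p) := by rw [hv]; abel
      rw [this]
      exact (norm_sub_le _ _).trans (by linarith)
    have hR0 : 0 ≤ ‖z - p‖ := norm_nonneg _
    calc ‖z + s • v - p‖ = ‖(z - p) + s • v‖ := by congr 1; abel
      _ ≤ ‖z - p‖ + ‖s‖ * ‖v‖ := (norm_add_le _ _).trans (by rw [norm_smul])
      _ ≤ ‖z - p‖ + 4 * (R / 10 + R / 10) := by gcongr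
      _ < R := by linarith
  let G : ℂ → ℂ → ℂ := fun X Y =>
    ∑ k, x k (z + (X + Complex.I * Y) • v) *
        starRingEnd ℂ (x k (z + (starRingEnd ℂ (X - Complex.I * Y)) • v)) -
      ∑ k, y k (z + (X + Complex.I * Y) • v) *
        starRingEnd ℂ (y k (z + (starRingEnd ℂ (X - Complex.I * Y)) • v))
  have hn1 : ∀ X ∈ Metric.ball (0 : ℂ) 2, ∀ Y ∈ Metric.ball (0 : ℂ) 2,
      ‖X + Complex.I * Y‖ < 4 := by
    intro X hX Y hY
    rw [mem_ball_zero_iff] at hX hY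
    calc ‖X + Complex.I * Y‖ ≤ ‖X‖ + ‖Complex.I * Y‖ := norm_add_le _ _
      _ < 4 := by simp only [norm_mul, Complex.norm_I]; linarith
  have hn2 : ∀ X ∈ Metric.ball (0 : ℂ) 2, ∀ Y ∈ Metric.ball (0 : ℂ) 2,
      ‖starRingEnd ℂ (X - Complex.I * Y)‖ < 4 := by
    intro X hX Y hY
    rw [mem_ball_zero_iff] at hX hY
    rw [RCLike.norm_conj]
    calc ‖X - Complex.I * Y‖ ≤ ‖X‖ + ‖Complex.I * Y‖ := norm_sub_le _ _
      _ < 4 := by simp only [norm_mul, Complex.norm_I]; linarith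
  have hterm : ∀ u : (Fin d → ℂ) → ℂ, LineDiff (Metric.ball p R) u →
      ∀ X ∈ Metric.ball (0 : ℂ) 2, ∀ Y ∈ Metric.ball (0 : ℂ) 2,
      DifferentiableAt ℂ (fun X => u (z + (X + Complex.I * Y) • v) *
        starRingEnd ℂ (u (z + (starRingEnd ℂ (X - Complex.I * Y)) • v))) X ∧
      DifferentiableAt ℂ (fun Y => u (z + (X + Complex.I * Y) • v) *
        starRingEnd ℂ (u (z + (starRingEnd ℂ (X - Complex.I * Y)) • v))) Y := by
    intro u hu X hX Y hY
    have h1 := hu z v _ (hin _ (hn1 X hX Y hY))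
    have h2 := conj_line_diff hu z v (hin _ (hn2 X hX Y hY))
    constructor
    · exact (DifferentiableAt.comp X (f := fun X => X + Complex.I * Y) h1 (by fun_prop)).mul
        (DifferentiableAt.comp X (f := fun X => X - Complex.I * Y) h2 (by fun_prop))
    · exact (DifferentiableAt.comp Y (f := fun Y => X + Complex.I * Y) h1 (by fun_prop)).mul
        (DifferentiableAt.comp Y (f := fun Y => X - Complex.I * Y) h2 (by fun_prop))
  have hG1 : ∀ Y ∈ Metric.ball (0 : ℂ) 2,
      DifferentiableOn ℂ (fun X => G X Y) (Metric.ball 0 2) := by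
    intro Y hY X hX
    exact ((DifferentiableAt.fun_sum fun k _ => (hterm (x k) (hx k) X hX Y hY).1).sub
      (DifferentiableAt.fun_sum fun k _ => (hterm (y k) (hy k) X hX Y hY).1)).differentiableWithinAt
  have hG2 : ∀ X ∈ Metric.ball (0 : ℂ) 2,
      DifferentiableOn ℂ (fun Y => G X Y) (Metric.ball 0 2) := by
    intro X hX Y hY
    exact ((DifferentiableAt.fun_sum fun k _ => (hterm (x k) (hx k) X hX Y hY).2).sub
      (DifferentiableAt.fun_sum fun k _ => (hterm (y k) (hy k) X hX Y hY).2)).differentiableWithinAt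
  have hreal : ∀ t : ℝ, |t| < 2 → (t : ℂ) ∈ Metric.ball (0 : ℂ) 2 := by
    intro t ht
    simpa using ht
  have hz1 : ∀ Y : ℝ, |Y| < 2 → ∀ X ∈ Metric.ball (0 : ℂ) 2, G X Y = 0 := by
    intro Y hY
    apply real_zero (hG1 _ (hreal Y hY))
    intro X hX
    have e : starRingEnd ℂ ((X : ℂ) - Complex.I * Y) = X + Complex.I * Y := by
      simp
    simp only [G, e]
    rw [hdiag _ (hin _ (hn1 _ (hreal X hX) _ (hreal Y hY))), sub_self]
  have hz2 : ∀ X ∈ Metric.ball (0 : ℂ) 2, ∀ Y ∈ Metric.ball (0 : ℂ) 2, G X Y = 0 := by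
    intro X hX
    exact real_zero (hG2 X hX) (fun Y hY => hz1 Y hY X hX)
  have hfin := hz2 (1 / 2) (by rw [mem_ball_zero_iff]; norm_num) (Complex.I / 2)
    (by rw [mem_ball_zero_iff]; norm_num)
  have e1 : (1 / 2 : ℂ) + Complex.I * (Complex.I / 2) = 0 := by
    rw [← mul_div_assoc, Complex.I_mul_I]; norm_num
  have e2 : (1 / 2 : ℂ) - Complex.I * (Complex.I / 2) = 1 := by
    rw [← mul_div_assoc, Complex.I_mul_I]; norm_num
  simp only [G, e1, e2, map_one, zero_smul, one_smul, add_zero, hv, add_sub_cancel] at hfin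
  exact sub_eq_zero.1 hfin

end polar

/-- Lurking isometry. -/
lemma lurking {n : Type} [Fintype n] [DecidableEq n] {ι : Type} (x y : ι → n → ℂ)
    (h : ∀ i j, x i ⬝ᵥ star (x j) = y i ⬝ᵥ star (y j)) :
    ∃ V ∈ Matrix.unitaryGroup n ℂ, ∀ i, V *ᵥ x i = y i := by
  let X : (ι →₀ ℂ) →ₗ[ℂ] EuclideanSpace ℂ n := Finsupp.linearCombination ℂ (fun i => (WithLp.toLp 2 (x i) : EuclideanSpace ℂ n))
  let Y : (ι →₀ ℂ) →ₗ[ℂ] EuclideanSpace ℂ n := Finsupp.linearCombination ℂ (fun i => (WithLp.toLp 2 (y i) : EuclideanSpace ℂ n))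
  have hin : ∀ c, inner ℂ (X c) (X c) = inner ℂ (Y c) (Y c) := by
    intro c
    simp only [X, Y, Finsupp.linearCombination_apply, Finsupp.sum, sum_inner, inner_sum,
      inner_smul_left, inner_smul_right, EuclideanSpace.inner_toLp_toLp, h]
  have hnorm : ∀ c, ‖Y c‖ = ‖X c‖ := by
    intro c
    have := hin c
    rw [inner_self_eq_norm_sq_to_K, inner_self_eq_norm_sq_to_K] at this
    have h2 : ‖X c‖ ^ 2 = ‖Y c‖ ^ 2 := by exact_mod_cast this
    exact ((sq_eq_sq₀ (norm_nonneg _) (norm_nonneg _)).1 h2).symm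
  have hker : X.ker ≤ Y.ker := by
    intro c hc
    rw [LinearMap.mem_ker] at hc ⊢
    rw [← norm_eq_zero, hnorm, hc, norm_zero]
  let T : X.range →ₗ[ℂ] EuclideanSpace ℂ n := (X.ker.liftQ Y hker) ∘ₗ X.quotKerEquivRange.symm.toLinearMap
  have hT : ∀ c, T ⟨X c, LinearMap.mem_range_self X c⟩ = Y c := by
    intro c
    have : X.quotKerEquivRange.symm ⟨X c, LinearMap.mem_range_self X c⟩ = X.ker.mkQ c := by
      rw [LinearEquiv.symm_apply_eq]
      rfl
    simp only [T, LinearMap.comp_apply, LinearEquiv.coe_coe, this]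
    simp
  let L : X.range →ₗᵢ[ℂ] EuclideanSpace ℂ n := ⟨T, by
    rintro ⟨_, c, rfl⟩
    rw [hT c, hnorm]
    rfl⟩
  let W : EuclideanSpace ℂ n →ₗᵢ[ℂ] EuclideanSpace ℂ n := L.extend
  have hW : ∀ i, W (WithLp.toLp 2 (x i)) = WithLp.toLp 2 (y i) := by
    intro i
    have e1 : X (Finsupp.single i 1) = WithLp.toLp 2 (x i) := by simp [X]
    have e2 : Y (Finsupp.single i 1) = WithLp.toLp 2 (y i) := by simp [Y]
    have := L.extend_apply ⟨X (Finsupp.single i 1), LinearMap.mem_range_self X _⟩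
    rw [← e1, ← e2, ← hT]
    exact this
  let V : Matrix n n ℂ := Matrix.toEuclideanLin.symm W.toLinearMap
  have hV : ∀ u, W u = WithLp.toLp 2 (V *ᵥ (WithLp.ofLp u)) := by
    intro u
    have : Matrix.toEuclideanLin V = W.toLinearMap := LinearEquiv.apply_symm_apply _ _
    have h2 : W u = Matrix.toEuclideanLin V u := by rw [this]; rfl
    rw [h2]; rfl
  refine ⟨V, ?_, ?_⟩
  · rw [Matrix.mem_unitaryGroup_iff', Matrix.star_eq_conjTranspose]
    ext i j
    have := W.inner_map_map (WithLp.toLp 2 (Pi.single i 1)) (WithLp.toLp 2 (Pi.single j 1))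
    rw [hV, hV, EuclideanSpace.inner_toLp_toLp, EuclideanSpace.inner_toLp_toLp] at this
    simp only [Matrix.mulVec_single_one] at this
    rw [Matrix.mul_apply]
    simp only [dotProduct, Matrix.col_apply, Pi.star_apply, Matrix.conjTranspose_apply] at this ⊢
    rw [Matrix.one_apply]
    have e : ∀ k, star (V k i) * V k j = V k j * star (V k i) := fun k => mul_comm _ _
    simp only [e]
    rw [this]
    simp [Pi.single_apply]
  · intro i
    have := hV (WithLp.toLp 2 (x i))
    rw [hW i] at this
    exact ((WithLp.toLp_injective 2) this).symm

/-- The block matrix of the statement. -/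
abbrev blk {d : ℕ} (A : ℂ) (B C : Fin d → ℂ) (D : Matrix (Fin d) (Fin d) ℂ) :
    Matrix (Fin 1 ⊕ Fin d) (Fin 1 ⊕ Fin d) ℂ :=
  Matrix.fromBlocks (Matrix.of fun (_ : Fin 1) (_ : Fin 1) => A)
    (Matrix.of fun (_ : Fin 1) j => B j)
    (Matrix.of fun i (_ : Fin 1) => C i) D

section realization
variable {d : ℕ}

lemma blk_mulVec (A : ℂ) (B C : Fin d → ℂ) (D : Matrix (Fin d) (Fin d) ℂ) (u : Fin d → ℂ) :
    blk A B C D *ᵥ Sum.elim (fun _ => 1) u =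
      Sum.elim (fun _ => A + B ⬝ᵥ u) (C + D *ᵥ u) := by
  rw [blk, Matrix.fromBlocks_mulVec]
  ext i
  rcases i with i | i <;> simp [Matrix.mulVec, dotProduct]

lemma blk_mulVec_zero (A : ℂ) (B C : Fin d → ℂ) (D : Matrix (Fin d) (Fin d) ℂ) (u : Fin d → ℂ) :
    blk A B C D *ᵥ Sum.elim (fun _ => 0) u =
      Sum.elim (fun _ => B ⬝ᵥ u) (D *ᵥ u) := by
  rw [blk, Matrix.fromBlocks_mulVec]
  ext i
  rcases i with i | i <;> simp [Matrix.mulVec, dotProduct]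

lemma unitary_norm {n : Type} [Fintype n] [DecidableEq n] {V : Matrix n n ℂ}
    (hV : V ∈ Matrix.unitaryGroup n ℂ) (u : n → ℂ) :
    ∑ i, ‖(V *ᵥ u) i‖ ^ 2 = ∑ i, ‖u i‖ ^ 2 := by
  rw [Matrix.mem_unitaryGroup_iff', Matrix.star_eq_conjTranspose] at hV
  have h : star (V *ᵥ u) ⬝ᵥ (V *ᵥ u) = star u ⬝ᵥ u := by
    rw [Matrix.star_mulVec, Matrix.dotProduct_mulVec, Matrix.vecMul_vecMul, hV, Matrix.vecMul_one]
  have e : ∀ w : n → ℂ, star w ⬝ᵥ w = ((∑ i, ‖w i‖ ^ 2 : ℝ) : ℂ) := by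
    intro w
    simp only [dotProduct, Pi.star_apply, Complex.ofReal_sum, Complex.ofReal_pow]
    refine Finset.sum_congr rfl fun i _ => ?_
    exact Complex.conj_mul' (w i)
  rw [e, e] at h
  exact_mod_cast h

lemma isUnit_of_unitary {A : ℂ} {B C : Fin d → ℂ} {D : Matrix (Fin d) (Fin d) ℂ}
    (hV : blk A B C D ∈ Matrix.unitaryGroup (Fin 1 ⊕ Fin d) ℂ) {lam : Fin d → ℂ}
    (hl : lam ∈ Polydisk d) : IsUnit (1 - D * Matrix.diagonal lam) := by
  rw [← Matrix.mulVec_injective_iff_isUnit]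
  rw [← Matrix.coe_mulVecLin, injective_iff_map_eq_zero]
  intro x hx
  rw [Matrix.mulVecLin_apply, Matrix.sub_mulVec, Matrix.one_mulVec, ← Matrix.mulVec_mulVec,
    sub_eq_zero] at hx
  have h := unitary_norm hV (Sum.elim (fun _ => 0) (Matrix.diagonal lam *ᵥ x))
  rw [blk_mulVec_zero, ← hx] at h
  simp only [Fintype.sum_sum_type, Sum.elim_inl, Sum.elim_inr, Finset.univ_unique,
    Finset.sum_singleton, norm_zero, Matrix.mulVec_diagonal, norm_mul, mul_pow] at h
  have h1 : ∑ i, (1 - ‖lam i‖ ^ 2) * ‖x i‖ ^ 2 ≤ 0 := by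
    simp only [sub_mul, one_mul, Finset.sum_sub_distrib]
    have := sq_nonneg ‖B ⬝ᵥ (Matrix.diagonal lam *ᵥ x)‖
    nlinarith
  have hpos : ∀ i, 0 < 1 - ‖lam i‖ ^ 2 := by
    intro i
    have := hl i
    nlinarith [norm_nonneg (lam i)]
  have hnn : ∀ i ∈ Finset.univ, 0 ≤ (1 - ‖lam i‖ ^ 2) * ‖x i‖ ^ 2 := fun i _ =>
    mul_nonneg (hpos i).le (sq_nonneg _)
  have h2 := (Finset.sum_eq_zero_iff_of_nonneg hnn).1 (le_antisymm h1 (Finset.sum_nonneg hnn))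
  ext i
  have h3 := h2 i (Finset.mem_univ _)
  rcases mul_eq_zero.1 h3 with h4 | h4
  · exact absurd h4 (hpos i).ne'
  · simpa using h4

/-- The state vector. -/
noncomputable def hv (C : Fin d → ℂ) (D : Matrix (Fin d) (Fin d) ℂ) (lam : Fin d → ℂ) :
    Fin d → ℂ := (1 - D * Matrix.diagonal lam)⁻¹ *ᵥ C

lemma diag_mulVec (lam u : Fin d → ℂ) : Matrix.diagonal lam *ᵥ u = lam * u := by
  ext i; simp [Matrix.mulVec_diagonal]

lemma hv_spec {C : Fin d → ℂ} {D : Matrix (Fin d) (Fin d) ℂ} {lam : Fin d → ℂ}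
    (h : IsUnit (1 - D * Matrix.diagonal lam)) :
    hv C D lam = C + D *ᵥ (lam * hv C D lam) := by
  have h1 : (1 - D * Matrix.diagonal lam) *ᵥ hv C D lam = C := by
    rw [hv, Matrix.mulVec_mulVec, Matrix.mul_nonsing_inv _ ((Matrix.isUnit_iff_isUnit_det _).1 h),
      Matrix.one_mulVec]
  rw [Matrix.sub_mulVec, Matrix.one_mulVec, ← Matrix.mulVec_mulVec, diag_mulVec] at h1
  rw [eq_comm, ← eq_sub_iff_add_eq]
  exact h1.symm

lemma hv_unique {C : Fin d → ℂ} {D : Matrix (Fin d) (Fin d) ℂ} {lam : Fin d → ℂ}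
    (h : IsUnit (1 - D * Matrix.diagonal lam)) {u : Fin d → ℂ}
    (hu : u = C + D *ᵥ (lam * u)) : u = hv C D lam := by
  have h1 : (1 - D * Matrix.diagonal lam) *ᵥ u = C := by
    rw [Matrix.sub_mulVec, Matrix.one_mulVec, ← Matrix.mulVec_mulVec, diag_mulVec]
    rw [sub_eq_iff_eq_add]
    exact hu
  rw [hv, ← h1, Matrix.mulVec_mulVec, Matrix.nonsing_inv_mul _ ((Matrix.isUnit_iff_isUnit_det _).1 h),
      Matrix.one_mulVec]

lemma real_eq (A : ℂ) (B C : Fin d → ℂ) (D : Matrix (Fin d) (Fin d) ℂ) (lam : Fin d → ℂ) :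
    A + B ⬝ᵥ ((Matrix.diagonal lam * (1 - D * Matrix.diagonal lam)⁻¹) *ᵥ C) =
      A + B ⬝ᵥ (lam * hv C D lam) := by
  rw [← Matrix.mulVec_mulVec, diag_mulVec]; rfl

lemma isUnit_transpose {D : Matrix (Fin d) (Fin d) ℂ} {lam : Fin d → ℂ}
    (h : IsUnit (1 - D * Matrix.diagonal lam)) : IsUnit (1 - Dᵀ * Matrix.diagonal lam) := by
  rw [Matrix.isUnit_iff_isUnit_det] at h ⊢
  have : (1 - Dᵀ * Matrix.diagonal lam) = (1 - Matrix.diagonal lam * D)ᵀ := by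
    simp [Matrix.transpose_sub, Matrix.transpose_mul]
  rw [this, Matrix.det_transpose, Matrix.det_one_sub_mul_comm]
  exact h

/-- Purely algebraic: `B·(z h) = (z k)·C`-type identity. -/
lemma pair_id {B C : Fin d → ℂ} {D : Matrix (Fin d) (Fin d) ℂ} {z w k h : Fin d → ℂ}
    (hk : k = B + Dᵀ *ᵥ (z * k)) (hh : h = C + D *ᵥ (w * h)) :
    B ⬝ᵥ (w * h) = (z * k) ⬝ᵥ C + k ⬝ᵥ (w * h) - (z * k) ⬝ᵥ h := by
  have h1 : k ⬝ᵥ (w * h) = B ⬝ᵥ (w * h) + (z * k) ⬝ᵥ (D *ᵥ (w * h)) := by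
    conv_lhs => rw [hk]
    rw [add_dotProduct, Matrix.mulVec_transpose, ← Matrix.dotProduct_mulVec]
  have h2 : (z * k) ⬝ᵥ h = (z * k) ⬝ᵥ C + (z * k) ⬝ᵥ (D *ᵥ (w * h)) := by
    conv_lhs => rw [hh]
    rw [dotProduct_add]
  rw [h1, h2]; ring

lemma mul_dot (z k h : Fin d → ℂ) : (z * k) ⬝ᵥ h = k ⬝ᵥ (z * h) := by
  simp only [dotProduct, Pi.mul_apply]
  exact Finset.sum_congr rfl fun i _ => by ring

lemma pair_same {B C : Fin d → ℂ} {D : Matrix (Fin d) (Fin d) ℂ} {z k h : Fin d → ℂ}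
    (hk : k = B + Dᵀ *ᵥ (z * k)) (hh : h = C + D *ᵥ (z * h)) :
    B ⬝ᵥ (z * h) = (z * k) ⬝ᵥ C := by
  rw [pair_id hk hh, mul_dot z k h]; ring

lemma diff_id {B C : Fin d → ℂ} {D : Matrix (Fin d) (Fin d) ℂ} {z w k h h' : Fin d → ℂ}
    (hk : k = B + Dᵀ *ᵥ (z * k)) (hh : h = C + D *ᵥ (w * h)) (hh' : h' = C + D *ᵥ (z * h')) :
    B ⬝ᵥ (z * h') - B ⬝ᵥ (w * h) = ∑ r, k r * (z r - w r) * h r := by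
  rw [pair_same hk hh', pair_id hk hh]
  simp only [dotProduct, Pi.mul_apply]
  rw [← sub_eq_zero]
  simp only [mul_sub, sub_mul, Finset.sum_sub_distrib]
  have : ∀ i, k i * z i * h i = z i * k i * h i := fun i => by ring
  have h2 : ∀ i, k i * w i * h i = k i * (w i * h i) := fun i => by ring
  simp only [this, h2]
  ring

lemma hv_continuousAt {C : Fin d → ℂ} {D : Matrix (Fin d) (Fin d) ℂ} {lam : Fin d → ℂ}
    (h : IsUnit (1 - D * Matrix.diagonal lam)) : ContinuousAt (hv C D) lam := by
  have hc : Continuous fun l : Fin d → ℂ => (1 - D * Matrix.diagonal l) :=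
    continuous_const.sub (continuous_const.matrix_mul (continuous_id.matrix_diagonal))
  have hdet := hc.matrix_det
  have hadj := hc.matrix_adjugate
  have hne : (1 - D * Matrix.diagonal lam).det ≠ 0 :=
    ((Matrix.isUnit_iff_isUnit_det _).1 h).ne_zero
  have e : hv C D = fun l => ((1 - D * Matrix.diagonal l).det)⁻¹ •
      ((1 - D * Matrix.diagonal l).adjugate *ᵥ C) := by
    funext l
    rw [hv, Matrix.inv_def, Ring.inverse_eq_inv', Matrix.smul_mulVec]
  rw [e]
  exact (hdet.continuousAt.inv₀ hne).smul (hadj.matrix_mulVec continuous_const).continuousAt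

lemma real_hasDerivAt {A : ℂ} {B C : Fin d → ℂ} {D : Matrix (Fin d) (Fin d) ℂ}
    (hU : ∀ lam ∈ Polydisk d, IsUnit (1 - D * Matrix.diagonal lam)) (a v : Fin d → ℂ) (t : ℂ)
    (ht : a + t • v ∈ Polydisk d) :
    HasDerivAt (fun s : ℂ => A + B ⬝ᵥ ((a + s • v) * hv C D (a + s • v)))
      (∑ r, hv B Dᵀ (a + t • v) r * v r * hv C D (a + t • v) r) t := by
  have hc : Continuous (fun s : ℂ => a + s • v) := by fun_prop
  rw [hasDerivAt_iff_tendsto_slope]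
  have hk : ContinuousAt (fun s : ℂ => hv B Dᵀ (a + s • v)) t :=
    ContinuousAt.comp (f := fun s : ℂ => a + s • v)
      (hv_continuousAt (isUnit_transpose (hU _ ht))) hc.continuousAt
  have hq : Filter.Tendsto
      (fun s : ℂ => ∑ r, hv B Dᵀ (a + s • v) r * v r * hv C D (a + t • v) r)
      (nhdsWithin t {t}ᶜ) (nhds (∑ r, hv B Dᵀ (a + t • v) r * v r * hv C D (a + t • v) r)) := by
    refine Filter.Tendsto.mono_left ?_ nhdsWithin_le_nhds
    refine tendsto_finsetSum _ fun r _ => ?_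
    have := (continuousAt_pi.1 hk r).tendsto
    exact (this.mul_const _).mul_const _
  refine hq.congr' ?_
  have hev : ∀ᶠ s in nhdsWithin t {t}ᶜ, a + s • v ∈ Polydisk d :=
    mem_nhdsWithin_of_mem_nhds (hc.continuousAt.preimage_mem_nhds
      ((isOpen_polydisk d).mem_nhds ht))
  filter_upwards [hev, self_mem_nhdsWithin] with s hs hst
  have hst' : s - t ≠ 0 := sub_ne_zero.2 hst
  rw [slope_def_field, eq_div_iff hst', add_sub_add_left_eq_sub,
    diff_id (hv_spec (isUnit_transpose (hU _ hs))) (hv_spec (hU _ ht)) (hv_spec (hU _ hs)),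
    Finset.sum_mul]
  refine Finset.sum_congr rfl fun r _ => ?_
  simp only [Pi.add_apply, Pi.smul_apply, smul_eq_mul]
  ring

lemma real_pd {A : ℂ} {B C : Fin d → ℂ} {D : Matrix (Fin d) (Fin d) ℂ}
    (hU : ∀ lam ∈ Polydisk d, IsUnit (1 - D * Matrix.diagonal lam))
    {f : (Fin d → ℂ) → ℂ} (hf : ∀ lam ∈ Polydisk d, f lam = A + B ⬝ᵥ (lam * hv C D lam))
    {z : Fin d → ℂ} (hz : z ∈ Polydisk d) (r : Fin d) :
    pd f r z = hv B Dᵀ z r * hv C D z r := by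
  have h := real_hasDerivAt (A := A) (B := B) (C := C) hU z (Pi.single r (1 : ℂ)) 0 (by simpa using hz)
  rw [pd_eq]
  have hc : Continuous (fun s : ℂ => z + s • (Pi.single r (1 : ℂ) : Fin d → ℂ)) := by fun_prop
  have hev : ∀ᶠ s in nhds (0 : ℂ), z + s • (Pi.single r (1 : ℂ) : Fin d → ℂ) ∈ Polydisk d :=
    hc.continuousAt.preimage_mem_nhds ((isOpen_polydisk d).mem_nhds (by simpa using hz))
  have e : (fun s : ℂ => f (z + s • (Pi.single r (1 : ℂ) : Fin d → ℂ))) =ᶠ[nhds 0]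
      (fun s : ℂ => A + B ⬝ᵥ ((z + s • (Pi.single r (1 : ℂ) : Fin d → ℂ)) *
        hv C D (z + s • (Pi.single r (1 : ℂ) : Fin d → ℂ)))) := by
    filter_upwards [hev] with s hs
    exact hf _ hs
  rw [e.deriv_eq, h.deriv]
  simp [Pi.single_apply]

lemma real_lineDiff {A : ℂ} {B C : Fin d → ℂ} {D : Matrix (Fin d) (Fin d) ℂ}
    (hU : ∀ lam ∈ Polydisk d, IsUnit (1 - D * Matrix.diagonal lam)) :
    LineDiff (Polydisk d) (fun lam => A + B ⬝ᵥ (lam * hv C D lam)) :=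
  fun a v t ht => (real_hasDerivAt hU a v t ht).differentiableAt

end realization

section main
variable {d : ℕ} {f : (Fin d → ℂ) → ℂ}

lemma backward {A : ℂ} {B C : Fin d → ℂ} {D : Matrix (Fin d) (Fin d) ℂ}
    (hV : blk A B C D ∈ Matrix.unitaryGroup (Fin 1 ⊕ Fin d) ℂ) (hS : (blk A B C D).IsSymm)
    (hf : ∀ lam ∈ Polydisk d, f lam = A + B ⬝ᵥ (lam * hv C D lam)) {lam : Fin d → ℂ}
    (hl : lam ∈ Polydisk d) :
    ∑ r : Fin d, (1 - ‖lam r‖ ^ 2) * ‖pd f r lam‖ = 1 - ‖f lam‖ ^ 2 := by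
  have hU : ∀ lam ∈ Polydisk d, IsUnit (1 - D * Matrix.diagonal lam) :=
    fun lam h => isUnit_of_unitary hV h
  have hBC : B = C := by
    ext i
    have := hS.apply (Sum.inr i) (Sum.inl 0)
    simpa [blk] using this
  have hD : Dᵀ = D := by
    ext i j
    have := hS.apply (Sum.inr i) (Sum.inr j)
    simpa [blk] using this
  have hpd : ∀ r, ‖pd f r lam‖ = ‖hv C D lam r‖ ^ 2 := by
    intro r
    rw [real_pd hU hf hl r, hBC, hD, norm_mul, sq]
  have hn := unitary_norm hV (Sum.elim (fun _ => 1) (lam * hv C D lam))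
  rw [blk_mulVec, ← hv_spec (hU lam hl), ← hf lam hl] at hn
  simp only [Fintype.sum_sum_type, Sum.elim_inl, Sum.elim_inr, Finset.univ_unique,
    Finset.sum_singleton, norm_one, Pi.mul_apply, norm_mul, mul_pow, one_pow] at hn
  simp only [hpd, sub_mul, one_mul, Finset.sum_sub_distrib]
  linarith

lemma span_top {n : Type} [Fintype n] (S : Submodule ℂ (n → ℂ)) (L : (n → ℂ) →ₗ[ℂ] (n → ℂ))
    (h : S.map L = ⊤) : S = ⊤ := by
  apply Submodule.eq_top_of_finrank_eq
  apply le_antisymm (Submodule.finrank_le S)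
  have := Submodule.finrank_map_le L S
  rw [h, finrank_top] at this
  exact this

lemma symm_of_span {V : Matrix (Fin 1 ⊕ Fin d) (Fin 1 ⊕ Fin d) ℂ} {p : Fin d → ℂ} {ρ : ℝ}
    (hρ : 0 < ρ) (h : (Fin d → ℂ) → Fin d → ℂ)
    (hne : ∀ z ∈ Metric.ball p ρ, ∀ r, h z r ≠ 0)
    (hV : ∀ z ∈ Metric.ball p ρ,
      V *ᵥ Sum.elim (fun _ => 1) (z * h z) = Sum.elim (fun _ => f z) (h z))
    (hVt : ∀ z ∈ Metric.ball p ρ,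
      Vᵀ *ᵥ Sum.elim (fun _ => 1) (z * h z) = Sum.elim (fun _ => f z) (h z)) :
    V.IsSymm := by
  let S : Submodule ℂ (Fin 1 ⊕ Fin d → ℂ) := Submodule.span ℂ
    ((fun z : Fin d → ℂ => (Sum.elim (fun _ => 1) (z * h z) : Fin 1 ⊕ Fin d → ℂ)) ''
      Metric.ball p ρ)
  let L : (Fin 1 ⊕ Fin d → ℂ) →ₗ[ℂ] (Fin 1 ⊕ Fin d → ℂ) :=
    (1 - Matrix.diagonal (Sum.elim (fun _ => 0) p) * V).mulVecLin
  have hL : ∀ z ∈ Metric.ball p ρ,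
      (Sum.elim (fun _ => 1) ((z - p) * h z) : Fin 1 ⊕ Fin d → ℂ) ∈ S.map L := by
    intro z hz
    refine ⟨_, Submodule.subset_span ⟨z, hz, rfl⟩, ?_⟩
    simp only [L, Matrix.mulVecLin_apply, Matrix.sub_mulVec, Matrix.one_mulVec,
      ← Matrix.mulVec_mulVec, hV z hz]
    ext i
    rcases i with i | i
    · simp [Matrix.mulVec_diagonal]
    · simp [Matrix.mulVec_diagonal, sub_mul]
  have h0 : (Pi.single (Sum.inl 0) 1 : Fin 1 ⊕ Fin d → ℂ) ∈ S.map L := by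
    convert hL p (Metric.mem_ball_self hρ) using 1
    ext i
    rcases i with i | i
    · have : i = 0 := Subsingleton.elim _ _
      subst this
      simp
    · simp
  have hr : ∀ r, (Pi.single (Sum.inr r) 1 : Fin 1 ⊕ Fin d → ℂ) ∈ S.map L := by
    intro r
    have hρ2 : ((ρ / 2 : ℝ) : ℂ) ≠ 0 := by
      have : ρ / 2 ≠ 0 := by positivity
      exact_mod_cast this
    set z : Fin d → ℂ := p + Pi.single r ((ρ / 2 : ℝ) : ℂ) with hzdef
    have hz : z ∈ Metric.ball p ρ := by
      rw [Metric.mem_ball, dist_eq_norm, hzdef, add_sub_cancel_left, Pi.norm_single,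
        Complex.norm_real, Real.norm_of_nonneg (by positivity)]
      linarith
    have h1 := (S.map L).sub_mem (hL z hz) h0
    have h2 := (S.map L).smul_mem ((((ρ / 2 : ℝ) : ℂ) * h z r)⁻¹) h1
    convert h2 using 1
    have hh := hne z hz r
    have hz' : z - p = Pi.single r ((ρ / 2 : ℝ) : ℂ) := by rw [hzdef, add_sub_cancel_left]
    rw [hz']
    ext i
    rcases i with i | i
    · have : i = 0 := Subsingleton.elim _ _
      subst this
      simp
    · by_cases hi : i = r
      · subst hi
        have := inv_mul_cancel₀ (mul_ne_zero hρ2 hh)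
        simp only [Pi.smul_apply, Pi.sub_apply, Sum.elim_inr, Pi.mul_apply, Pi.single_eq_same,
          smul_eq_mul]
        rw [Pi.single_eq_of_ne (by simp), sub_zero, this]
      · simp [hi]
  have hmap : S.map L = ⊤ := by
    rw [eq_top_iff]
    intro w _
    have : w = ∑ i, w i • (Pi.single i 1 : Fin 1 ⊕ Fin d → ℂ) := by
      ext j
      simp [Finset.sum_apply, Pi.single_apply]
    rw [this]
    refine Submodule.sum_mem _ fun i _ => Submodule.smul_mem _ _ ?_
    rcases i with i | i
    · have : i = 0 := Subsingleton.elim _ _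
      subst this
      exact h0
    · exact hr i
  have hS := span_top S L hmap
  have hle : S ≤ LinearMap.ker (Vᵀ - V).mulVecLin := by
    apply Submodule.span_le.2
    rintro _ ⟨z, hz, rfl⟩
    simp only [SetLike.mem_coe, LinearMap.mem_ker, Matrix.mulVecLin_apply, Matrix.sub_mulVec,
      hV z hz, hVt z hz, sub_self]
  rw [hS] at hle
  rw [Matrix.IsSymm, Matrix.ext_iff_mulVec]
  intro w
  have := hle (Submodule.mem_top (x := w))
  rw [LinearMap.mem_ker, Matrix.mulVecLin_apply, Matrix.sub_mulVec] at this
  exact sub_eq_zero.1 this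

lemma forward (hf : DifferentiableOn ℂ f (Polydisk d))
    (hb : ∀ lam ∈ Polydisk d, ‖f lam‖ ≤ 1)
    (hdep : ∀ r : Fin d, ∃ mu ∈ Polydisk d, ∃ t : ℂ,
      Function.update mu r t ∈ Polydisk d ∧ f mu ≠ f (Function.update mu r t))
    (heq : ∀ lam ∈ Polydisk d,
      ∑ r : Fin d, (1 - ‖lam r‖ ^ 2) * ‖pd f r lam‖ = 1 - ‖f lam‖ ^ 2) :
    ∃ (A : ℂ) (B : Fin d → ℂ) (C : Fin d → ℂ) (D : Matrix (Fin d) (Fin d) ℂ),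
      blk A B C D ∈ Matrix.unitaryGroup (Fin 1 ⊕ Fin d) ℂ ∧ (blk A B C D).IsSymm ∧
      ∀ lam ∈ Polydisk d, f lam = A + B ⬝ᵥ (lam * hv C D lam) := by
  obtain ⟨p, hp, hpne⟩ := exists_good_point hf hb hdep
  obtain ⟨R, hR, hball, h, hh⟩ := local_roots hf hb hp hpne
  have hfl := lineDiff_of_differentiableOn (isOpen_polydisk d) hf
  let x : Fin 1 ⊕ Fin d → (Fin d → ℂ) → ℂ := Sum.elim (fun _ _ => 1) (fun r z => z r * h r z)
  let y : Fin 1 ⊕ Fin d → (Fin d → ℂ) → ℂ := Sum.elim (fun _ => f) h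
  have hx : ∀ k, LineDiff (Metric.ball p R) (x k) := by
    rintro (k | r) a v t ht
    · exact differentiableAt_const _
    · have h1 : DifferentiableAt ℂ (fun s : ℂ => (a + s • v) r) t := by
        simp only [Pi.add_apply, Pi.smul_apply, smul_eq_mul]
        fun_prop
      exact h1.mul ((hh r).1 a v t ht)
  have hy : ∀ k, LineDiff (Metric.ball p R) (y k) := by
    rintro (k | r) a v t ht
    · exact hfl a v t (hball ht)
    · exact (hh r).1 a v t ht
  have hdiag : ∀ z ∈ Metric.ball p R, ∑ k, x k z * starRingEnd ℂ (x k z) =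
      ∑ k, y k z * starRingEnd ℂ (y k z) := by
    intro z hz
    have h1 := heq z (hball hz)
    have h2 : ∀ r, ‖pd f r z‖ = ‖h r z‖ ^ 2 := by
      intro r
      rw [← ((hh r).2 z hz).1, norm_pow]
    simp only [h2, sub_mul, one_mul, Finset.sum_sub_distrib] at h1
    have h3 : (1 : ℝ) + ∑ r, ‖z r‖ ^ 2 * ‖h r z‖ ^ 2 = ‖f z‖ ^ 2 + ∑ r, ‖h r z‖ ^ 2 := by
      linarith
    simp only [Complex.mul_conj', x, y, Fintype.sum_sum_type, Sum.elim_inl, Sum.elim_inr,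
      Finset.univ_unique, Finset.sum_singleton, norm_one, norm_mul]
    have h4 := congrArg (fun q : ℝ => (q : ℂ)) h3
    push_cast at h4
    simpa [mul_pow] using h4
  have hpol := polarize x y hx hy hdiag
  have hρ : 0 < R / 10 := by positivity
  have hsub : ∀ z ∈ Metric.ball p (R / 10), z ∈ Metric.ball p R := fun z hz =>
    Metric.ball_subset_ball (by linarith) hz
  obtain ⟨V, hVu, hV⟩ := lurking (ι := Metric.ball p (R / 10))
    (fun z k => x k z) (fun z k => y k z) (fun z w => hpol z z.2 w w.2)
  obtain ⟨A, B, C, D, rfl⟩ : ∃ A B C D, V = blk A B C D := by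
    refine ⟨V (Sum.inl 0) (Sum.inl 0), fun j => V (Sum.inl 0) (Sum.inr j),
      fun i => V (Sum.inr i) (Sum.inl 0), fun i j => V (Sum.inr i) (Sum.inr j), ?_⟩
    ext i j
    rcases i with i | i <;> rcases j with j | j
    · rw [Subsingleton.elim i 0, Subsingleton.elim j 0]; rfl
    · rw [Subsingleton.elim i 0]; rfl
    · rw [Subsingleton.elim j 0]; rfl
    · rfl
  have hV1 : ∀ z ∈ Metric.ball p (R / 10),
      blk A B C D *ᵥ Sum.elim (fun _ => 1) (z * fun r => h r z) =
        Sum.elim (fun _ => f z) (fun r => h r z) := by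
    intro z hz
    have := hV ⟨z, hz⟩
    convert this using 1
    · congr 1
      ext i
      rcases i with i | i <;> simp [x]
    · ext i
      rcases i with i | i <;> simp [y]
  have hU : ∀ lam ∈ Polydisk d, IsUnit (1 - D * Matrix.diagonal lam) :=
    fun lam h => isUnit_of_unitary hVu h
  have hst : ∀ z ∈ Metric.ball p (R / 10), (fun r => h r z) = C + D *ᵥ (z * fun r => h r z) := by
    intro z hz
    have := hV1 z hz
    rw [blk_mulVec] at this
    ext r
    exact (congrFun this (Sum.inr r)).symm
  have hst1 : ∀ z ∈ Metric.ball p (R / 10), f z = A + B ⬝ᵥ (z * fun r => h r z) := by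
    intro z hz
    have := hV1 z hz
    rw [blk_mulVec] at this
    exact (congrFun this (Sum.inl 0)).symm
  have hhv : ∀ z ∈ Metric.ball p (R / 10), (fun r => h r z) = hv C D z := fun z hz =>
    hv_unique (hU z (hball (hsub z hz))) (hst z hz)
  have hfF : ∀ lam ∈ Polydisk d, f lam = A + B ⬝ᵥ (lam * hv C D lam) := by
    have hl : LineDiff (Polydisk d) (fun lam => f lam - (A + B ⬝ᵥ (lam * hv C D lam))) :=
      fun a v t ht => (hfl a v t ht).sub (real_lineDiff hU a v t ht)
    intro lam hlam
    refine sub_eq_zero.1 (line_identity hl hp ?_ lam hlam)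
    filter_upwards [Metric.ball_mem_nhds p hρ] with z hz
    rw [← hhv z hz, ← hst1 z hz, sub_self]
  refine ⟨A, B, C, D, hVu, ?_, hfF⟩
  have hk : ∀ z ∈ Metric.ball p (R / 10), (fun r => h r z) = hv B Dᵀ z := by
    intro z hz
    ext r
    have h1 := real_pd hU hfF (hball (hsub z hz)) r
    rw [← ((hh r).2 z (hsub z hz)).1, ← hhv z hz, sq] at h1
    exact mul_right_cancel₀ ((hh r).2 z (hsub z hz)).2 h1
  have hkst : ∀ z ∈ Metric.ball p (R / 10),
      (fun r => h r z) = B + Dᵀ *ᵥ (z * fun r => h r z) := by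
    intro z hz
    rw [hk z hz]
    exact hv_spec (isUnit_transpose (hU z (hball (hsub z hz))))
  refine symm_of_span (f := f) hρ (fun z r => h r z) (fun z hz r => ((hh r).2 z (hsub z hz)).2)
    hV1 ?_
  intro z hz
  have hT : (blk A B C D)ᵀ = blk A C B Dᵀ := by
    ext i j
    rcases i with i | i <;> rcases j with j | j <;> rfl
  rw [hT, blk_mulVec, ← hkst z hz, hst1 z hz, pair_same (hkst z hz) (hst z hz), dotProduct_comm]

end main

/-- **Knese's theorem on equality in the polydisk Schwarz lemma.** Let `f` be analytic on
`𝔻^d`, bounded by `1`, and depending on all `d` variables. Then equality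
`∑_r (1 - |λ^r|²)|∂f/∂λ^r(λ)| = 1 - |f(λ)|²` holds at every `λ ∈ 𝔻^d` if and only if `f`
has a realization `f(λ) = A + B E_λ (I - D E_λ)⁻¹ C` whose `(1+d) × (1+d)` block matrix
`V = [[A, B], [C, D]]` is unitary and symmetric (equal to its own transpose). -/
theorem knese_equality_schwarz {d : ℕ} (hd : 1 ≤ d) (f : (Fin d → ℂ) → ℂ)
    (hf : DifferentiableOn ℂ f (Polydisk d))
    (hb : ∀ lam ∈ Polydisk d, ‖f lam‖ ≤ 1)
    (hdep : ∀ r : Fin d, ∃ mu ∈ Polydisk d, ∃ t : ℂ,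
      Function.update mu r t ∈ Polydisk d ∧ f mu ≠ f (Function.update mu r t)) :
    (∀ lam ∈ Polydisk d,
        ∑ r : Fin d, (1 - ‖lam r‖ ^ 2) *
            ‖deriv (fun t : ℂ => f (Function.update lam r t)) (lam r)‖ =
          1 - ‖f lam‖ ^ 2) ↔
    ∃ (A : ℂ) (B : Fin d → ℂ) (C : Fin d → ℂ) (D : Matrix (Fin d) (Fin d) ℂ),
      (Matrix.fromBlocks (Matrix.of fun (_ : Fin 1) (_ : Fin 1) => A)
          (Matrix.of fun (_ : Fin 1) j => B j)
          (Matrix.of fun i (_ : Fin 1) => C i) D) ∈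
        Matrix.unitaryGroup (Fin 1 ⊕ Fin d) ℂ ∧
      (Matrix.fromBlocks (Matrix.of fun (_ : Fin 1) (_ : Fin 1) => A)
          (Matrix.of fun (_ : Fin 1) j => B j)
          (Matrix.of fun i (_ : Fin 1) => C i) D).IsSymm ∧
      ∀ lam ∈ Polydisk d,
        IsUnit (1 - D * Matrix.diagonal lam) ∧
        f lam = A + B ⬝ᵥ ((Matrix.diagonal lam * (1 - D * Matrix.diagonal lam)⁻¹) *ᵥ C) := by
  constructor
  · intro h
    obtain ⟨A, B, C, D, hV, hS, hF⟩ := forward hf hb hdep h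
    refine ⟨A, B, C, D, hV, hS, fun lam hlam => ⟨isUnit_of_unitary hV hlam, ?_⟩⟩
    rw [real_eq]
    exact hF lam hlam
  · rintro ⟨A, B, C, D, hV, hS, hF⟩ lam hlam
    refine backward hV hS (fun z hz => ?_) hlam
    rw [← real_eq]
    exact (hF z hz).2
end

section
/- (Anderson–Dritschel–Rovnyak) Let f be analytic on the bidisk 𝔻² with sup_{𝔻²}|f| ≤ 1, let n₁, n₂ be non-negative integers with n = n₁ + n₂ ≥ 2, and let λ = (z,w) ∈ 𝔻², with |λ| := max(|z|,|w|). Then |∂^n f / (∂z^{n₁} ∂w^{n₂})(λ)| ≤ (n−2)! · (1 − |f(λ)|²)/(1 − |λ|)^{n−1} · [ (n₁² − n₁)/(1 − |z|²) + 2 n₁ n₂ / (√(1 − |z|²) √(1 − |w|²)) + (n₂² − n₂)/(1 − |w|²) ]. -/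
section ADRHelpers
open Complex Metric Set Filter Topology


/-- Cauchy's formula for derivatives at an off-centre point. -/
lemma adr_cauchy {S R : ℝ} (hR : 0 < R) (hRS : R < S) {w : ℂ} (hw : ‖w‖ < R) (n : ℕ) :
    ∀ F : ℂ → ℂ, DifferentiableOn ℂ F (ball 0 S) →
    circleIntegral (fun ζ => F ζ / (ζ - w) ^ (n + 1)) 0 R =
      (2 * Real.pi * I) * iteratedDeriv n F w / (n.factorial : ℂ) := by
  have hne : ∀ ζ ∈ sphere (0:ℂ) R, ζ - w ≠ 0 := by
    intro ζ hζ h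
    rw [sub_eq_zero] at h
    rw [mem_sphere_zero_iff_norm, h] at hζ
    linarith
  induction n with
  | zero =>
    intro F hF
    have h := (hF.mono (closedBall_subset_ball hRS)).circleIntegral_sub_inv_smul
      (w := w) (by simpa using hw)
    simp only [smul_eq_mul] at h
    simp only [zero_add, pow_one, iteratedDeriv_zero, Nat.factorial_zero, Nat.cast_one, div_one]
    rw [← h]
    congr 1
    ext ζ
    rw [div_eq_inv_mul]
  | succ n ih =>
    intro F hF
    have hF' : DifferentiableOn ℂ (deriv F) (ball 0 S) := hF.deriv isOpen_ball
    have hsub : sphere (0:ℂ) R ⊆ ball 0 S :=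
      sphere_subset_closedBall.trans (closedBall_subset_ball hRS)
    have key : circleIntegral (fun ζ => deriv F ζ / (ζ - w) ^ (n + 1)
        - ((n:ℂ) + 1) * (F ζ / (ζ - w) ^ (n + 1 + 1))) 0 R = 0 := by
      apply circleIntegral.integral_eq_zero_of_hasDerivWithinAt (f := fun ζ => F ζ / (ζ - w) ^ (n+1))
        hR.le
      intro ζ hζ
      apply HasDerivAt.hasDerivWithinAt
      have h1 : HasDerivAt F (deriv F ζ) ζ :=
        (hF.differentiableAt (isOpen_ball.mem_nhds (hsub hζ))).hasDerivAt
      have h2 : HasDerivAt (fun ζ : ℂ => (ζ - w) ^ (n+1)) (((n + 1 : ℕ) : ℂ) * (ζ - w) ^ n * 1) ζ := by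
        simpa using! ((hasDerivAt_id ζ).sub_const w).fun_pow (n+1)
      refine (h1.fun_div h2 (pow_ne_zero _ (hne ζ hζ))).congr_deriv ?_
      have := hne ζ hζ
      field_simp
      push_cast
      ring
    have c1 : ContinuousOn (fun ζ => deriv F ζ / (ζ - w) ^ (n + 1)) (sphere 0 R) :=
      (hF'.continuousOn.mono hsub).div (by fun_prop) (fun ζ hζ => pow_ne_zero _ (hne ζ hζ))
    have c2 : ContinuousOn (fun ζ => F ζ / (ζ - w) ^ (n + 1 + 1)) (sphere 0 R) :=
      (hF.continuousOn.mono hsub).div (by fun_prop) (fun ζ hζ => pow_ne_zero _ (hne ζ hζ))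
    rw [circleIntegral.integral_sub (c1.circleIntegrable hR.le)
      ((continuousOn_const.fun_mul c2).circleIntegrable hR.le), circleIntegral.integral_const_mul,
      ih _ hF', ← iteratedDeriv_succ', sub_eq_zero] at key
    have hn : (n : ℂ) + 1 ≠ 0 := by exact_mod_cast Nat.succ_ne_zero n
    have hf : (n.factorial : ℂ) ≠ 0 := by exact_mod_cast n.factorial_ne_zero
    rw [Nat.factorial_succ]
    push_cast
    field_simp at key ⊢
    linear_combination -key

lemma adr_pos {R : ℝ} (hR : 0 < R) (H : ℂ → ℂ) (hc : ContinuousOn H (sphere 0 R))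
    (hp : ∀ ζ ∈ sphere (0:ℂ) R, 0 ≤ (ζ * H ζ).re) :
    0 ≤ (circleIntegral H 0 R / (2 * Real.pi * I)).re := by
  have h1 : circleIntegral H 0 R = I * ∫ θ in (0:ℝ)..2 * Real.pi,
      circleMap 0 R θ * H (circleMap 0 R θ) := by
    rw [circleIntegral, ← intervalIntegral.integral_const_mul]
    congr 1
    ext θ
    simp only [deriv_circleMap, smul_eq_mul]
    ring
  have hcont : Continuous fun θ : ℝ => circleMap 0 R θ * H (circleMap 0 R θ) :=
    (continuous_circleMap 0 R).mul (hc.comp_continuous (continuous_circleMap 0 R)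
      (fun θ => circleMap_mem_sphere 0 hR.le θ))
  have h2 : (∫ θ in (0:ℝ)..2 * Real.pi, circleMap 0 R θ * H (circleMap 0 R θ)).re =
      ∫ θ in (0:ℝ)..2 * Real.pi, (circleMap 0 R θ * H (circleMap 0 R θ)).re := by
    have := reCLM.intervalIntegral_comp_comm (hcont.intervalIntegrable (μ := MeasureTheory.volume) 0 (2 * Real.pi))
    simpa using this.symm
  have h3 : circleIntegral H 0 R / (2 * Real.pi * I) = ((1 / (2 * Real.pi) : ℝ) : ℂ) *
      ∫ θ in (0:ℝ)..2 * Real.pi, circleMap 0 R θ * H (circleMap 0 R θ) := by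
    rw [h1]
    have : (Real.pi : ℂ) ≠ 0 := by exact_mod_cast Real.pi_ne_zero
    push_cast
    field_simp
  rw [h3, re_ofReal_mul, h2]
  apply mul_nonneg (by positivity)
  apply intervalIntegral.integral_nonneg (by positivity)
  intro θ _
  exact hp _ (circleMap_mem_sphere 0 hR.le θ)

/-- Core estimate. -/
lemma adr_core {S R : ℝ} (hR : 0 < R) (hRS : R < S) {w : ℂ} (hw : ‖w‖ < R) (m : ℕ)
    (F G : ℂ → ℂ) (hF : DifferentiableOn ℂ F (ball 0 S))
    (hG : DifferentiableOn ℂ G (closedBall 0 R)) (β : ℂ)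
    (hle : ∀ ζ ∈ sphere (0:ℂ) R,
      (β * F ζ * (((R:ℂ) ^ 2 - (starRingEnd ℂ) w * ζ) / ((R:ℂ) ^ 2 * (ζ - w) ^ (m + 1)))).re
        ≤ (G ζ).re) :
    (β * ((R ^ 2 - ‖w‖ ^ 2 : ℝ) / (R:ℂ) ^ 2 * (iteratedDeriv (m + 1) F w / ((m + 1).factorial : ℂ)))).re
      ≤ (G w).re := by
  have hne : ∀ ζ ∈ sphere (0:ℂ) R, ζ - w ≠ 0 := by
    intro ζ hζ h
    rw [sub_eq_zero] at h
    rw [mem_sphere_zero_iff_norm, h] at hζ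
    linarith
  have hne2 : ∀ ζ ∈ closedBall (0:ℂ) R, (R:ℂ) ^ 2 - (starRingEnd ℂ) w * ζ ≠ 0 := by
    intro ζ hζ h
    rw [sub_eq_zero] at h
    have h' := congrArg norm h
    rw [mem_closedBall_zero_iff] at hζ
    simp only [norm_pow, norm_real, norm_mul, RCLike.norm_conj, Real.norm_eq_abs, abs_of_pos hR] at h'
    nlinarith [norm_nonneg w, norm_nonneg ζ]
  have hRC : (R:ℂ) ≠ 0 := by exact_mod_cast hR.ne'
  have hss : sphere (0:ℂ) R ⊆ closedBall 0 R := sphere_subset_closedBall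
  set a : ℝ := R ^ 2 - ‖w‖ ^ 2 with ha
  have ha0 : 0 < a := by nlinarith [norm_nonneg w]
  have hww : (R:ℂ) ^ 2 - (starRingEnd ℂ) w * w = (a : ℂ) := by
    rw [mul_comm, mul_conj, normSq_eq_norm_sq, ha]; push_cast; ring
  set G1 : ℂ → ℂ := fun ζ => G ζ * (a / ((R:ℂ) ^ 2 - (starRingEnd ℂ) w * ζ)) with hG1
  have hG1d : DifferentiableOn ℂ G1 (closedBall 0 R) :=
    hG.mul ((differentiableOn_const _).div (by fun_prop) hne2)
  have i1 := hG1d.circleIntegral_sub_inv_smul (w := w) (by simpa using hw)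
  have i2 := adr_cauchy hR hRS hw (m+1) F hF
  have c1 : ContinuousOn (fun ζ => (ζ - w)⁻¹ • G1 ζ) (sphere 0 R) :=
    (ContinuousOn.inv₀ (by fun_prop) hne).smul (hG1d.continuousOn.mono hss)
  have c2 : ContinuousOn (fun ζ => F ζ / (ζ - w) ^ (m + 1 + 1)) (sphere 0 R) :=
    (hF.continuousOn.mono (hss.trans (closedBall_subset_ball hRS))).div (by fun_prop)
      (fun ζ hζ => pow_ne_zero _ (hne ζ hζ))
  have hp := adr_pos hR (fun ζ => (ζ - w)⁻¹ • G1 ζ - (β * (a / (R:ℂ)^2)) * (F ζ / (ζ - w) ^ (m + 1 + 1)))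
    (c1.sub (continuousOn_const.mul c2)) (by
      intro ζ hζ
      have h0 := hle ζ hζ
      have e1 := hne ζ hζ
      have e2 := hne2 ζ (hss hζ)
      have hζζ : ζ * (starRingEnd ℂ) ζ = (R:ℂ)^2 := by
        rw [mul_conj, normSq_eq_norm_sq, mem_sphere_zero_iff_norm.1 hζ]; push_cast; ring
      have e3 : (R:ℂ) ^ 2 - (starRingEnd ℂ) w * ζ = ζ * (starRingEnd ℂ) (ζ - w) := by
        rw [map_sub, mul_sub, hζζ]; ring
      have hζ0 : ζ ≠ 0 := by
        rintro rfl
        rw [zero_mul] at hζζ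
        exact pow_ne_zero 2 hRC hζζ.symm
      have e4 : (starRingEnd ℂ) (ζ - w) ≠ 0 := (map_ne_zero _).2 e1
      have e5 : ((‖ζ - w‖ ^ 2 : ℝ) : ℂ) = (ζ - w) * (starRingEnd ℂ) (ζ - w) := by
        rw [mul_conj, normSq_eq_norm_sq]
      have : ζ * ((ζ - w)⁻¹ • G1 ζ - (β * (a / (R:ℂ)^2)) * (F ζ / (ζ - w) ^ (m + 1 + 1))) =
          ((a / ‖ζ - w‖ ^ 2 : ℝ) : ℂ) * (G ζ - β * F ζ * (((R:ℂ) ^ 2 - (starRingEnd ℂ) w * ζ)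
            / ((R:ℂ) ^ 2 * (ζ - w) ^ (m + 1)))) := by
        rw [ofReal_div, e5]
        simp only [hG1, smul_eq_mul, e3]
        field_simp
        ring
      rw [this, re_ofReal_mul, sub_re]
      apply mul_nonneg (by positivity)
      linarith)
  rw [circleIntegral.integral_sub (c1.circleIntegrable hR.le)
      ((continuousOn_const.fun_mul c2).circleIntegrable hR.le), circleIntegral.integral_const_mul,
      i1, i2] at hp
  have hpi : (Real.pi : ℂ) ≠ 0 := by exact_mod_cast Real.pi_ne_zero
  have haC : (a:ℂ) ≠ 0 := by exact_mod_cast ha0.ne'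
  have hG1w : G1 w = G w := by
    simp only [hG1, hww]
    field_simp
  have e : ((2 * Real.pi * I : ℂ) • G1 w - β * (a / (R:ℂ)^2) *
      ((2 * Real.pi * I) * iteratedDeriv (m+1) F w / ((m+1).factorial : ℂ))) / (2 * Real.pi * I) =
      G w - β * (a / (R:ℂ) ^ 2 * (iteratedDeriv (m + 1) F w / ((m + 1).factorial : ℂ))) := by
    rw [hG1w, smul_eq_mul]
    field_simp
  rw [e, sub_re] at hp
  linarith

lemma adr_pointwise (h u c : ℂ) (hh : ‖h‖ ≤ 1) (hu : ‖u‖ ≤ 1) :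
    (h * (starRingEnd ℂ) u).re ≤ (1 + (‖c‖ ^ 2 : ℝ) + 2 * (starRingEnd ℂ) c * u
      - 2 * (starRingEnd ℂ) c * h - (starRingEnd ℂ) c ^ 2 * (h * u)).re := by
  have e : h * (starRingEnd ℂ) u + 2 * (starRingEnd ℂ) c * h + (starRingEnd ℂ) c ^ 2 * (h * u) =
      h * ((1 + (starRingEnd ℂ) c * u) * (starRingEnd ℂ) (u + c)
        + (starRingEnd ℂ) c * ((1 - ‖u‖ ^ 2 : ℝ) : ℂ)) := by
    have : ((1 - ‖u‖ ^ 2 : ℝ) : ℂ) = 1 - u * (starRingEnd ℂ) u := by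
      rw [mul_conj, normSq_eq_norm_sq]; push_cast; ring
    rw [this, map_add]; ring
  have b : (h * (starRingEnd ℂ) u + 2 * (starRingEnd ℂ) c * h + (starRingEnd ℂ) c ^ 2 * (h * u)).re
      ≤ ‖1 + (starRingEnd ℂ) c * u‖ * ‖u + c‖ + ‖c‖ * (1 - ‖u‖ ^ 2) := by
    rw [e]
    refine (re_le_norm _).trans ?_
    rw [norm_mul]
    have h1 : ‖(1 + (starRingEnd ℂ) c * u) * (starRingEnd ℂ) (u + c)
        + (starRingEnd ℂ) c * ((1 - ‖u‖ ^ 2 : ℝ) : ℂ)‖ ≤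
        ‖1 + (starRingEnd ℂ) c * u‖ * ‖u + c‖ + ‖c‖ * (1 - ‖u‖ ^ 2) := by
      refine (norm_add_le _ _).trans ?_
      rw [norm_mul, norm_mul, RCLike.norm_conj, RCLike.norm_conj, norm_real, Real.norm_eq_abs,
        abs_of_nonneg]
      nlinarith [norm_nonneg u]
    refine le_trans (mul_le_of_le_one_left (norm_nonneg _) hh) h1
  have n1 : ‖1 + (starRingEnd ℂ) c * u‖ ^ 2 = 1 + 2 * ((starRingEnd ℂ) c * u).re + ‖c‖^2 * ‖u‖^2 := by
    rw [← normSq_eq_norm_sq, normSq_add, ← normSq_eq_norm_sq c, ← normSq_eq_norm_sq u]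
    simp [normSq_conj]
    ring
  have n2 : ‖u + c‖ ^ 2 = ‖u‖^2 + ‖c‖^2 + 2 * ((starRingEnd ℂ) c * u).re := by
    rw [← normSq_eq_norm_sq, normSq_add, ← normSq_eq_norm_sq c, ← normSq_eq_norm_sq u, mul_comm u]
  have hc : ‖c‖ * (1 - ‖u‖^2) ≤ (1 + ‖c‖^2) / 2 * (1 - ‖u‖^2) := by
    apply mul_le_mul_of_nonneg_right
    · nlinarith [sq_nonneg (‖c‖ - 1)]
    · nlinarith [norm_nonneg u]
  have hm : ‖1 + (starRingEnd ℂ) c * u‖ * ‖u + c‖ ≤ (‖1 + (starRingEnd ℂ) c * u‖^2 + ‖u + c‖^2)/2 := by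
    nlinarith [sq_nonneg (‖1 + (starRingEnd ℂ) c * u‖ - ‖u + c‖)]
  have e2 : (2 * (starRingEnd ℂ) c * u).re = 2 * ((starRingEnd ℂ) c * u).re := by
    rw [mul_assoc]; simp
  rw [sub_re, sub_re, add_re, add_re, ofReal_re, one_re, e2]
  rw [add_re, add_re] at b
  nlinarith

lemma adr_v {R : ℝ} (hR : 0 < R) {w : ℂ} (hw : ‖w‖ < R) (m : ℕ) (ζ : ℂ) (hζ : ζ ∈ sphere (0:ℂ) R) :
    (starRingEnd ℂ) ((ζ - w) * ζ ^ m / ((R:ℂ) ^ 2 - (starRingEnd ℂ) w * ζ) ^ (m + 1)) =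
      ((R:ℂ) ^ 2 - (starRingEnd ℂ) w * ζ) / ((R:ℂ) ^ 2 * (ζ - w) ^ (m + 1)) ∧
    R * (R - ‖w‖) ^ m *
      ‖((R:ℂ) ^ 2 - (starRingEnd ℂ) w * ζ) / ((R:ℂ) ^ 2 * (ζ - w) ^ (m + 1))‖ ≤ 1 := by
  have hζn : ‖ζ‖ = R := mem_sphere_zero_iff_norm.1 hζ
  have e1 : ζ - w ≠ 0 := by
    intro h
    rw [sub_eq_zero] at h
    rw [h] at hζn
    linarith
  have hRC : (R:ℂ) ≠ 0 := by exact_mod_cast hR.ne'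
  have hζζ : ζ * (starRingEnd ℂ) ζ = (R:ℂ)^2 := by
    rw [mul_conj, normSq_eq_norm_sq, hζn]; push_cast; ring
  have e3 : (R:ℂ) ^ 2 - (starRingEnd ℂ) w * ζ = ζ * (starRingEnd ℂ) (ζ - w) := by
    rw [map_sub, mul_sub, hζζ]; ring
  have hζ0 : ζ ≠ 0 := by
    rintro rfl
    rw [zero_mul] at hζζ
    exact pow_ne_zero 2 hRC hζζ.symm
  have hζ0' : (starRingEnd ℂ) ζ ≠ 0 := (map_ne_zero _).2 hζ0
  have e4 : (starRingEnd ℂ) (ζ - w) ≠ 0 := (map_ne_zero _).2 e1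
  rw [e3]
  constructor
  · rw [← hζζ]
    simp only [map_div₀, map_mul, map_pow, conj_conj]
    field_simp
    rw [mul_pow]
    ring
  · have hn : 0 < ‖ζ - w‖ := norm_pos_iff.2 e1
    have hge : R - ‖w‖ ≤ ‖ζ - w‖ := by
      have := norm_sub_norm_le ζ w
      rwa [hζn] at this
    have hpow : (R - ‖w‖) ^ m ≤ ‖ζ - w‖ ^ m := pow_le_pow_left₀ (by linarith) hge m
    rw [norm_div, norm_mul, norm_mul, norm_pow, norm_pow, RCLike.norm_conj, hζn, norm_real,
      Real.norm_eq_abs, abs_of_pos hR]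
    have : R * (R - ‖w‖) ^ m * (R * ‖ζ - w‖ / (R ^ 2 * ‖ζ - w‖ ^ (m + 1))) =
        (R - ‖w‖) ^ m / ‖ζ - w‖ ^ m := by
      field_simp
      ring
    rw [this]
    exact div_le_one_of_le₀ hpow (by positivity)

lemma adr_norm {w : ℂ} (hw : ‖w‖ < 1) (m : ℕ) (T : ℂ) (B : ℝ)
    (h : ∀ R : ℝ, ‖w‖ < R → 0 < R → R < 1 → ∀ β : ℂ, ‖β‖ = 1 →
      ((β * (R * (R - ‖w‖) ^ m : ℝ)) * ((R ^ 2 - ‖w‖ ^ 2 : ℝ) / (R:ℂ) ^ 2 * T)).re ≤ B) :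
    ‖T‖ * ((1 - ‖w‖ ^ 2) * (1 - ‖w‖) ^ m) ≤ B := by
  obtain ⟨β, hβ, hβT⟩ : ∃ β : ℂ, ‖β‖ = 1 ∧ β * T = (‖T‖ : ℂ) := by
    by_cases hT : T = 0
    · exact ⟨1, by simp, by simp [hT]⟩
    · have hT' : (‖T‖ : ℂ) ≠ 0 := by exact_mod_cast (norm_ne_zero_iff.2 hT)
      refine ⟨(starRingEnd ℂ) T / ‖T‖, ?_, ?_⟩
      · rw [norm_div, RCLike.norm_conj, norm_real, norm_norm, div_self (norm_ne_zero_iff.2 hT)]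
      · rw [div_mul_eq_mul_div, mul_comm, mul_conj, normSq_eq_norm_sq]
        push_cast
        field_simp
  have h1 : ∀ R : ℝ, ‖w‖ < R → 0 < R → R < 1 →
      R * (R - ‖w‖) ^ m * ((R ^ 2 - ‖w‖ ^ 2) / R ^ 2 * ‖T‖) ≤ B := by
    intro R a b c
    have := h R a b c β hβ
    have e : (β * (R * (R - ‖w‖) ^ m : ℝ)) * ((R ^ 2 - ‖w‖ ^ 2 : ℝ) / (R:ℂ) ^ 2 * T) =
        ((R * (R - ‖w‖) ^ m * ((R ^ 2 - ‖w‖ ^ 2) / R ^ 2 * ‖T‖) : ℝ) : ℂ) := by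
      calc _ = (R * (R - ‖w‖) ^ m : ℝ) * ((R ^ 2 - ‖w‖ ^ 2 : ℝ) / (R:ℂ) ^ 2 * (β * T)) := by ring
        _ = _ := by rw [hβT]; push_cast; ring
    rwa [e, ofReal_re] at this
  have hlim : Tendsto (fun R : ℝ => R * (R - ‖w‖) ^ m * ((R ^ 2 - ‖w‖ ^ 2) / R ^ 2 * ‖T‖)) (𝓝[<] 1)
      (𝓝 (1 * (1 - ‖w‖) ^ m * ((1 ^ 2 - ‖w‖ ^ 2) / 1 ^ 2 * ‖T‖))) := by
    apply Tendsto.mono_left _ nhdsWithin_le_nhds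
    apply ContinuousAt.tendsto (f := fun R : ℝ => R * (R - ‖w‖) ^ m * ((R ^ 2 - ‖w‖ ^ 2) / R ^ 2 * ‖T‖))
    fun_prop (disch := norm_num)
  have := le_of_tendsto hlim (b := B) (by
    have hm : max ‖w‖ 0 < 1 := max_lt hw one_pos
    filter_upwards [Ioo_mem_nhdsLT hm] with R hR
    exact h1 R ((le_max_left _ _).trans_lt hR.1) ((le_max_right _ _).trans_lt hR.1) hR.2)
  calc _ = 1 * (1 - ‖w‖) ^ m * ((1 ^ 2 - ‖w‖ ^ 2) / 1 ^ 2 * ‖T‖) := by ring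
    _ ≤ B := this

/-- One-variable estimate (Ruscheweyh). -/
lemma adr_one (h : ℂ → ℂ) (hh : DifferentiableOn ℂ h (ball 0 1)) (hb : ∀ ζ ∈ ball (0:ℂ) 1, ‖h ζ‖ ≤ 1)
    {w : ℂ} (hw : ‖w‖ < 1) (m : ℕ) :
    ‖iteratedDeriv (m + 1) h w / ((m + 1).factorial : ℂ)‖ * ((1 - ‖w‖ ^ 2) * (1 - ‖w‖) ^ m)
      ≤ 1 - ‖h w‖ ^ 2 := by
  apply adr_norm hw
  intro R hwR hR0 hR1 β hβ
  set M : ℝ := R * (R - ‖w‖) ^ m with hM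
  have hM0 : 0 ≤ M := mul_nonneg hR0.le (pow_nonneg (by linarith) _)
  set u : ℂ → ℂ := fun ζ => (starRingEnd ℂ) β * M *
    ((ζ - w) * ζ ^ m / ((R:ℂ) ^ 2 - (starRingEnd ℂ) w * ζ) ^ (m + 1)) with hu
  have hne2 : ∀ ζ ∈ closedBall (0:ℂ) R, (R:ℂ) ^ 2 - (starRingEnd ℂ) w * ζ ≠ 0 := by
    intro ζ hζ h
    rw [sub_eq_zero] at h
    have h' := congrArg norm h
    rw [mem_closedBall_zero_iff] at hζ
    simp only [norm_pow, norm_real, norm_mul, RCLike.norm_conj, Real.norm_eq_abs,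
      abs_of_pos hR0] at h'
    nlinarith [norm_nonneg w, norm_nonneg ζ]
  have hud : DifferentiableOn ℂ u (closedBall 0 R) :=
    (differentiableOn_const _).fun_mul (DifferentiableOn.fun_div (by fun_prop) (by fun_prop)
      (fun ζ hζ => pow_ne_zero _ (hne2 ζ hζ)))
  have huw : u w = 0 := by simp [hu]
  have hhd : DifferentiableOn ℂ h (closedBall 0 R) := hh.mono (closedBall_subset_ball hR1)
  have hfin := adr_core hR0 hR1 hwR m h (fun ζ => 1 + (‖h w‖ ^ 2 : ℝ) + 2 * (starRingEnd ℂ) (h w) * u ζ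
      - 2 * (starRingEnd ℂ) (h w) * h ζ - (starRingEnd ℂ) (h w) ^ 2 * (h ζ * u ζ)) hh
      (by fun_prop) (β * M) (by
        intro ζ hζ
        obtain ⟨v1, v2⟩ := adr_v hR0 hwR m ζ hζ
        have hcu : (starRingEnd ℂ) (u ζ) = β * M *
            (((R:ℂ) ^ 2 - (starRingEnd ℂ) w * ζ) / ((R:ℂ) ^ 2 * (ζ - w) ^ (m + 1))) := by
          simp only [hu]
          rw [map_mul, v1, map_mul, conj_conj, conj_ofReal]
        have hun : ‖u ζ‖ ≤ 1 := by
          rw [← RCLike.norm_conj, hcu, norm_mul, norm_mul, hβ, one_mul, norm_real,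
            Real.norm_eq_abs, abs_of_nonneg hM0]
          exact v2
        have := adr_pointwise (h ζ) (u ζ) (h w)
          (hb ζ (closedBall_subset_ball hR1 (sphere_subset_closedBall hζ))) hun
        rw [hcu] at this
        refine le_trans (le_of_eq ?_) this
        congr 1
        ring)
  refine hfin.trans (le_of_eq ?_)
  simp only [huw, mul_zero, add_zero, sub_zero]
  have : 2 * (starRingEnd ℂ) (h w) * h w = ((2 * ‖h w‖ ^ 2 : ℝ) : ℂ) := by
    rw [mul_assoc, mul_comm _ (h w), mul_conj, normSq_eq_norm_sq]; push_cast; ring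
  rw [this, sub_re, add_re, ofReal_re, ofReal_re, one_re]
  ring

lemma adr_two (F g : ℂ → ℂ) (hF : DifferentiableOn ℂ F (ball 0 1))
    (hg : DifferentiableOn ℂ g (ball 0 1)) (C : ℝ) (hC : 0 ≤ C)
    (hb : ∀ ζ ∈ ball (0:ℂ) 1, ‖F ζ‖ ≤ C * (1 - ‖g ζ‖ ^ 2))
    {w : ℂ} (hw : ‖w‖ < 1) (m : ℕ) :
    ‖iteratedDeriv (m + 1) F w / ((m + 1).factorial : ℂ)‖ * ((1 - ‖w‖ ^ 2) * (1 - ‖w‖) ^ m)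
      ≤ C * (1 - ‖g w‖ ^ 2) := by
  apply adr_norm hw
  intro R hwR hR0 hR1 β hβ
  set M : ℝ := R * (R - ‖w‖) ^ m with hM
  have hM0 : 0 ≤ M := mul_nonneg hR0.le (pow_nonneg (by linarith) _)
  have hgd : DifferentiableOn ℂ g (closedBall 0 R) := hg.mono (closedBall_subset_ball hR1)
  have hre : ∀ ζ, ((C : ℂ) * (1 + (‖g w‖ ^ 2 : ℝ) - 2 * ((starRingEnd ℂ) (g w) * g ζ))).re =
      C * (1 + ‖g w‖ ^ 2 - 2 * ((starRingEnd ℂ) (g w) * g ζ).re) := by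
    intro ζ
    rw [re_ofReal_mul, sub_re, add_re, ofReal_re, one_re]
    congr 2
    simp
  have hfin := adr_core hR0 hR1 hwR m F
      (fun ζ => (C : ℂ) * (1 + (‖g w‖ ^ 2 : ℝ) - 2 * ((starRingEnd ℂ) (g w) * g ζ))) hF
      (by fun_prop) (β * M) (by
        intro ζ hζ
        obtain ⟨v1, v2⟩ := adr_v hR0 hwR m ζ hζ
        set q := (((R:ℂ) ^ 2 - (starRingEnd ℂ) w * ζ) / ((R:ℂ) ^ 2 * (ζ - w) ^ (m + 1))) with hq
        have h1 : ‖β * M * F ζ * q‖ ≤ ‖F ζ‖ := by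
          rw [norm_mul, norm_mul, norm_mul, hβ, one_mul, norm_real, Real.norm_eq_abs,
            abs_of_nonneg hM0]
          calc M * ‖F ζ‖ * ‖q‖ = (M * ‖q‖) * ‖F ζ‖ := by ring
            _ ≤ 1 * ‖F ζ‖ := by gcongr
            _ = _ := one_mul _
        refine (re_le_norm _).trans (h1.trans
          ((hb ζ (closedBall_subset_ball hR1 (sphere_subset_closedBall hζ))).trans ?_))
        rw [hre]
        apply mul_le_mul_of_nonneg_left _ hC
        have h2 : ‖g ζ - g w‖ ^ 2 = ‖g ζ‖^2 + ‖g w‖^2 - 2 * ((starRingEnd ℂ) (g w) * g ζ).re := by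
          rw [← normSq_eq_norm_sq, normSq_sub, normSq_eq_norm_sq, normSq_eq_norm_sq, mul_comm (g ζ)]
        nlinarith [sq_nonneg ‖g ζ - g w‖])
  refine hfin.trans (le_of_eq ?_)
  rw [hre, mul_comm _ (g w), mul_conj, normSq_eq_norm_sq, ofReal_re]
  ring

lemma adr_param_aux (f : ℂ → ℂ → ℂ)
    (h1 : ∀ w ∈ ball (0:ℂ) 1, DifferentiableOn ℂ (fun z => f z w) (ball 0 1))
    (h2 : ∀ z ∈ ball (0:ℂ) 1, DifferentiableOn ℂ (f z) (ball 0 1))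
    (h3 : ∀ r < (1:ℝ), ∃ C : ℝ, ∀ z ∈ ball (0:ℂ) 1, ∀ w ∈ ball (0:ℂ) r, ‖f z w‖ ≤ C) :
    ∀ w ∈ ball (0:ℂ) 1, DifferentiableOn ℂ (fun z => deriv (f z) w) (ball 0 1) := by
  intro w hw
  have hw' : ‖w‖ < 1 := by simpa using hw
  obtain ⟨C, hC⟩ := h3 ((1 + ‖w‖) / 2) (by linarith)
  set s : ℝ := (1 - ‖w‖) / 2 with hs
  have hs0 : 0 < s := by rw [hs]; linarith
  have hsub : ball w s ⊆ ball 0 ((1 + ‖w‖) / 2) := by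
    intro x hx
    rw [mem_ball, dist_eq_norm] at hx
    rw [mem_ball_zero_iff]
    have := norm_add_le (x - w) w
    rw [sub_add_cancel] at this
    linarith
  have hsub1 : ball w s ⊆ ball 0 1 := hsub.trans (ball_subset_ball (by linarith))
  set K : ℝ := 2 * ((2 * C) / s) / s with hK
  have hest : ∀ z ∈ ball (0:ℂ) 1, ∀ x ∈ ball w s,
      dist (dslope (f z) w x) (deriv (f z) w) ≤ K * dist x w := by
    intro z hz x hx
    have hd : DifferentiableOn ℂ (f z) (ball w s) := (h2 z hz).mono hsub1
    have hb : ∀ y ∈ ball w s, ‖dslope (f z) w y‖ ≤ 2 * C / s := by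
      intro y hy
      apply norm_dslope_le_div_of_mapsTo_ball hd _ hy
      intro y hy
      rw [mem_closedBall, dist_eq_norm]
      have a1 := hC z hz y (hsub hy)
      have a2 := hC z hz w (hsub (mem_ball_self hs0))
      have := norm_sub_le (f z y) (f z w)
      linarith
    rw [← dslope_same]
    apply dist_le_div_mul_dist_of_mapsTo_ball ((differentiableOn_dslope (ball_mem_nhds w hs0)).2 hd) _ hx
    intro y hy
    rw [mem_closedBall, dist_eq_norm]
    have a1 := hb y hy
    have a2 := hb w (mem_ball_self hs0)
    have := norm_sub_le (dslope (f z) w y) (dslope (f z) w w)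
    linarith
  have hunif : TendstoUniformlyOn (fun x z => dslope (f z) w x) (fun z => deriv (f z) w)
      (𝓝[≠] w) (ball 0 1) := by
    rw [Metric.tendstoUniformlyOn_iff]
    intro ε hε
    have hlim : Tendsto (fun x => K * dist x w) (𝓝[≠] w) (𝓝 (K * dist w w)) := by
      apply Tendsto.mono_left _ nhdsWithin_le_nhds
      exact Continuous.tendsto (by fun_prop) w
    rw [dist_self, mul_zero] at hlim
    filter_upwards [hlim.eventually_lt_const hε, mem_nhdsWithin_of_mem_nhds (ball_mem_nhds w hs0)]
      with x hx hxs z hz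
    rw [dist_comm]
    exact (hest z hz x hxs).trans_lt hx
  refine hunif.tendstoLocallyUniformlyOn.differentiableOn ?_ isOpen_ball
  filter_upwards [mem_nhdsWithin_of_mem_nhds (ball_mem_nhds w hs0), self_mem_nhdsWithin]
    with x hxs hxw
  have e : (fun z => dslope (f z) w x) = fun z => (x - w)⁻¹ * (f z x - f z w) := by
    ext z
    rw [dslope_of_ne _ hxw, slope_def_module, smul_eq_mul]
  rw [e]
  exact (differentiableOn_const _).fun_mul ((h1 x (hsub1 hxs)).fun_sub (h1 w hw))

lemma adr_param (f : ℂ → ℂ → ℂ)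
    (h1 : ∀ w ∈ ball (0:ℂ) 1, DifferentiableOn ℂ (fun z => f z w) (ball 0 1))
    (h2 : ∀ z ∈ ball (0:ℂ) 1, DifferentiableOn ℂ (f z) (ball 0 1))
    (h3 : ∀ r < (1:ℝ), ∃ C : ℝ, ∀ z ∈ ball (0:ℂ) 1, ∀ w ∈ ball (0:ℂ) r, ‖f z w‖ ≤ C) (n : ℕ) :
    (∀ w ∈ ball (0:ℂ) 1, DifferentiableOn ℂ (fun z => iteratedDeriv n (f z) w) (ball 0 1)) ∧
    (∀ z ∈ ball (0:ℂ) 1, DifferentiableOn ℂ (iteratedDeriv n (f z)) (ball 0 1)) ∧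
    (∀ r < (1:ℝ), ∃ C : ℝ, ∀ z ∈ ball (0:ℂ) 1, ∀ w ∈ ball (0:ℂ) r, ‖iteratedDeriv n (f z) w‖ ≤ C) := by
  induction n with
  | zero => simpa only [iteratedDeriv_zero] using ⟨h1, h2, h3⟩
  | succ n ih =>
    obtain ⟨i1, i2, i3⟩ := ih
    simp only [iteratedDeriv_succ]
    refine ⟨?_, fun z hz => (i2 z hz).deriv isOpen_ball, ?_⟩
    · exact adr_param_aux (fun z => iteratedDeriv n (f z)) i1 i2 i3
    · intro r hr
      obtain ⟨C, hC⟩ := i3 ((1 + r) / 2) (by linarith)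
      refine ⟨C / ((1 - r) / 4), fun z hz w hw => ?_⟩
      have hsub : closedBall w ((1 - r) / 4) ⊆ ball 0 ((1 + r) / 2) := by
        intro x hx
        rw [mem_closedBall, dist_eq_norm] at hx
        rw [mem_ball_zero_iff] at hw ⊢
        have := norm_add_le (x - w) w
        rw [sub_add_cancel] at this
        linarith
      apply norm_deriv_le_of_forall_mem_sphere_norm_le (by linarith)
      · apply DifferentiableOn.diffContOnCl
        refine (i2 z hz).mono (closure_ball_subset_closedBall.trans (hsub.trans ?_))
        exact ball_subset_ball (by linarith)
      · intro x hx
        exact hC z hz x (hsub (sphere_subset_closedBall hx))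

lemma adr_arith_single (N D a x t : ℝ) (m : ℕ) (hm : 1 ≤ m) (hD : 0 ≤ D) (ha : 0 < a)
    (ht : 0 < t) (htx : t ≤ x)
    (h : N / ((m + 1).factorial : ℝ) * (a * x ^ m) ≤ D) :
    N ≤ ((m - 1).factorial : ℝ) * (D / t ^ m) * ((((m + 1 : ℕ) : ℝ) ^ 2 - ((m + 1 : ℕ) : ℝ)) / a) := by
  obtain ⟨k, rfl⟩ : ∃ k, m = k + 1 := ⟨m - 1, by omega⟩
  have hx : 0 < x := ht.trans_le htx
  have hf : (0:ℝ) < ((k + 1 + 1).factorial : ℝ) := by exact_mod_cast Nat.factorial_pos _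
  have h1 : N ≤ ((k + 1 + 1).factorial : ℝ) * (D / x ^ (k+1)) / a := by
    rw [le_div_iff₀ ha, ← mul_div_assoc, le_div_iff₀ (by positivity)]
    rw [div_mul_eq_mul_div, div_le_iff₀ hf] at h
    linarith
  refine h1.trans ?_
  have h2 : D / x ^ (k+1) ≤ D / t ^ (k+1) := by gcongr
  calc ((k + 1 + 1).factorial : ℝ) * (D / x ^ (k+1)) / a
      ≤ ((k + 1 + 1).factorial : ℝ) * (D / t ^ (k+1)) / a := by gcongr
    _ = _ := by
      rw [Nat.add_sub_cancel, Nat.factorial_succ, Nat.factorial_succ]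
      push_cast
      ring

lemma adr_arith_mixed (N D a b x y t : ℝ) (m k : ℕ) (hD : 0 ≤ D)
    (ht : 0 < t) (htx : t ≤ x) (hty : t ≤ y) (hta : t ≤ a) (htb : t ≤ b)
    (h : N / ((m + 1).factorial : ℝ) * (a * x ^ m) ≤ ((k + 1).factorial : ℝ) / (b * y ^ k) * D) :
    N ≤ ((m + k).factorial : ℝ) * (D / t ^ (m + k + 1)) *
      ((((m + 1 : ℕ) : ℝ) ^ 2 - ((m + 1 : ℕ) : ℝ)) / a +
        2 * ((m + 1 : ℕ) : ℝ) * ((k + 1 : ℕ) : ℝ) / (Real.sqrt a * Real.sqrt b) +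
        (((k + 1 : ℕ) : ℝ) ^ 2 - ((k + 1 : ℕ) : ℝ)) / b) := by
  have hx : 0 < x := ht.trans_le htx
  have hy : 0 < y := ht.trans_le hty
  have ha : 0 < a := ht.trans_le hta
  have hb : 0 < b := ht.trans_le htb
  have hf : (0:ℝ) < ((m + 1).factorial : ℝ) := by exact_mod_cast Nat.factorial_pos _
  have hg : (0:ℝ) < ((k + 1).factorial : ℝ) := by exact_mod_cast Nat.factorial_pos _
  have h1 : N ≤ ((m + 1).factorial * (k+1).factorial : ℝ) * D / (a * b * (x ^ m * y ^ k)) := by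
    rw [le_div_iff₀ (by positivity)]
    rw [div_mul_eq_mul_div, div_le_iff₀ hf, div_mul_eq_mul_div, div_mul_eq_mul_div,
      le_div_iff₀ (by positivity)] at h
    linarith
  have h2 : ((m + 1).factorial * (k+1).factorial : ℝ) ≤ ((m + k + 2).factorial : ℝ) := by
    have := Nat.le_of_dvd (Nat.factorial_pos _) (Nat.factorial_mul_factorial_dvd_factorial_add (m+1) (k+1))
    have e : m + 1 + (k + 1) = m + k + 2 := by ring
    rw [e] at this
    exact_mod_cast this
  have h3 : t ^ (m + k) ≤ x ^ m * y ^ k := by rw [pow_add]; gcongr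
  have e1 : t / (a * b) ≤ 1 / a := by
    rw [div_le_div_iff₀ (by positivity) ha]; nlinarith
  have e2 : t / (a * b) ≤ 1 / b := by
    rw [div_le_div_iff₀ (by positivity) hb]; nlinarith
  have e3 : t / (a * b) ≤ 1 / (Real.sqrt a * Real.sqrt b) := by
    have sa := Real.sqrt_pos.2 ha
    have sb := Real.sqrt_pos.2 hb
    have hab : a * b = (Real.sqrt a * Real.sqrt b) * (Real.sqrt a * Real.sqrt b) := by
      nlinarith [Real.mul_self_sqrt ha.le, Real.mul_self_sqrt hb.le]
    have hts : t ≤ Real.sqrt a * Real.sqrt b := by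
      rw [← Real.sqrt_mul ha.le]
      apply Real.le_sqrt_of_sq_le
      nlinarith
    rw [hab, div_le_div_iff₀ (by positivity) (by positivity)]
    nlinarith [mul_pos sa sb]
  calc N ≤ ((m + 1).factorial * (k+1).factorial : ℝ) * D / (a * b * (x ^ m * y ^ k)) := h1
    _ ≤ ((m + k + 2).factorial : ℝ) * D / (a * b * t ^ (m + k)) := by gcongr
    _ = ((m + k).factorial : ℝ) * (D / t ^ (m + k + 1)) *
        (((m:ℝ) + 1) * m * (t / (a * b)) + 2 * ((m:ℝ) + 1) * ((k:ℝ) + 1) * (t / (a * b))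
          + ((k:ℝ) + 1) * k * (t / (a * b))) := by
      rw [Nat.factorial_succ, Nat.factorial_succ]
      push_cast
      field_simp
      ring
    _ ≤ ((m + k).factorial : ℝ) * (D / t ^ (m + k + 1)) *
        (((m:ℝ) + 1) * m * (1 / a) + 2 * ((m:ℝ) + 1) * ((k:ℝ) + 1) * (1 / (Real.sqrt a * Real.sqrt b))
          + ((k:ℝ) + 1) * k * (1 / b)) := by gcongr
    _ = _ := by
      push_cast
      ring

/-- The open bidisk in `ℂ × ℂ`. -/
def Bidisk : Set (ℂ × ℂ) := {lam : ℂ × ℂ | ‖lam.1‖ < 1 ∧ ‖lam.2‖ < 1}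

end ADRHelpers

/-- **Anderson–Dritschel–Rovnyak higher-derivative Schwarz lemma on the bidisk.**
If `f` is analytic on `𝔻²` with `sup_{𝔻²}|f| ≤ 1`, `n = n₁ + n₂ ≥ 2`, and
`λ = (z, w) ∈ 𝔻²` with `|λ| = max(|z|, |w|)`, then
`|∂ⁿf/(∂zⁿ¹∂wⁿ²)(λ)| ≤ (n-2)! (1-|f(λ)|²)/(1-|λ|)^{n-1} ·
  [(n₁²-n₁)/(1-|z|²) + 2n₁n₂/(√(1-|z|²)√(1-|w|²)) + (n₂²-n₂)/(1-|w|²)]`. -/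
theorem anderson_dritschel_rovnyak (f : ℂ × ℂ → ℂ)
    (hf : DifferentiableOn ℂ f Bidisk) (hb : ∀ lam ∈ Bidisk, ‖f lam‖ ≤ 1)
    (n₁ n₂ n : ℕ) (hn : n = n₁ + n₂) (hn2 : 2 ≤ n)
    (z w : ℂ) (hzw : (z, w) ∈ Bidisk) :
    ‖iteratedDeriv n₁ (fun z' : ℂ => iteratedDeriv n₂ (fun w' : ℂ => f (z', w')) w) z‖ ≤
      (Nat.factorial (n - 2) : ℝ) *
        ((1 - ‖f (z, w)‖ ^ 2) / (1 - max ‖z‖ ‖w‖) ^ (n - 1)) *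
        (((n₁ : ℝ) ^ 2 - (n₁ : ℝ)) / (1 - ‖z‖ ^ 2) +
          2 * (n₁ : ℝ) * (n₂ : ℝ) /
            (Real.sqrt (1 - ‖z‖ ^ 2) * Real.sqrt (1 - ‖w‖ ^ 2)) +
          ((n₂ : ℝ) ^ 2 - (n₂ : ℝ)) / (1 - ‖w‖ ^ 2)) := by
  have hz : ‖z‖ < 1 := hzw.1
  have hw : ‖w‖ < 1 := hzw.2
  have hD : 0 ≤ 1 - ‖f (z, w)‖ ^ 2 := by
    have := hb _ hzw
    nlinarith [norm_nonneg (f (z, w))]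
  have ht : 0 < 1 - max ‖z‖ ‖w‖ := by
    have := max_lt hz hw
    linarith
  have htx : 1 - max ‖z‖ ‖w‖ ≤ 1 - ‖z‖ := by linarith [le_max_left ‖z‖ ‖w‖]
  have hty : 1 - max ‖z‖ ‖w‖ ≤ 1 - ‖w‖ := by linarith [le_max_right ‖z‖ ‖w‖]
  have hxa : 1 - ‖z‖ ≤ 1 - ‖z‖ ^ 2 := by nlinarith [norm_nonneg z]
  have hyb : 1 - ‖w‖ ≤ 1 - ‖w‖ ^ 2 := by nlinarith [norm_nonneg w]
  have hslice1 : ∀ w' ∈ Metric.ball (0:ℂ) 1,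
      DifferentiableOn ℂ (fun z' => f (z', w')) (Metric.ball 0 1) := by
    intro w' hw'
    refine hf.comp (f := fun z' : ℂ => (z', w')) (by fun_prop) ?_
    intro z' hz'
    exact ⟨by simpa using hz', by simpa using hw'⟩
  have hslice2 : ∀ z' ∈ Metric.ball (0:ℂ) 1,
      DifferentiableOn ℂ (fun w' => f (z', w')) (Metric.ball 0 1) := by
    intro z' hz'
    refine hf.comp (f := fun w' : ℂ => (z', w')) (by fun_prop) ?_
    intro w' hw'
    exact ⟨by simpa using hz', by simpa using hw'⟩
  have hbd : ∀ z' ∈ Metric.ball (0:ℂ) 1, ∀ w' ∈ Metric.ball (0:ℂ) 1, ‖f (z', w')‖ ≤ 1 := by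
    intro z' hz' w' hw'
    exact hb _ ⟨by simpa using hz', by simpa using hw'⟩
  have hzB : z ∈ Metric.ball (0:ℂ) 1 := by simpa using hz
  have hwB : w ∈ Metric.ball (0:ℂ) 1 := by simpa using hw
  rcases n₁ with _ | m
  · obtain ⟨k, rfl⟩ : ∃ k, n₂ = k + 1 := ⟨n₂ - 1, by omega⟩
    have h := adr_one (fun w' => f (z, w')) (hslice2 z hzB) (hbd z hzB) hw k
    rw [norm_div, Complex.norm_natCast] at h
    have := adr_arith_single _ _ _ _ _ k (by omega) hD (by linarith) ht hty h
    have en1 : n - 1 = k := by omega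
    have en2 : n - 2 = k - 1 := by omega
    rw [en1, en2, iteratedDeriv_zero]
    refine this.trans (le_of_eq ?_)
    push_cast
    ring
  · rcases n₂ with _ | k
    · have h := adr_one (fun z' => f (z', w)) (hslice1 w hwB) (fun z' hz' => hbd z' hz' w hwB) hz m
      rw [norm_div, Complex.norm_natCast] at h
      have := adr_arith_single _ _ _ _ _ m (by omega) hD (by linarith) ht htx h
      have en1 : n - 1 = m := by omega
      have en2 : n - 2 = m - 1 := by omega
      simp only [iteratedDeriv_zero]
      rw [en1, en2]
      refine this.trans (le_of_eq ?_)
      push_cast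
      ring
    · have hF := (adr_param (fun z' w' => f (z', w')) hslice1 hslice2
        (fun r hr => ⟨1, fun z' hz' w' hw' => hbd z' hz' w'
          (Metric.ball_subset_ball hr.le hw')⟩) (k + 1)).1 w hwB
      have hb0 : 0 < (1 - ‖w‖ ^ 2) * (1 - ‖w‖) ^ k :=
        mul_pos (by linarith) (pow_pos (by linarith) _)
      have h := adr_two _ (fun z' => f (z', w)) hF (hslice1 w hwB)
        (((k + 1).factorial : ℝ) / ((1 - ‖w‖ ^ 2) * (1 - ‖w‖) ^ k)) (by positivity) (by
          intro z' hz'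
          have h := adr_one (fun w' => f (z', w')) (hslice2 z' hz') (hbd z' hz') hw k
          rw [norm_div, Complex.norm_natCast, div_mul_eq_mul_div, div_le_iff₀
            (by exact_mod_cast Nat.factorial_pos _)] at h
          rw [div_mul_eq_mul_div, le_div_iff₀ hb0]
          linarith) hz m
      rw [norm_div, Complex.norm_natCast] at h
      have := adr_arith_mixed _ _ _ _ _ _ _ m k hD ht htx hty (htx.trans hxa) (hty.trans hyb) h
      have en1 : n - 1 = m + k + 1 := by omega
      have en2 : n - 2 = m + k := by omega
      rw [en1, en2]
      exact this
end

section
/- (Pick's theorem) Let λ₁,…,λ_N be distinct points of 𝔻 and let w₁,…,w_N ∈ ℂ. There exists an analytic function φ : 𝔻 → ℂ with sup_{𝔻}|φ| ≤ 1 and φ(λ_i) = w_i for i = 1,…,N if and only if the N×N matrix whose (i,j) entry is (1 − w_i w̄_j)/(1 − λ_i λ̄_j) is positive semi-definite. -/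
open Metric Matrix
open scoped ComplexOrder

namespace PickAux

/-- The Blaschke factor. -/
noncomputable def bl (a z : ℂ) : ℂ := (z - a) / (1 - starRingEnd ℂ a * z)

/-- The interpolation property. -/
def Interp {N : ℕ} (lam w : Fin N → ℂ) : Prop :=
  ∃ φ : ℂ → ℂ, DifferentiableOn ℂ φ (ball (0 : ℂ) 1) ∧
      (∀ z ∈ ball (0 : ℂ) 1, ‖φ z‖ ≤ 1) ∧ ∀ i, φ (lam i) = w i

/-- The Pick matrix. -/
noncomputable def pick {N : ℕ} (lam w : Fin N → ℂ) : Matrix (Fin N) (Fin N) ℂ :=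
  Matrix.of fun i j : Fin N =>
        (1 - w i * starRingEnd ℂ (w j)) / (1 - lam i * starRingEnd ℂ (lam j))

lemma one_sub_ne {a z : ℂ} (ha : ‖a‖ < 1) (hz : ‖z‖ ≤ 1) : 1 - a * z ≠ 0 := by
  intro h
  have h1 : a * z = 1 := (sub_eq_zero.mp h).symm
  have h2 : ‖a‖ * ‖z‖ = 1 := by rw [← norm_mul, h1, norm_one]
  nlinarith [norm_nonneg a, norm_nonneg z]

lemma den_ne {a z : ℂ} (ha : ‖a‖ < 1) (hz : ‖z‖ ≤ 1) : 1 - starRingEnd ℂ a * z ≠ 0 :=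
  one_sub_ne (by simpa using ha) hz

lemma den_ne' {a z : ℂ} (ha : ‖a‖ < 1) (hz : ‖z‖ ≤ 1) : 1 - a * starRingEnd ℂ z ≠ 0 :=
  one_sub_ne ha (by simpa using hz)

lemma bl_identity {a z u : ℂ} (ha : ‖a‖ < 1) (hz : ‖z‖ ≤ 1) (hu : ‖u‖ ≤ 1) :
    1 - bl a z * starRingEnd ℂ (bl a u) =
      (1 - a * starRingEnd ℂ a) * (1 - z * starRingEnd ℂ u) /
        ((1 - starRingEnd ℂ a * z) * (1 - a * starRingEnd ℂ u)) := by
  have h1 := den_ne ha hz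
  have h1' : 1 - z * starRingEnd ℂ a ≠ 0 := by rwa [mul_comm] at h1
  have h2 := den_ne' ha hu
  unfold bl
  simp only [map_div₀, map_sub, map_mul, map_one, Complex.conj_conj]
  field_simp
  ring

lemma bl_inv {a z : ℂ} (ha : ‖a‖ < 1) (hz : ‖z‖ ≤ 1) : bl (-a) (bl a z) = z := by
  have h1 := den_ne ha hz
  have h1' : 1 - z * starRingEnd ℂ a ≠ 0 := by rwa [mul_comm] at h1
  have h2 := den_ne' ha ha.le
  have h3 : 1 - starRingEnd ℂ (-a) * bl a z =
      (1 - a * starRingEnd ℂ a) / (1 - starRingEnd ℂ a * z) := by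
    unfold bl; rw [map_neg]; field_simp; ring
  have h4 : bl a z - -a = z * (1 - a * starRingEnd ℂ a) / (1 - starRingEnd ℂ a * z) := by
    unfold bl; field_simp; ring
  rw [bl, h3, h4]
  field_simp

lemma norm_bl_sq {a z : ℂ} (ha : ‖a‖ < 1) (hz : ‖z‖ ≤ 1) :
    1 - ‖bl a z‖ ^ 2 = (1 - ‖a‖ ^ 2) * (1 - ‖z‖ ^ 2) / ‖1 - starRingEnd ℂ a * z‖ ^ 2 := by
  have h := bl_identity ha hz hz
  have h5 : 1 - a * starRingEnd ℂ z = starRingEnd ℂ (1 - starRingEnd ℂ a * z) := by simp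
  rw [h5] at h
  simp only [Complex.mul_conj, Complex.normSq_eq_norm_sq] at h
  exact_mod_cast h

lemma norm_bl_le {a z : ℂ} (ha : ‖a‖ < 1) (hz : ‖z‖ ≤ 1) : ‖bl a z‖ ≤ 1 := by
  have h := norm_bl_sq ha hz
  have : 0 ≤ (1 - ‖a‖ ^ 2) * (1 - ‖z‖ ^ 2) / ‖1 - starRingEnd ℂ a * z‖ ^ 2 := by
    apply div_nonneg _ (by positivity)
    apply mul_nonneg <;> nlinarith [norm_nonneg a, norm_nonneg z]
  nlinarith [norm_nonneg (bl a z)]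

lemma norm_bl_lt {a z : ℂ} (ha : ‖a‖ < 1) (hz : ‖z‖ < 1) : ‖bl a z‖ < 1 := by
  have h := norm_bl_sq ha hz.le
  have : 0 < (1 - ‖a‖ ^ 2) * (1 - ‖z‖ ^ 2) / ‖1 - starRingEnd ℂ a * z‖ ^ 2 := by
    apply div_pos _ (by have := den_ne ha hz.le; positivity)
    apply mul_pos <;> nlinarith [norm_nonneg a, norm_nonneg z]
  nlinarith [norm_nonneg (bl a z)]

lemma bl_diff {a : ℂ} (ha : ‖a‖ < 1) {f : ℂ → ℂ} (hf : DifferentiableOn ℂ f (ball 0 1))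
    (hb : ∀ z ∈ ball (0 : ℂ) 1, ‖f z‖ ≤ 1) :
    DifferentiableOn ℂ (fun z => bl a (f z)) (ball 0 1) := by
  unfold bl
  exact (hf.sub_const a).div ((hf.const_mul _).const_sub 1) fun z hz => den_ne ha (hb z hz)

lemma interp_bl {N : ℕ} {lam w : Fin N → ℂ} {a c : ℂ} (ha : ‖a‖ < 1) (hc : ‖c‖ < 1)
    (hlam : ∀ i, ‖lam i‖ < 1) (h : Interp lam w) :
    Interp (fun i => bl a (lam i)) (fun i => bl c (w i)) := by
  obtain ⟨φ, h1, h2, h3⟩ := h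
  have ha' : ‖-a‖ < 1 := by simpa using ha
  have hm : Set.MapsTo (bl (-a)) (ball 0 1) (ball 0 1) := fun z hz => by
    rw [mem_ball_zero_iff] at hz ⊢
    exact norm_bl_lt ha' hz
  have hd : DifferentiableOn ℂ (bl (-a)) (ball 0 1) :=
    bl_diff ha' (f := fun z => z) differentiableOn_id
      fun z hz => (mem_ball_zero_iff.mp hz).le
  refine ⟨fun z => bl c (φ (bl (-a) z)), bl_diff hc (h1.comp hd hm) fun z hz => h2 _ (hm hz),
    fun z hz => norm_bl_le hc (h2 _ (hm hz)), fun i => ?_⟩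
  simp only [bl_inv ha (hlam i).le, h3]

lemma psd_congr {n : ℕ} {K : Matrix (Fin n) (Fin n) ℂ} (hK : K.PosSemidef)
    (c : Fin n → ℂ) : (Matrix.of fun i j => c i * K i j * starRingEnd ℂ (c j)).PosSemidef := by
  have := hK.mul_mul_conjTranspose_same (diagonal c)
  convert this using 1
  ext i j
  simp [Matrix.diagonal_conjTranspose]

lemma psd_bl {N : ℕ} {lam w : Fin N → ℂ} {a c : ℂ} (ha : ‖a‖ < 1) (hc : ‖c‖ < 1)
    (hlam : ∀ i, ‖lam i‖ < 1) (hw : ∀ i, ‖w i‖ ≤ 1) (h : (pick lam w).PosSemidef) :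
    (pick (fun i => bl a (lam i)) (fun i => bl c (w i))).PosSemidef := by
  have hr : (0:ℂ) ≤ (((1 - ‖c‖ ^ 2) / (1 - ‖a‖ ^ 2) : ℝ) : ℂ) := by
    rw [Complex.zero_le_real]
    apply div_nonneg <;> nlinarith [norm_nonneg a, norm_nonneg c]
  have := (psd_congr h
    (fun i => (1 - starRingEnd ℂ a * lam i) / (1 - starRingEnd ℂ c * w i))).smul hr
  convert this using 1
  ext i j
  have e : ∀ z : ℂ, (((1 - ‖z‖ ^ 2 : ℝ)) : ℂ) = 1 - z * starRingEnd ℂ z := fun z => by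
    simp [Complex.mul_conj, Complex.normSq_eq_norm_sq]
  simp only [pick, Matrix.of_apply, Matrix.smul_apply, smul_eq_mul, bl_identity ha (hlam i).le (hlam j).le,
    bl_identity hc (hw i) (hw j), Complex.ofReal_div, e]
  have h1 := den_ne' ha ha.le
  have h2 := den_ne ha (hlam i).le
  have h3 := den_ne' ha (hlam j).le
  have h4 := den_ne hc (hw i)
  have h5 := den_ne' hc (hw j)
  have h6 := den_ne' (hlam i) (hlam j).le
  simp only [map_div₀, map_sub, map_mul, map_one, Complex.conj_conj]
  field_simp

lemma interp_bl_iff {N : ℕ} {lam w : Fin N → ℂ} {a c : ℂ} (ha : ‖a‖ < 1) (hc : ‖c‖ < 1)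
    (hlam : ∀ i, ‖lam i‖ < 1) (hw : ∀ i, ‖w i‖ ≤ 1) :
    Interp (fun i => bl a (lam i)) (fun i => bl c (w i)) ↔ Interp lam w := by
  refine ⟨fun h => ?_, interp_bl ha hc hlam⟩
  have := interp_bl (a := -a) (c := -c) (by simpa using ha) (by simpa using hc)
    (fun i => norm_bl_lt ha (hlam i)) h
  simpa only [bl_inv ha (hlam _).le, bl_inv hc (hw _)] using this

lemma psd_bl_iff {N : ℕ} {lam w : Fin N → ℂ} {a c : ℂ} (ha : ‖a‖ < 1) (hc : ‖c‖ < 1)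
    (hlam : ∀ i, ‖lam i‖ < 1) (hw : ∀ i, ‖w i‖ ≤ 1) :
    (pick (fun i => bl a (lam i)) (fun i => bl c (w i))).PosSemidef ↔ (pick lam w).PosSemidef := by
  refine ⟨fun h => ?_, psd_bl ha hc hlam hw⟩
  have := psd_bl (a := -a) (c := -c) (by simpa using ha) (by simpa using hc)
    (fun i => norm_bl_lt ha (hlam i)) (fun i => norm_bl_le hc (hw i)) h
  simpa only [bl_inv ha (hlam _).le, bl_inv hc (hw _)] using this

lemma psd_schur {n : ℕ} {lam w : Fin (n + 1) → ℂ} (hlam : ∀ i, ‖lam i‖ < 1)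
    (h0 : lam 0 = 0) (w0 : w 0 = 0) (hne : ∀ i : Fin n, lam i.succ ≠ 0) :
    (pick lam w).PosSemidef ↔
      (pick (fun i : Fin n => lam i.succ) (fun i => w i.succ / lam i.succ)).PosSemidef := by
  have key : ∀ i j : Fin n, lam i.succ *
      (pick (fun i : Fin n => lam i.succ) (fun i => w i.succ / lam i.succ)) i j *
      starRingEnd ℂ (lam j.succ) = pick lam w i.succ j.succ - 1 := by
    intro i j
    have h1 := hne i
    have h2 : starRingEnd ℂ (lam j.succ) ≠ 0 := by simpa using hne j
    have h3 := den_ne' (hlam i.succ) (hlam j.succ).le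
    simp only [pick, Matrix.of_apply, map_div₀]
    field_simp
    ring
  have r0 : ∀ j, pick lam w 0 j = 1 := by intro j; simp [pick, h0, w0]
  have c0 : ∀ j, pick lam w j 0 = 1 := by intro j; simp [pick, h0, w0]
  constructor
  · intro h
    have h1 := h.mul_mul_conjTranspose_same
      (Matrix.of fun (i : Fin n) (j : Fin (n+1)) => Fin.cases (motive := fun _ => ℂ) (-1) (fun k => if i = k then 1 else 0) j)
    have h2 := psd_congr h1 (fun i => (lam i.succ)⁻¹)
    convert h2 using 1
    ext i j
    have h1 := hne i
    have h2 : starRingEnd ℂ (lam j.succ) ≠ 0 := by simpa using hne j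
    have : pick (fun i : Fin n => lam i.succ) (fun i => w i.succ / lam i.succ) i j =
      (lam i.succ)⁻¹ * (pick lam w i.succ j.succ - 1) * starRingEnd ℂ ((lam j.succ)⁻¹) := by
      rw [← key, map_inv₀]
      field_simp
    rw [this]
    simp only [Matrix.of_apply, Matrix.mul_apply, Fin.sum_univ_succ, r0, c0, Matrix.conjTranspose_apply]
    congr 2
    simp [apply_ite]
    try ring
  · intro h
    have h1 := (psd_congr h (fun i => lam i.succ)).mul_mul_conjTranspose_same
      (Matrix.of fun (i : Fin (n+1)) (j : Fin n) => Fin.cases (motive := fun _ => ℂ) 0 (fun k => if k = j then 1 else 0) i)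
    have h2 := h1.add (posSemidef_vecMulVec_self_star (fun _ : Fin (n+1) => (1:ℂ)))
    convert h2 using 1
    ext i j
    simp only [key]
    simp only [Matrix.add_apply, Matrix.of_apply, Matrix.mul_apply, Matrix.conjTranspose_apply]
    refine Fin.cases ?_ (fun i => ?_) i <;> refine Fin.cases ?_ (fun j => ?_) j <;>
      simp [r0, c0, Matrix.vecMulVec_apply, apply_ite]

lemma interp_schur {n : ℕ} {lam w : Fin (n + 1) → ℂ} (hlam : ∀ i, ‖lam i‖ < 1)
    (h0 : lam 0 = 0) (w0 : w 0 = 0) (hne : ∀ i : Fin n, lam i.succ ≠ 0) :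
    Interp lam w ↔
      Interp (fun i : Fin n => lam i.succ) (fun i => w i.succ / lam i.succ) := by
  constructor
  · rintro ⟨φ, h1, h2, h3⟩
    have hφ : φ 0 = 0 := by have := h3 0; rwa [h0, w0] at this
    refine ⟨dslope φ 0, (Complex.differentiableOn_dslope (ball_mem_nhds 0 one_pos)).mpr h1,
      fun z hz => ?_, fun i => ?_⟩
    · have := Complex.norm_dslope_le_div_of_mapsTo_ball (R₂ := 1) h1 (fun z hz => by
        rw [hφ]; simpa using h2 z hz) hz
      simpa using this
    · rw [dslope_of_ne _ (hne i), slope_def_field, hφ, h3]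
      simp
  · rintro ⟨ψ, h1, h2, h3⟩
    refine ⟨fun z => z * ψ z, differentiableOn_id.mul h1, fun z hz => ?_, fun i => ?_⟩
    · rw [norm_mul]
      have := h2 z hz
      have := mem_ball_zero_iff.mp hz
      nlinarith [norm_nonneg z, norm_nonneg (ψ z)]
    · refine Fin.cases ?_ (fun i => ?_) i
      · simp [h0, w0]
      · simp only [h3]
        field_simp [hne i]

lemma norm_le_of_psd {n : ℕ} {lam w : Fin n → ℂ} (hlam : ∀ i, ‖lam i‖ < 1)
    (h : (pick lam w).PosSemidef) (i : Fin n) : ‖w i‖ ≤ 1 := by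
  have h1 : 0 ≤ pick lam w i i := h.diag_nonneg
  have h2 : pick lam w i i = (((1 - ‖w i‖ ^ 2) / (1 - ‖lam i‖ ^ 2) : ℝ) : ℂ) := by
    simp [pick, Complex.mul_conj, Complex.normSq_eq_norm_sq]
  rw [h2, Complex.zero_le_real] at h1
  have h3 : 0 < 1 - ‖lam i‖ ^ 2 := by nlinarith [norm_nonneg (lam i), hlam i]
  rw [le_div_iff₀ h3] at h1
  nlinarith [norm_nonneg (w i)]

lemma extremal {n : ℕ} {lam w : Fin (n + 1) → ℂ} (hlam : ∀ i, ‖lam i‖ < 1)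
    (hw0 : ‖w 0‖ = 1) : Interp lam w ↔ (pick lam w).PosSemidef := by
  have hww : w 0 * starRingEnd ℂ (w 0) = 1 := by
    simp [Complex.mul_conj, Complex.normSq_eq_norm_sq, hw0]
  have hI : Interp lam w ↔ ∀ i, w i = w 0 := by
    constructor
    · rintro ⟨φ, h1, h2, h3⟩ i
      have hm : ∀ j, lam j ∈ ball (0:ℂ) 1 := fun j => mem_ball_zero_iff.mpr (hlam j)
      have := Complex.eqOn_of_isPreconnected_of_isMaxOn_norm
        (convex_ball (0:ℂ) 1).isPreconnected isOpen_ball h1 (hm 0) (fun z hz => by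
          simpa [h3, hw0] using h2 z hz) (hm i)
      simpa [h3] using this
    · intro h
      exact ⟨fun _ => w 0, differentiableOn_const _, fun _ _ => hw0.le, fun i => (h i).symm⟩
  have hP : (pick lam w).PosSemidef ↔ ∀ i, w i = w 0 := by
    constructor
    · intro h i
      have h1 := (h.submatrix ![0, i]).det_nonneg
      have h00 : pick lam w 0 0 = 0 := by simp [pick, hww]
      have hs : pick lam w i 0 = starRingEnd ℂ (pick lam w 0 i) := (h.isHermitian.apply i 0).symm
      rw [Matrix.det_fin_two] at h1
      simp only [Matrix.submatrix_apply, Matrix.cons_val_zero, Matrix.cons_val_one, h00, hs,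
        Complex.mul_conj, zero_mul, zero_sub] at h1
      have h2 : Complex.normSq (pick lam w 0 i) = 0 := by
        have : (0:ℝ) ≤ - Complex.normSq (pick lam w 0 i) := by exact_mod_cast h1
        linarith [Complex.normSq_nonneg (pick lam w 0 i)]
      have h3 : pick lam w i 0 = 0 := by rw [hs, Complex.normSq_eq_zero.mp h2, map_zero]
      have h4 : 1 - w i * starRingEnd ℂ (w 0) = 0 :=
        (div_eq_zero_iff.mp h3).resolve_right (den_ne' (hlam i) (hlam 0).le)
      linear_combination (-w 0) * h4 - w i * hww
    · intro h
      have : pick lam w = 0 := by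
        ext i j
        simp [pick, h i, h j, hww]
      rw [this]
      exact Matrix.PosSemidef.zero
  rw [hI, hP]

theorem main : ∀ {N : ℕ} (lam w : Fin N → ℂ), (∀ i, ‖lam i‖ < 1) → Function.Injective lam →
    (Interp lam w ↔ (pick lam w).PosSemidef) := by
  intro N
  induction N with
  | zero =>
    intro lam w _ _
    refine ⟨fun _ => ?_, fun _ => ?_⟩
    · rw [Subsingleton.elim (pick lam w) 0]
      exact Matrix.PosSemidef.zero
    · exact ⟨fun _ => 0, differentiableOn_const _, fun _ _ => by simp, fun i => i.elim0⟩
  | succ n ih =>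
    intro lam w hlam hinj
    by_cases hw : ∀ i, ‖w i‖ ≤ 1
    · rcases (hw 0).eq_or_lt with h | h
      · exact extremal hlam h
      · have e0 : ∀ a, bl a a = 0 := by intro a; simp [bl]
        have hl' : ∀ i, ‖bl (lam 0) (lam i)‖ < 1 := fun i => norm_bl_lt (hlam 0) (hlam i)
        have hne : ∀ i : Fin n, bl (lam 0) (lam i.succ) ≠ 0 := fun i => by
          refine div_ne_zero (sub_ne_zero.mpr fun h => ?_) (den_ne (hlam 0) (hlam _).le)
          exact Fin.succ_ne_zero i (hinj h)
        have hinj' : Function.Injective fun i : Fin n => bl (lam 0) (lam i.succ) := by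
          intro i j hij
          have := congrArg (bl (-lam 0)) hij
          simp only [bl_inv (hlam 0) (hlam _).le] at this
          exact Fin.succ_injective _ (hinj this)
        rw [← interp_bl_iff (hlam 0) h hlam hw, ← psd_bl_iff (hlam 0) h hlam hw,
          interp_schur hl' (e0 _) (e0 _) hne, psd_schur hl' (e0 _) (e0 _) hne]
        exact ih _ _ (fun i => hl' _) hinj'
    · refine ⟨fun ⟨φ, _, h2, h3⟩ => ?_, fun h => ?_⟩
      · exact absurd (fun i => h3 i ▸ h2 _ (mem_ball_zero_iff.mpr (hlam i))) hw
      · exact absurd (norm_le_of_psd hlam h) hw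

end PickAux

/-- **Pick's interpolation theorem on the disk.** Given distinct points `λ₁, …, λ_N ∈ 𝔻`
and targets `w₁, …, w_N ∈ ℂ`, there is an analytic `φ : 𝔻 → ℂ` with `sup_𝔻 |φ| ≤ 1` and
`φ(λᵢ) = wᵢ` if and only if the Pick matrix `[(1 - wᵢw̄ⱼ)/(1 - λᵢλ̄ⱼ)]` is positive
semi-definite. -/
theorem pick_theorem_disk {N : ℕ} (lam : Fin N → ℂ) (w : Fin N → ℂ)
    (hlam : ∀ i, lam i ∈ ball (0 : ℂ) 1) (hdist : Function.Injective lam) :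
    (∃ φ : ℂ → ℂ, DifferentiableOn ℂ φ (ball (0 : ℂ) 1) ∧
      (∀ z ∈ ball (0 : ℂ) 1, ‖φ z‖ ≤ 1) ∧ ∀ i, φ (lam i) = w i) ↔
    (Matrix.of fun i j : Fin N =>
        (1 - w i * starRingEnd ℂ (w j)) / (1 - lam i * starRingEnd ℂ (lam j))).PosSemidef := by
  exact PickAux.main lam w (fun i => mem_ball_zero_iff.mp (hlam i)) hdist
end

section
/- (Pick interpolation on the bidisk) Let λ₁,…,λ_N be points of 𝔻² and let w₁,…,w_N ∈ ℂ. There exists an analytic function φ : 𝔻² → ℂ with sup_{𝔻²}|φ| ≤ 1 and φ(λ_i) = w_i for i = 1,…,N if and only if there exist positive semi-definite N×N matrices Γ¹ and Γ² such that for all i,j: 1 − w_i w̄_j = (1 − λ_i¹ λ̄_j¹) Γ¹_{ij} + (1 − λ_i² λ̄_j²) Γ²_{ij}. -/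
open Matrix
open scoped ComplexOrder

theorem pbd_pos_avg {ι : Type*} [Fintype ι] (k : ι → ι → ℂ → ℂ) (z : ι → ℂ)
    (hz : ∀ i, ‖z i‖ < 1)
    (hk : ∀ i j, DifferentiableOn ℂ (k i j) (Metric.closedBall 0 1))
    (hpos : ∀ ζ : ℂ, ‖ζ‖ = 1 → 0 ≤ (∑ i, ∑ j,
      starRingEnd ℂ ((ζ - z i)⁻¹) * (ζ - z j)⁻¹ * k i j ζ).re) :
    0 ≤ (∑ i, ∑ j, k i j (z j) / (1 - starRingEnd ℂ (z i) * z j)).re := by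
  have hne : ∀ i, ∀ ζ : ℂ, ‖ζ‖ ≤ 1 → 1 - starRingEnd ℂ (z i) * ζ ≠ 0 := by
    intro i ζ hζ h
    have h1 : starRingEnd ℂ (z i) * ζ = 1 := (sub_eq_zero.mp h).symm
    have h2 := congrArg norm h1
    rw [norm_mul, RCLike.norm_conj, norm_one] at h2
    nlinarith [norm_nonneg (z i), norm_nonneg ζ, hz i]
  have hne2 : ∀ i, ∀ ζ : ℂ, ‖ζ‖ = 1 → ζ - z i ≠ 0 := by
    intro i ζ hζ h
    have : ζ = z i := sub_eq_zero.mp h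
    have := hz i
    simp_all
  -- the analytic numerators
  set K : ι → ι → ℂ → ℂ := fun i j ζ => k i j ζ / (1 - starRingEnd ℂ (z i) * ζ) with hK
  have hKd : ∀ i j, DifferentiableOn ℂ (K i j) (Metric.closedBall 0 1) := by
    intro i j
    refine (hk i j).div (by fun_prop) ?_
    intro ζ hζ
    exact hne i ζ (by simpa using hζ)
  have hcau : ∀ i j, (∮ ζ in C(0, 1), (ζ - z j)⁻¹ • K i j ζ) =
      (2 * Real.pi * Complex.I : ℂ) * K i j (z j) := by
    intro i j
    have hd : DiffContOnCl ℂ (K i j) (Metric.ball 0 1) := by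
      apply DifferentiableOn.diffContOnCl
      rw [closure_ball _ one_ne_zero]
      exact hKd i j
    have := hd.circleIntegral_sub_inv_smul (w := z j) (by simpa using hz j)
    simpa [smul_eq_mul] using this
  have hci : ∀ i j, CircleIntegrable (fun ζ => (ζ - z j)⁻¹ • K i j ζ) 0 1 := by
    intro i j
    apply ContinuousOn.circleIntegrable zero_le_one
    have : ContinuousOn (K i j) (Metric.sphere 0 1) :=
      (hKd i j).continuousOn.mono Metric.sphere_subset_closedBall
    refine ContinuousOn.smul (ContinuousOn.inv₀ (continuousOn_id.sub continuousOn_const) ?_) this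
    intro ζ hζ
    exact hne2 j ζ (by simpa using hζ)
  have hsum : (∮ ζ in C(0, 1), ∑ i, ∑ j, (ζ - z j)⁻¹ • K i j ζ) =
      (2 * Real.pi * Complex.I : ℂ) * ∑ i, ∑ j, K i j (z j) := by
    rw [circleIntegral.integral_fun_sum]
    · rw [Finset.mul_sum]
      refine Finset.sum_congr rfl fun i _ => ?_
      rw [circleIntegral.integral_fun_sum]
      · rw [Finset.mul_sum]
        exact Finset.sum_congr rfl fun j _ => hcau i j
      · intro j _; exact hci i j
    · intro i _
      exact CircleIntegrable.fun_sum _ fun j _ => hci i j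
  set S : ℂ → ℂ := fun ζ => ∑ i, ∑ j,
      starRingEnd ℂ ((ζ - z i)⁻¹) * (ζ - z j)⁻¹ * k i j ζ with hS
  have hSeq : ∀ ζ : ℂ, ‖ζ‖ = 1 → ζ * (∑ i, ∑ j, (ζ - z j)⁻¹ • K i j ζ) = S ζ := by
    intro ζ hζ
    rw [hS, Finset.mul_sum]
    refine Finset.sum_congr rfl fun i _ => ?_
    rw [Finset.mul_sum]
    refine Finset.sum_congr rfl fun j _ => ?_
    have h1 : starRingEnd ℂ ((ζ - z i)⁻¹) = ζ / (1 - starRingEnd ℂ (z i) * ζ) := by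
      have hcz : starRingEnd ℂ ζ * ζ = 1 := by
        rw [Complex.conj_mul', hζ]; norm_num
      have h3 : starRingEnd ℂ ζ - starRingEnd ℂ (z i) ≠ 0 := by
        rw [← map_sub]
        exact (map_ne_zero _).mpr (hne2 i ζ hζ)
      rw [map_inv₀, map_sub, inv_eq_iff_eq_inv, inv_div]
      have hζ0 : ζ ≠ 0 := by rintro rfl; simp at hζ
      rw [eq_div_iff hζ0, ← hcz]; ring
    rw [h1]
    simp only [hK, smul_eq_mul]
    ring
  have hInt : (∫ θ in (0:ℝ)..2 * Real.pi, S (circleMap 0 1 θ)) =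
      (2 * Real.pi : ℝ) * ∑ i, ∑ j, K i j (z j) := by
    have h1 : (∮ ζ in C(0, 1), ∑ i, ∑ j, (ζ - z j)⁻¹ • K i j ζ) =
        Complex.I * ∫ θ in (0:ℝ)..2 * Real.pi, S (circleMap 0 1 θ) := by
      rw [circleIntegral, ← intervalIntegral.integral_const_mul]
      congr 1
      ext θ
      rw [deriv_circleMap, smul_eq_mul, ← hSeq _ (by simp)]
      ring
    rw [hsum] at h1
    have := mul_left_cancel₀ Complex.I_ne_zero
      (show Complex.I * _ = Complex.I * ((2 * Real.pi : ℝ) * ∑ i, ∑ j, K i j (z j)) by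
        rw [← h1]; push_cast; ring)
    exact this
  have hScont : Continuous fun θ : ℝ => S (circleMap 0 1 θ) := by
    have hk' : ∀ i j, Continuous fun θ : ℝ => k i j (circleMap 0 1 θ) := by
      intro i j
      exact (hk i j).continuousOn.comp_continuous (continuous_circleMap 0 1)
        (fun θ => by simp)
    have hi : ∀ i, Continuous fun θ : ℝ => (circleMap 0 1 θ - z i)⁻¹ := by
      intro i
      exact ((continuous_circleMap 0 1).sub continuous_const).inv₀
        (fun θ => hne2 i _ (by simp))
    simp only [hS]
    refine continuous_finsetSum _ fun i _ => continuous_finsetSum _ fun j _ => ?_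
    exact ((Complex.continuous_conj.comp (hi i)).mul (hi j)).mul (hk' i j)
  have hre : 0 ≤ (∫ θ in (0:ℝ)..2 * Real.pi, S (circleMap 0 1 θ)).re := by
    have : (∫ θ in (0:ℝ)..2 * Real.pi, S (circleMap 0 1 θ)).re =
        ∫ θ in (0:ℝ)..2 * Real.pi, (S (circleMap 0 1 θ)).re := by
      have := Complex.reCLM.intervalIntegral_comp_comm (hScont.intervalIntegrable 
        (μ := MeasureTheory.volume) 0 (2 * Real.pi))
      simpa using this.symm
    rw [this]
    apply intervalIntegral.integral_nonneg (by positivity)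
    intro θ _
    exact hpos _ (by simp)
  rw [hInt, Complex.re_ofReal_mul] at hre
  exact nonneg_of_mul_nonneg_right hre (by positivity)

theorem pbd_root_sum (M : ℕ) (ω : ℂ) (hω : IsPrimitiveRoot ω M) (e : ℕ) :
    ∑ m ∈ Finset.range M, (ω ^ m) ^ e = if M ∣ e then (M : ℂ) else 0 := by
  have h1 : ∀ m, (ω ^ m) ^ e = (ω ^ e) ^ m := fun m => by rw [← pow_mul, ← pow_mul, mul_comm]
  simp only [h1]
  split_ifs with h
  · rw [(hω.pow_eq_one_iff_dvd e).mpr h]; simp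
  · have hne : ω ^ e ≠ 1 := fun hh => h ((hω.pow_eq_one_iff_dvd e).mp hh)
    rw [geom_sum_eq hne, ← pow_mul, mul_comm, pow_mul, hω.pow_eq_one]; simp

/-- discrete Fourier coefficients -/
noncomputable def pbdCoef (M : ℕ) (f : ℂ → ℂ) (n : ℕ) : ℂ :=
  (M : ℂ)⁻¹ * ∑ m ∈ Finset.range M, f (Complex.exp (2 * Real.pi * Complex.I / M) ^ m) *
    (Complex.exp (2 * Real.pi * Complex.I / M) ^ m) ^ (M - n)

theorem pbd_monomial (M : ℕ) (hM : 0 < M) (k : ℕ) (x : ℂ) :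
    ∑ n ∈ Finset.range M, pbdCoef M (fun y => y ^ k) n * x ^ n = x ^ (k % M) := by
  have hω := Complex.isPrimitiveRoot_exp M hM.ne'
  have hM0 : (M : ℂ) ≠ 0 := by exact_mod_cast hM.ne'
  rw [Finset.sum_eq_single (k % M)]
  · have : pbdCoef M (fun y => y ^ k) (k % M) = 1 := by
      unfold pbdCoef
      simp only [← pow_add]
      rw [pbd_root_sum M _ hω, if_pos, inv_mul_cancel₀ hM0]
      have h1 := Nat.mod_lt k hM
      have h2 := Nat.div_add_mod k M
      refine ⟨k / M + 1, ?_⟩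
      rw [mul_add, mul_one]; omega
    rw [this, one_mul]
  · intro n hn hne
    have hn := Finset.mem_range.mp hn
    have : pbdCoef M (fun y => y ^ k) n = 0 := by
      unfold pbdCoef
      simp only [← pow_add]
      rw [pbd_root_sum M _ hω, if_neg, mul_zero]
      rintro ⟨q, hq⟩
      apply hne
      have h3 : k + M = n + M * q := by omega
      have h4 := congrArg (· % M) h3
      simp only [Nat.add_mod_right, Nat.add_mul_mod_self_left] at h4
      rw [h4, Nat.mod_eq_of_lt hn]
    rw [this, zero_mul]
  · intro h; exact absurd (Finset.mem_range.mpr (Nat.mod_lt k hM)) h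

theorem pbd_fold (f : ℂ → ℂ) (ρ r : ℝ) (hr : 1 < r) (hrρ : r < ρ)
    (hf : DifferentiableOn ℂ f (Metric.ball 0 ρ)) (hb : ∀ x ∈ Metric.ball (0:ℂ) ρ, ‖f x‖ ≤ 1)
    (M : ℕ) (hM : 0 < M) (x : ℂ) (hx : ‖x‖ ≤ 1) :
    ‖∑ n ∈ Finset.range M, pbdCoef M f n * x ^ n - f x‖ ≤
      2 * ((r⁻¹) ^ M * (1 - r⁻¹)⁻¹) := by
  have hr0 : 0 < r := by linarith
  have hq0 : 0 ≤ r⁻¹ := by positivity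
  have hq1 : r⁻¹ < 1 := inv_lt_one_of_one_lt₀ hr
  set c : ℕ → ℂ := fun n => ((n.factorial : ℂ))⁻¹ * iteratedDeriv n f 0 with hc
  have hcb : ∀ n, ‖c n‖ ≤ (r⁻¹) ^ n := by
    intro n
    have hd : DiffContOnCl ℂ f (Metric.ball 0 r) := by
      apply DifferentiableOn.diffContOnCl
      rw [closure_ball _ hr0.ne']
      exact hf.mono (Metric.closedBall_subset_ball hrρ)
    have := Complex.norm_iteratedDeriv_le_of_forall_mem_sphere_norm_le n hr0 hd (C := 1)
      (fun z hz => hb z (Metric.sphere_subset_closedBall.trans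
        (Metric.closedBall_subset_ball hrρ) hz))
    rw [hc]
    simp only [norm_mul, norm_inv, Complex.norm_natCast]
    have hfac : (0:ℝ) < n.factorial := by exact_mod_cast n.factorial_pos
    rw [inv_mul_le_iff₀ hfac]
    simpa [div_eq_mul_inv] using this
  have hser : ∀ y : ℂ, ‖y‖ ≤ 1 → HasSum (fun n => c n * y ^ n) (f y) := by
    intro y hy
    have := Complex.hasSum_taylorSeries_on_ball hf (z := y) (by simp; linarith)
    refine (congrArg (fun F : ℕ → ℂ => HasSum F _) (funext fun n => ?_)).mp this
    simp only [hc, smul_eq_mul, sub_zero]; ring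
  -- the aliased polynomial as a series
  have hal : HasSum (fun k => c k * x ^ (k % M))
      (∑ n ∈ Finset.range M, pbdCoef M f n * x ^ n) := by
    have hcoef : ∀ n, HasSum (fun k => c k * pbdCoef M (fun y => y ^ k) n) (pbdCoef M f n) := by
      intro n
      unfold pbdCoef
      have h1 : ∀ m ∈ Finset.range M, HasSum
          (fun k => c k * (Complex.exp (2 * Real.pi * Complex.I / M) ^ m) ^ k *
            (Complex.exp (2 * Real.pi * Complex.I / M) ^ m) ^ (M - n))
          (f (Complex.exp (2 * Real.pi * Complex.I / M) ^ m) *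
            (Complex.exp (2 * Real.pi * Complex.I / M) ^ m) ^ (M - n)) := by
        intro m _
        refine (hser _ ?_).mul_right _
        have := (Complex.isPrimitiveRoot_exp M hM.ne').norm'_eq_one hM.ne'
        rw [norm_pow, this, one_pow]
      have h2 := (hasSum_sum h1).mul_left ((M : ℂ)⁻¹)
      refine (congrArg (fun F : ℕ → ℂ => HasSum F _) (funext fun k => ?_)).mp h2
      rw [Finset.mul_sum, Finset.mul_sum, Finset.mul_sum]
      refine Finset.sum_congr rfl fun m _ => ?_
      ring
    have h3 := hasSum_sum (s := Finset.range M) fun n _ => (hcoef n).mul_right (x ^ n)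
    refine (congrArg (fun F : ℕ → ℂ => HasSum F _) (funext fun k => ?_)).mp h3
    rw [← pbd_monomial M hM k x, Finset.mul_sum]
    refine Finset.sum_congr rfl fun m _ => ?_
    ring
  have hdiff := hal.sub (hser x hx)
  have hzero : ∀ k ∈ Finset.range M, c k * x ^ (k % M) - c k * x ^ k = 0 := by
    intro k hk
    rw [Nat.mod_eq_of_lt (Finset.mem_range.mp hk), sub_self]
  have hshift : HasSum (fun k => c (k + M) * x ^ ((k + M) % M) - c (k + M) * x ^ (k + M))
      (∑ n ∈ Finset.range M, pbdCoef M f n * x ^ n - f x) := by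
    have := (hasSum_nat_add_iff' (f := fun k => c k * x ^ (k % M) - c k * x ^ k) M).mpr hdiff
    rwa [Finset.sum_eq_zero hzero, sub_zero] at this
  have hgeo : HasSum (fun k => 2 * ((r⁻¹) ^ M * (r⁻¹) ^ k)) (2 * ((r⁻¹) ^ M * (1 - r⁻¹)⁻¹)) :=
    ((hasSum_geometric_of_lt_one hq0 hq1).mul_left _).mul_left _
  rw [← hshift.tsum_eq]
  refine tsum_of_norm_bounded hgeo fun k => ?_
  have hp : ∀ e : ℕ, ‖x ^ e‖ ≤ 1 := fun e => by
    rw [norm_pow]; exact pow_le_one₀ (norm_nonneg _) hx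
  rw [← mul_sub, norm_mul, mul_comm]
  have h5 : ‖x ^ ((k + M) % M) - x ^ (k + M)‖ ≤ 2 := by
    refine (norm_sub_le _ _).trans ?_
    linarith [hp ((k + M) % M), hp (k + M)]
  have h6 := hcb (k + M)
  rw [← pow_add, add_comm M k]
  exact mul_le_mul h5 h6 (norm_nonneg _) (by norm_num)

/-- Two families with the same Gram matrix are related by an isometry. -/
theorem pbd_lurking {ι E : Type*} [Fintype ι] [NormedAddCommGroup E] [InnerProductSpace ℂ E]
    [FiniteDimensional ℂ E] (x y : ι → E) (h : ∀ i j, inner ℂ (x i) (x j) = inner ℂ (y i) (y j)) :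
    ∃ V : E →ₗᵢ[ℂ] E, ∀ i, V (x i) = y i := by
  classical
  set X := Fintype.linearCombination ℂ x with hX
  set Y := Fintype.linearCombination ℂ y with hY
  have hn : ∀ c, ‖Y c‖ = ‖X c‖ := by
    intro c
    have : inner ℂ (Y c) (Y c) = inner ℂ (X c) (X c) := by
      simp only [hX, hY, Fintype.linearCombination_apply, sum_inner, inner_sum, inner_smul_left,
        inner_smul_right, h]
    rw [inner_self_eq_norm_sq_to_K, inner_self_eq_norm_sq_to_K] at this
    have h2 : ‖Y c‖ ^ 2 = ‖X c‖ ^ 2 := by exact_mod_cast this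
    exact (pow_left_inj₀ (norm_nonneg _) (norm_nonneg _) two_ne_zero).mp h2
  obtain ⟨g, hg⟩ := X.rangeRestrict.exists_rightInverse_of_surjective X.range_rangeRestrict
  have hg' : ∀ s : LinearMap.range X, X (g s) = s := fun s =>
    congrArg Subtype.val (LinearMap.congr_fun hg s)
  let L : LinearMap.range X →ₗᵢ[ℂ] E :=
    { toLinearMap := Y.comp g
      norm_map' := fun s => by
        simp only [LinearMap.comp_apply]
        rw [hn, hg']; rfl }
  refine ⟨L.extend, fun i => ?_⟩
  have hxi : X (Pi.single i 1) = x i := by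
    simp [hX, Fintype.linearCombination_apply_single]
  have hyi : Y (Pi.single i 1) = y i := by
    simp [hY, Fintype.linearCombination_apply_single]
  have h1 := L.extend_apply ⟨x i, ⟨_, hxi⟩⟩
  rw [show L.extend (x i) = L ⟨x i, ⟨_, hxi⟩⟩ from h1]
  have h2 : Y (g ⟨x i, ⟨_, hxi⟩⟩) - Y (Pi.single i 1) = 0 := by
    rw [← map_sub, ← norm_eq_zero, hn, map_sub, hg', hxi]
    simp
  rw [← hyi]
  exact sub_eq_zero.mp h2

theorem pbd_transfer {ι Ea Eb : Type*} [Fintype ι] [NormedAddCommGroup Ea] [InnerProductSpace ℂ Ea]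
    [FiniteDimensional ℂ Ea] [NormedAddCommGroup Eb] [InnerProductSpace ℂ Eb]
    [FiniteDimensional ℂ Eb] (a : ι → Ea) (b : ι → Eb) (x z : ι → ℂ) (hz : ∀ i, ‖z i‖ < 1)
    (hspan : Submodule.span ℂ (Set.range a) = ⊤)
    (hgram : ∀ i j, starRingEnd ℂ (z i) * z j * inner ℂ (a i) (a j) + inner ℂ (b i) (b j) =
      inner ℂ (a i) (a j) + starRingEnd ℂ (x i) * x j * inner ℂ (b i) (b j)) :
    ∃ Ψ : ℂ → (Eb →L[ℂ] Eb), (∀ ζ, ‖ζ‖ ≤ 1 → DifferentiableAt ℂ Ψ ζ) ∧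
      (∀ ζ, ‖ζ‖ = 1 → Ψ ζ ∈ unitary (Eb →L[ℂ] Eb)) ∧ ∀ i, Ψ (z i) (b i) = x i • b i := by
  have : CompleteSpace Ea := FiniteDimensional.complete ℂ Ea
  have : CompleteSpace Eb := FiniteDimensional.complete ℂ Eb
  obtain ⟨V, hV⟩ := pbd_lurking (E := WithLp 2 (Ea × Eb))
    (fun i => WithLp.toLp 2 (z i • a i, b i)) (fun i => WithLp.toLp 2 (a i, x i • b i))
    (by
      intro i j
      simp only [WithLp.prod_inner_apply, inner_smul_left, inner_smul_right]
      linear_combination hgram i j)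
  let P : Ea × Eb →L[ℂ] Ea × Eb :=
    (WithLp.prodContinuousLinearEquiv 2 ℂ Ea Eb).toContinuousLinearMap ∘L
      V.toContinuousLinearMap ∘L (WithLp.prodContinuousLinearEquiv 2 ℂ Ea Eb).symm.toContinuousLinearMap
  have hPV : ∀ s t, P (s, t) = (V (WithLp.toLp 2 (s, t))).ofLp := fun s t => rfl
  have hP : ∀ s t, ‖(P (s, t)).1‖ ^ 2 + ‖(P (s, t)).2‖ ^ 2 = ‖s‖ ^ 2 + ‖t‖ ^ 2 := by
    intro s t
    have h1 := V.norm_map (WithLp.toLp 2 (s, t))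
    have h2 := WithLp.prod_norm_sq_eq_of_L2 (V (WithLp.toLp 2 (s, t)))
    have h3 := WithLp.prod_norm_sq_eq_of_L2 (WithLp.toLp 2 (s, t) : WithLp 2 (Ea × Eb))
    rw [h1, h3] at h2
    exact h2.symm
  have hPi : ∀ i, P (z i • a i, b i) = (a i, x i • b i) := by
    intro i
    rw [hPV, hV]
  set A : Ea →L[ℂ] Ea := ContinuousLinearMap.fst ℂ Ea Eb ∘L P ∘L ContinuousLinearMap.inl ℂ Ea Eb
  set B : Eb →L[ℂ] Ea := ContinuousLinearMap.fst ℂ Ea Eb ∘L P ∘L ContinuousLinearMap.inr ℂ Ea Eb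
  set C : Ea →L[ℂ] Eb := ContinuousLinearMap.snd ℂ Ea Eb ∘L P ∘L ContinuousLinearMap.inl ℂ Ea Eb
  set D : Eb →L[ℂ] Eb := ContinuousLinearMap.snd ℂ Ea Eb ∘L P ∘L ContinuousLinearMap.inr ℂ Ea Eb
  have hPsplit : ∀ s t, P (s, t) = (A s + B t, C s + D t) := by
    intro s t
    have : (s, t) = ((s, 0) : Ea × Eb) + (0, t) := by simp
    rw [this, map_add]
    rfl
  have hAC : ∀ s, ‖A s‖ ^ 2 + ‖C s‖ ^ 2 = ‖s‖ ^ 2 := by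
    intro s
    have := hP s 0
    rw [hPsplit] at this
    simpa using this
  have hgen : ∀ i, a i = z i • A (a i) + B (b i) ∧ x i • b i = z i • C (a i) + D (b i) := by
    intro i
    have := hPi i
    rw [hPsplit] at this
    have h1 := congrArg Prod.fst this
    have h2 := congrArg Prod.snd this
    simp only [map_smul] at h1 h2
    exact ⟨h1.symm, h2.symm⟩
  -- no unimodular eigenvectors
  have hinj : ∀ ζ : ℂ, ‖ζ‖ ≤ 1 → ∀ s, s = ζ • A s → s = 0 := by
    intro ζ hζ s hs
    by_contra hs0
    have hspos : 0 < ‖s‖ := norm_pos_iff.mpr hs0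
    have h1 : ‖s‖ = ‖ζ‖ * ‖A s‖ := by
      conv_lhs => rw [hs]
      exact norm_smul _ _
    have h2 := hAC s
    have hAle : ‖A s‖ ≤ ‖s‖ := by
      apply le_of_sq_le_sq _ (norm_nonneg _)
      nlinarith [sq_nonneg ‖C s‖]
    have hζ1 : ‖ζ‖ = 1 := by
      apply le_antisymm hζ
      by_contra hlt
      push Not at hlt
      nlinarith [norm_nonneg ζ, norm_nonneg (A s)]
    have hAeq : ‖A s‖ = ‖s‖ := by rw [h1, hζ1, one_mul]
    have hC0 : C s = 0 := by
      rw [hAeq] at h2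
      have : ‖C s‖ ^ 2 = 0 := by linarith
      exact norm_eq_zero.mp (pow_eq_zero_iff two_ne_zero |>.mp this)
    have horth : ∀ i, inner ℂ s (a i) = 0 := by
      intro i
      have h3 := V.inner_map_map (WithLp.toLp 2 (ζ • s, (0:Eb))) (WithLp.toLp 2 (z i • a i, b i))
      have h4 : V (WithLp.toLp 2 (ζ • s, (0:Eb))) = WithLp.toLp 2 (s, (0:Eb)) := by
        have := hPsplit (ζ • s) 0
        rw [hPV] at this
        apply (WithLp.equiv 2 (Ea × Eb)).injective
        show (V (WithLp.toLp 2 (ζ • s, (0:Eb)))).ofLp = (s, 0)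
        rw [this, map_zero, map_zero, add_zero, add_zero, map_smul, map_smul, hC0, ← hs, smul_zero]
      rw [h4, hV] at h3
      simp only [WithLp.prod_inner_apply, inner_smul_left, inner_smul_right, inner_zero_left,
        add_zero] at h3
      -- inner s a = conj ζ * z * inner s a
      have h5 : (1 - starRingEnd ℂ ζ * z i) * inner ℂ s (a i) = 0 := by linear_combination h3
      rcases mul_eq_zero.mp h5 with h6 | h6
      · exfalso
        have h7 := congrArg norm (sub_eq_zero.mp h6)
        rw [norm_mul, RCLike.norm_conj, hζ1, norm_one, one_mul] at h7
        linarith [hz i]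
      · exact h6
    have hall : ∀ t ∈ Submodule.span ℂ (Set.range a), inner ℂ s t = 0 := by
      intro t ht
      induction ht using Submodule.span_induction with
      | mem t ht => obtain ⟨i, rfl⟩ := ht; exact horth i
      | zero => simp
      | add t u _ _ h1 h2 => rw [inner_add_right, h1, h2, add_zero]
      | smul c t _ h => rw [inner_smul_right, h, mul_zero]
    exact hs0 (inner_self_eq_zero.mp (hall s (by rw [hspan]; trivial)))
  have hunit : ∀ ζ : ℂ, ‖ζ‖ ≤ 1 → IsUnit (1 - ζ • A) := by
    intro ζ hζ
    rw [ContinuousLinearMap.isUnit_iff_isUnit_toLinearMap, LinearMap.isUnit_iff_ker_eq_bot,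
      LinearMap.ker_eq_bot']
    intro s hs
    apply hinj ζ hζ s
    have : s - ζ • A s = 0 := by simpa using hs
    exact sub_eq_zero.mp this
  let al : ℂ → (Eb →L[ℂ] Ea) := fun ζ => (Ring.inverse (1 - ζ • A)) ∘L B
  have hal : ∀ ζ : ℂ, ‖ζ‖ ≤ 1 → ∀ t, al ζ t = A (ζ • al ζ t) + B t := by
    intro ζ hζ t
    have h1 : (1 - ζ • A) (al ζ t) = B t := by
      have := Ring.mul_inverse_cancel _ (hunit ζ hζ)
      have h2 := congrArg (fun T : Ea →L[ℂ] Ea => T (B t)) this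
      simpa [al] using h2
    have h3 : al ζ t - ζ • A (al ζ t) = B t := by simpa using h1
    rw [map_smul, ← h3]; abel
  refine ⟨fun ζ => D + ζ • (C ∘L al ζ), ?_, ?_, ?_⟩
  · intro ζ hζ
    have h1 : DifferentiableAt ℂ (fun ζ : ℂ => Ring.inverse (1 - ζ • A)) ζ := by
      have h2 : DifferentiableAt ℂ (fun ζ : ℂ => 1 - ζ • A) ζ := by fun_prop
      exact (differentiableAt_inverse (𝕜 := ℂ) (hunit ζ hζ)).comp ζ h2
    have h3 : DifferentiableAt ℂ al ζ := h1.clm_comp (differentiableAt_const B)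
    exact (differentiableAt_const D).add
      (differentiableAt_id.smul ((differentiableAt_const C).clm_comp h3))
  · intro ζ hζ
    have hnorm : ∀ t, ‖(D + ζ • (C ∘L al ζ)) t‖ = ‖t‖ := by
      intro t
      have h1 := hP (ζ • al ζ t) t
      rw [hPsplit, ← hal ζ hζ.le t] at h1
      have h2 : (D + ζ • (C ∘L al ζ)) t = C (ζ • al ζ t) + D t := by
        simp [add_comm]
      rw [h2]
      simp only [norm_smul, hζ, one_mul] at h1
      exact (pow_left_inj₀ (norm_nonneg _) (norm_nonneg _) two_ne_zero).mp (by linarith)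
    set T := D + ζ • (C ∘L al ζ)
    have h1 : star T * T = 1 := (ContinuousLinearMap.norm_map_iff_adjoint_comp_self T).mp hnorm
    refine ⟨h1, ?_⟩
    have h2 : ((star T).toLinearMap * T.toLinearMap : Module.End ℂ Eb) = 1 := by
      ext t
      exact congrArg (fun S : Eb →L[ℂ] Eb => S t) h1
    have h3 := mul_eq_one_comm.mp h2
    ext t
    exact LinearMap.congr_fun h3 t
  · intro i
    have hzi := (hz i).le
    have h1 : al (z i) (b i) = a i := by
      apply sub_eq_zero.mp
      apply hinj (z i) hzi
      have h2 := hal (z i) hzi (b i)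
      have h3 := (hgen i).1
      rw [map_smul] at h2
      rw [map_sub, smul_sub]
      nth_rewrite 1 [h2]
      nth_rewrite 1 [h3]
      abel
    show D (b i) + z i • C (al (z i) (b i)) = _
    rw [h1, (hgen i).2, add_comm]

theorem pbd_tangential {ι Eb : Type*} [Fintype ι] [NormedAddCommGroup Eb] [InnerProductSpace ℂ Eb]
    [FiniteDimensional ℂ Eb] (b : ι → Eb) (x z : ι → ℂ) (hz : ∀ i, ‖z i‖ < 1)
    (Ψ : ℂ → (Eb →L[ℂ] Eb)) (hΨd : ∀ ζ, ‖ζ‖ ≤ 1 → DifferentiableAt ℂ Ψ ζ)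
    (hΨu : letI : CompleteSpace Eb := FiniteDimensional.complete ℂ Eb
      ∀ ζ, ‖ζ‖ = 1 → Ψ ζ ∈ unitary (Eb →L[ℂ] Eb))
    (hΨe : ∀ i, Ψ (z i) (b i) = x i • b i)
    (M : ℕ) (c : ℕ → ℂ → ℂ) (hc : ∀ n, ∀ ζ, ‖ζ‖ ≤ 1 → DifferentiableAt ℂ (c n) ζ)
    (hcb : ∀ ζ y : ℂ, ‖ζ‖ = 1 → ‖y‖ = 1 → ‖∑ n ∈ Finset.range M, c n ζ * y ^ n‖ ≤ 1)
    (v : ι → ℂ) (hv : ∀ i, v i = ∑ n ∈ Finset.range M, c n (z i) * x i ^ n) :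
    0 ≤ (∑ i, ∑ j, (inner ℂ (b i) (b j) * (1 - starRingEnd ℂ (v i) * v j)) /
      (1 - starRingEnd ℂ (z i) * z j)).re := by
  have : CompleteSpace Eb := FiniteDimensional.complete ℂ Eb
  set F : ℂ → (Eb →L[ℂ] Eb) := fun ζ => ∑ n ∈ Finset.range M, c n ζ • Ψ ζ ^ n with hF
  have hFd : ∀ ζ, ‖ζ‖ ≤ 1 → DifferentiableAt ℂ F ζ := by
    intro ζ hζ
    simp only [hF]
    exact DifferentiableAt.fun_sum fun n _ => (hc n ζ hζ).smul ((hΨd ζ hζ).pow n)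
  have hFn : ∀ ζ, ‖ζ‖ = 1 → ‖F ζ‖ ≤ 1 := by
    intro ζ hζ
    have hu := hΨu ζ hζ
    have hnor : IsStarNormal (Ψ ζ) := ⟨by
      rw [Commute, SemiconjBy, hu.1, hu.2]⟩
    set q : Polynomial ℂ := ∑ n ∈ Finset.range M, Polynomial.C (c n ζ) * Polynomial.X ^ n with hq
    have h1 : F ζ = Polynomial.aeval (Ψ ζ) q := by
      simp [hF, hq, Algebra.smul_def]
    rw [h1, ← cfc_polynomial q (Ψ ζ) hnor]
    refine norm_cfc_le zero_le_one ?_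
    intro y hy
    have hy1 : ‖y‖ = 1 := by
      simpa using spectrum.subset_circle_of_unitary hu hy
    have := hcb ζ y hζ hy1
    simpa [hq, Polynomial.eval_finsetSum] using this
  have hFe : ∀ i, F (z i) (b i) = v i • b i := by
    intro i
    have hp : ∀ n : ℕ, (Ψ (z i) ^ n) (b i) = x i ^ n • b i := by
      intro n
      induction n with
      | zero => simp
      | succ n ih =>
        rw [pow_succ, mul_apply_eq_comp, hΨe, map_smul, ih, smul_smul, pow_succ, mul_comm]
    simp only [hF, _root_.sum_apply, _root_.smul_apply, hp, smul_smul, hv,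
      Finset.sum_smul]
  have key := pbd_pos_avg (fun i j ζ => inner ℂ (b i) (b j) - 2 * inner ℂ (v i • b i) (F ζ (b j))
    + inner ℂ (v i • b i) (v j • b j)) z hz ?_ ?_
  · convert key using 6 with i _ j _
    rw [hFe]
    simp only [inner_smul_left, inner_smul_right]
    ring
  · intro i j ζ hζ
    have h1 := hFd ζ (by simpa using hζ)
    have h2 : DifferentiableAt ℂ (fun ζ => inner ℂ (v i • b i) (F ζ (b j))) ζ := by
      have h3 : DifferentiableAt ℂ (fun ζ => F ζ (b j)) ζ := h1.clm_apply (differentiableAt_const _)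
      exact ((innerSL ℂ (v i • b i)).differentiableAt).comp ζ h3
    exact (((differentiableAt_const _).sub (h2.const_mul 2)).add
      (differentiableAt_const _)).differentiableWithinAt
  · intro ζ hζ
    set g := ∑ j, (ζ - z j)⁻¹ • b j with hg
    set h := ∑ j, (ζ - z j)⁻¹ • v j • b j with hh
    have h1 : ∑ i, ∑ j, starRingEnd ℂ ((ζ - z i)⁻¹) * (ζ - z j)⁻¹ *
        (inner ℂ (b i) (b j) - 2 * inner ℂ (v i • b i) (F ζ (b j))
          + inner ℂ (v i • b i) (v j • b j)) =
        inner ℂ g g - 2 * inner ℂ h (F ζ g) + inner ℂ h h := by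
      rw [Finset.sum_comm]
      simp only [hg, hh, map_sum, map_smul, sum_inner, inner_sum,
        Finset.mul_sum, ← Finset.sum_sub_distrib, ← Finset.sum_add_distrib]
      refine Finset.sum_congr rfl fun i _ => Finset.sum_congr rfl fun j _ => ?_
      simp only [inner_smul_left, inner_smul_right]
      ring
    rw [h1]
    have h2 : ‖F ζ g‖ ≤ ‖g‖ := by
      have := (F ζ).le_opNorm g
      nlinarith [hFn ζ hζ, norm_nonneg g]
    have h3 : (inner ℂ h (F ζ g)).re ≤ ‖h‖ * ‖F ζ g‖ :=
      (Complex.re_le_norm _).trans (norm_inner_le_norm _ _)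
    rw [inner_self_eq_norm_sq_to_K, inner_self_eq_norm_sq_to_K]
    have h4 : (((‖g‖ : ℝ) : ℂ) ^ 2 - 2 * inner ℂ h (F ζ g) + ((‖h‖ : ℝ) : ℂ) ^ 2).re =
        ‖g‖ ^ 2 - 2 * (inner ℂ h (F ζ g)).re + ‖h‖ ^ 2 := by
      simp [← Complex.ofReal_pow]
    refine le_of_le_of_eq ?_ h4.symm
    nlinarith [norm_nonneg h, norm_nonneg g, norm_nonneg (F ζ g), sq_nonneg (‖h‖ - ‖g‖)]

/-- A positive semidefinite matrix is a Gram matrix. -/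
theorem pbd_gram {N : ℕ} {P : Matrix (Fin N) (Fin N) ℂ} (hP : P.PosSemidef) :
    ∃ u : Fin N → EuclideanSpace ℂ (Fin N), ∀ i j, P i j = inner ℂ (u i) (u j) := by
  obtain ⟨B, hB⟩ : ∃ B : Matrix (Fin N) (Fin N) ℂ, P = Bᴴ * B := by
    open scoped MatrixOrder in
    exact CStarAlgebra.nonneg_iff_eq_star_mul_self.mp hP.nonneg
  refine ⟨fun i => WithLp.toLp 2 (fun k => B k i), fun i j => ?_⟩
  rw [hB, Matrix.mul_apply, PiLp.inner_apply]
  refine Finset.sum_congr rfl fun k _ => ?_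
  simp [Matrix.conjTranspose_apply, mul_comm]

/-- The entries of a positive semidefinite matrix are bounded by the diagonal. -/
theorem pbd_entry_bound {N : ℕ} {P : Matrix (Fin N) (Fin N) ℂ} (hP : P.PosSemidef) (K : ℝ)
    (hK : ∀ i, (P i i).re ≤ K) (i j : Fin N) : ‖P i j‖ ≤ K := by
  obtain ⟨u, hu⟩ := pbd_gram hP
  have h1 : ∀ i, ‖u i‖ ^ 2 ≤ K := by
    intro i
    have := hK i
    rw [hu, inner_self_eq_norm_sq_to_K] at this
    have h2 : (((‖u i‖ : ℝ) : ℂ) ^ 2).re = ‖u i‖ ^ 2 := by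
      rw [← Complex.ofReal_pow]; exact Complex.ofReal_re _
    have h3 : (((‖u i‖ : ℝ) : ℂ) ^ 2).re ≤ K := this
    linarith
  rw [hu]
  have := norm_inner_le_norm (𝕜 := ℂ) (u i) (u j)
  nlinarith [h1 i, h1 j, sq_nonneg (‖u i‖ - ‖u j‖)]

theorem pbd_diag_nonneg {N : ℕ} {P : Matrix (Fin N) (Fin N) ℂ} (hP : P.PosSemidef) (i : Fin N) :
    0 ≤ (P i i).re := by
  have := hP.diag_nonneg (i := i)
  exact (Complex.nonneg_iff.mp this).1

/-- The cone of decomposable matrices. -/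
def pbdCone {N : ℕ} (lam : Fin N → ℂ × ℂ) : Set (Fin N → Fin N → ℂ) :=
  {M | ∃ Γ₁ Γ₂ : Matrix (Fin N) (Fin N) ℂ, Γ₁.PosSemidef ∧ Γ₂.PosSemidef ∧
      ∀ i j, M i j =
        (1 - (lam i).1 * starRingEnd ℂ ((lam j).1)) * Γ₁ i j +
        (1 - (lam i).2 * starRingEnd ℂ ((lam j).2)) * Γ₂ i j}

theorem pbd_psd_closed {N : ℕ} (G : ℕ → Matrix (Fin N) (Fin N) ℂ) (H : Matrix (Fin N) (Fin N) ℂ)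
    (hG : ∀ n, (G n).PosSemidef)
    (hlim : ∀ i j, Filter.Tendsto (fun n => G n i j) Filter.atTop (nhds (H i j))) :
    H.PosSemidef := by
  refine Matrix.PosSemidef.of_dotProduct_mulVec_nonneg ?_ ?_
  · ext i j
    have h1 := (Complex.continuous_conj.tendsto _).comp (hlim j i)
    refine tendsto_nhds_unique h1 ((hlim i j).congr fun n => ?_)
    exact ((hG n).1.apply i j).symm
  · intro x
    have h1 : Filter.Tendsto (fun n => star x ⬝ᵥ (G n *ᵥ x)) Filter.atTop
        (nhds (star x ⬝ᵥ (H *ᵥ x))) := by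
      simp only [dotProduct, mulVec]
      exact tendsto_finsetSum _ fun i _ => Filter.Tendsto.const_mul _
        (tendsto_finsetSum _ fun j _ => (hlim i j).mul_const _)
    exact ge_of_tendsto' h1 fun n => (hG n).dotProduct_mulVec_nonneg x

theorem pbd_cone_bound {N : ℕ} (lam : Fin N → ℂ × ℂ)
    (δ : ℝ) (hδ : 0 < δ) (hδl : ∀ i, δ ≤ 1 - ‖(lam i).1‖ ^ 2 ∧ δ ≤ 1 - ‖(lam i).2‖ ^ 2)
    (M : Fin N → Fin N → ℂ) (L : ℝ) (hL : ‖M‖ ≤ L)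
    (Γ₁ Γ₂ : Matrix (Fin N) (Fin N) ℂ) (h1 : Γ₁.PosSemidef) (h2 : Γ₂.PosSemidef)
    (h : ∀ i j, M i j =
        (1 - (lam i).1 * starRingEnd ℂ ((lam j).1)) * Γ₁ i j +
        (1 - (lam i).2 * starRingEnd ℂ ((lam j).2)) * Γ₂ i j) :
    (∀ i j, ‖Γ₁ i j‖ ≤ L / δ) ∧ (∀ i j, ‖Γ₂ i j‖ ≤ L / δ) := by
  have hd : ∀ i, (Γ₁ i i).re ≤ L / δ ∧ (Γ₂ i i).re ≤ L / δ := by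
    intro i
    have h3 := congrArg Complex.re (h i i)
    rw [Complex.mul_conj', Complex.mul_conj'] at h3
    have h4 : ∀ (t : ℝ) (g : ℂ), ((1 - ((t : ℝ) : ℂ) ^ 2) * g).re = (1 - t ^ 2) * g.re := by
      intro t g
      rw [← Complex.ofReal_pow, ← Complex.ofReal_one, ← Complex.ofReal_sub, Complex.re_ofReal_mul]
    rw [Complex.add_re, h4, h4] at h3
    have h5 : (M i i).re ≤ L := (Complex.re_le_norm _).trans
      (((norm_le_pi_norm (M i) i).trans (norm_le_pi_norm M i)).trans hL)
    have g1 := pbd_diag_nonneg h1 i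
    have g2 := pbd_diag_nonneg h2 i
    obtain ⟨d1, d2⟩ := hδl i
    rw [le_div_iff₀ hδ, le_div_iff₀ hδ]
    constructor <;> nlinarith [mul_le_mul_of_nonneg_right d1 g1, mul_le_mul_of_nonneg_right d2 g2,
      mul_nonneg hδ.le g1, mul_nonneg hδ.le g2]
  exact ⟨pbd_entry_bound h1 _ fun i => (hd i).1, pbd_entry_bound h2 _ fun i => (hd i).2⟩

theorem pbd_cone_closed {N : ℕ} (lam : Fin N → ℂ × ℂ) (hlam : ∀ i, lam i ∈ Bidisk) :
    IsClosed (pbdCone lam) := by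
  obtain ⟨δ, hδ, hδl⟩ : ∃ δ : ℝ, 0 < δ ∧
      ∀ i, δ ≤ 1 - ‖(lam i).1‖ ^ 2 ∧ δ ≤ 1 - ‖(lam i).2‖ ^ 2 := by
    have hpos : ∀ i, 0 < min (1 - ‖(lam i).1‖ ^ 2) (1 - ‖(lam i).2‖ ^ 2) := by
      intro i
      obtain ⟨l1, l2⟩ := hlam i
      refine lt_min ?_ ?_ <;> nlinarith [norm_nonneg (lam i).1, norm_nonneg (lam i).2]
    have hex : ∀ s : Finset (Fin N), ∃ δ : ℝ, 0 < δ ∧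
        ∀ i ∈ s, δ ≤ 1 - ‖(lam i).1‖ ^ 2 ∧ δ ≤ 1 - ‖(lam i).2‖ ^ 2 := by
      intro s
      induction s using Finset.induction_on with
      | empty => exact ⟨1, one_pos, by simp⟩
      | insert i s _ ih =>
        obtain ⟨δ, hδ, h⟩ := ih
        refine ⟨min δ (min (1 - ‖(lam i).1‖ ^ 2) (1 - ‖(lam i).2‖ ^ 2)), lt_min hδ (hpos i), ?_⟩
        intro j hj
        rcases Finset.mem_insert.mp hj with rfl | hj
        · exact ⟨(min_le_right _ _).trans (min_le_left _ _),
            (min_le_right _ _).trans (min_le_right _ _)⟩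
        · exact ⟨(min_le_left _ _).trans (h j hj).1, (min_le_left _ _).trans (h j hj).2⟩
    obtain ⟨δ, hδ, h⟩ := hex Finset.univ
    exact ⟨δ, hδ, fun i => h i (Finset.mem_univ i)⟩
  apply IsSeqClosed.isClosed
  intro M M' hM hlim
  choose G1 G2 hG1 hG2 hG using hM
  obtain ⟨L, hL⟩ : ∃ L, ∀ n, ‖M n‖ ≤ L := by
    obtain ⟨L, hL⟩ := (Metric.isBounded_range_of_tendsto M hlim).exists_norm_le
    exact ⟨L, fun n => hL _ ⟨n, rfl⟩⟩
  have hL0 : 0 ≤ L := (norm_nonneg _).trans (hL 0)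
  let K : ℕ → (Fin N → Fin N → ℂ) × (Fin N → Fin N → ℂ) := fun n =>
    (fun i j => G1 n i j, fun i j => G2 n i j)
  have hbd : ∀ n, K n ∈
      Metric.closedBall (0 : (Fin N → Fin N → ℂ) × (Fin N → Fin N → ℂ)) (L / δ) := by
    intro n
    obtain ⟨b1, b2⟩ := pbd_cone_bound lam δ hδ hδl (M n) L (hL n) _ _ (hG1 n) (hG2 n) (hG n)
    have hq : 0 ≤ L / δ := by positivity
    rw [mem_closedBall_zero_iff, Prod.norm_def, max_le_iff]
    exact ⟨(pi_norm_le_iff_of_nonneg hq).mpr fun i => (pi_norm_le_iff_of_nonneg hq).mpr (b1 i),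
      (pi_norm_le_iff_of_nonneg hq).mpr fun i => (pi_norm_le_iff_of_nonneg hq).mpr (b2 i)⟩
  obtain ⟨⟨H1, H2⟩, -, σ, hσ, hconv⟩ := (isCompact_closedBall _ _).tendsto_subseq hbd
  have hc1 : ∀ i j, Filter.Tendsto (fun n => G1 (σ n) i j) Filter.atTop (nhds (H1 i j)) := by
    intro i j
    have h1 := (continuous_fst.tendsto _).comp hconv
    exact tendsto_pi_nhds.mp (tendsto_pi_nhds.mp h1 i) j
  have hc2 : ∀ i j, Filter.Tendsto (fun n => G2 (σ n) i j) Filter.atTop (nhds (H2 i j)) := by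
    intro i j
    have h1 := (continuous_snd.tendsto _).comp hconv
    exact tendsto_pi_nhds.mp (tendsto_pi_nhds.mp h1 i) j
  refine ⟨H1, H2, pbd_psd_closed (fun n => G1 (σ n)) H1 (fun n => hG1 _) hc1,
    pbd_psd_closed (fun n => G2 (σ n)) H2 (fun n => hG2 _) hc2, fun i j => ?_⟩
  have h1 : Filter.Tendsto (fun n => M (σ n) i j) Filter.atTop (nhds (M' i j)) :=
    tendsto_pi_nhds.mp (tendsto_pi_nhds.mp (hlim.comp hσ.tendsto_atTop) i) j
  refine tendsto_nhds_unique h1 ?_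
  refine (((hc1 i j).const_mul _).add ((hc2 i j).const_mul _)).congr fun n => ?_
  exact (hG (σ n) i j).symm

theorem pbd_psd_smul {N : ℕ} {P : Matrix (Fin N) (Fin N) ℂ} (hP : P.PosSemidef) (t : ℝ)
    (ht : 0 ≤ t) : ((t : ℂ) • P).PosSemidef :=
  hP.smul (by exact_mod_cast ht)

theorem pbd_cone_smul {N : ℕ} (lam : Fin N → ℂ × ℂ) (M) (hM : M ∈ pbdCone lam) (t : ℝ)
    (ht : 0 ≤ t) : t • M ∈ pbdCone lam := by
  obtain ⟨G1, G2, h1, h2, h⟩ := hM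
  refine ⟨(t : ℂ) • G1, (t : ℂ) • G2, pbd_psd_smul h1 t ht, pbd_psd_smul h2 t ht, fun i j => ?_⟩
  simp only [Pi.smul_apply, Matrix.smul_apply, smul_eq_mul, h, Complex.real_smul]
  ring

theorem pbd_cone_convex {N : ℕ} (lam : Fin N → ℂ × ℂ) : Convex ℝ (pbdCone lam) := by
  intro M hM M' hM' s t hs ht _
  obtain ⟨G1, G2, h1, h2, h⟩ := pbd_cone_smul lam M hM s hs
  obtain ⟨G1', G2', h1', h2', h'⟩ := pbd_cone_smul lam M' hM' t ht
  refine ⟨G1 + G1', G2 + G2', h1.add h1', h2.add h2', fun i j => ?_⟩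
  rw [Pi.add_apply, Pi.add_apply, h, h', Matrix.add_apply, Matrix.add_apply]
  ring

/-- Duality: membership in the cone from nonnegativity against all dual matrices. -/
theorem pbd_dual {N : ℕ} (lam : Fin N → ℂ × ℂ) (hlam : ∀ i, lam i ∈ Bidisk)
    (M : Fin N → Fin N → ℂ) (hMh : ∀ i j, starRingEnd ℂ (M i j) = M j i)
    (hdual : ∀ R : Matrix (Fin N) (Fin N) ℂ,
      (Matrix.of fun i j => (1 - starRingEnd ℂ (lam i).1 * (lam j).1) * R i j).PosSemidef →
      (Matrix.of fun i j => (1 - starRingEnd ℂ (lam i).2 * (lam j).2) * R i j).PosSemidef →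
      0 ≤ (∑ i, ∑ j, R i j * M j i).re) : M ∈ pbdCone lam := by
  classical
  by_contra hnot
  obtain ⟨f, u, hf, hu⟩ := RCLike.geometric_hahn_banach_closed_point (𝕜 := ℂ)
    (pbd_cone_convex lam) (pbd_cone_closed lam hlam) hnot
  have h0 : (0 : Fin N → Fin N → ℂ) ∈ pbdCone lam :=
    ⟨0, 0, Matrix.PosSemidef.zero, Matrix.PosSemidef.zero, by simp⟩
  have hu0 : 0 < u := by simpa using hf 0 h0
  have hneg : ∀ A ∈ pbdCone lam, (f A).re ≤ 0 := by
    intro A hA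
    by_contra hpos
    push Not at hpos
    have h1 := hf _ (pbd_cone_smul lam A hA (u / (f A).re) (by positivity))
    have h2 : f ((u / (f A).re) • A) = ((u / (f A).re : ℝ) : ℂ) * f A := by
      have : (u / (f A).re) • A = ((u / (f A).re : ℝ) : ℂ) • A := by
        ext i j; simp
      rw [this, map_smul, smul_eq_mul]
    rw [h2] at h1
    have h3 : (((u / (f A).re : ℝ) : ℂ) * f A).re = u := by
      rw [Complex.re_ofReal_mul]; field_simp
    exact absurd (lt_of_eq_of_lt h3.symm h1) (lt_irrefl _)
  -- matrix of the functional
  set q : Fin N → Fin N → ℂ := fun i j => - f (Pi.single i (Pi.single j 1)) with hq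
  have hfq : ∀ A, f A = - ∑ i, ∑ j, A i j * q i j := by
    intro A
    have h1 : A = ∑ i, ∑ j, A i j • (Pi.single i (Pi.single j 1) : Fin N → Fin N → ℂ) := by
      ext k l
      rw [Finset.sum_apply, Finset.sum_apply, Finset.sum_eq_single k]
      · rw [Finset.sum_apply, Finset.sum_apply, Finset.sum_eq_single l]
        · simp
        · intro m _ hm; simp [hm.symm]
        · simp
      · intro m _ hm
        rw [Finset.sum_apply, Finset.sum_apply]
        refine Finset.sum_eq_zero fun n _ => ?_
        simp [hm.symm]
      · simp
    conv_lhs => rw [h1]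
    simp only [map_sum, map_smul, smul_eq_mul, hq, mul_neg, Finset.sum_neg_distrib, neg_neg]
  set R : Matrix (Fin N) (Fin N) ℂ := Matrix.of fun i j => (starRingEnd ℂ (q i j) + q j i) / 2
    with hR
  have hRh : ∀ i j, starRingEnd ℂ (R i j) = R j i := by
    intro i j
    simp only [hR, Matrix.of_apply, map_div₀, map_add, Complex.conj_conj, map_ofNat]
    ring
  have hpair : ∀ A : Fin N → Fin N → ℂ, (∀ i j, starRingEnd ℂ (A i j) = A j i) →
      (∑ i, ∑ j, R i j * A j i).re = - (f A).re := by
    intro A hA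
    have h1 : ∑ i, ∑ j, R i j * A j i =
        (starRingEnd ℂ (∑ i, ∑ j, A i j * q i j) + ∑ i, ∑ j, A i j * q i j) / 2 := by
      have h2 : starRingEnd ℂ (∑ i, ∑ j, A i j * q i j) =
          ∑ i, ∑ j, starRingEnd ℂ (q i j) * A j i := by
        simp only [map_sum, map_mul, hA, mul_comm]
      have h3 : ∑ i, ∑ j, A i j * q i j = ∑ i, ∑ j, q j i * A j i := by
        rw [Finset.sum_comm]
        simp only [mul_comm]
      rw [h2, h3, ← Finset.sum_add_distrib, Finset.sum_div]
      refine Finset.sum_congr rfl fun i _ => ?_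
      rw [← Finset.sum_add_distrib, Finset.sum_div]
      refine Finset.sum_congr rfl fun j _ => ?_
      simp only [hR, Matrix.of_apply]; ring
    rw [h1, hfq]
    have h4 : ∀ c : ℂ, ((starRingEnd ℂ c + c) / 2).re = c.re := by
      intro c
      rw [add_comm, Complex.add_conj]; simp
    rw [h4]; simp
  have hpsd : ∀ y : Fin N → ℂ,
      (∀ v : Fin N → ℂ, (fun i j => (1 - y i * starRingEnd ℂ (y j)) *
        (v i * starRingEnd ℂ (v j))) ∈ pbdCone lam) →
      (Matrix.of fun i j => (1 - starRingEnd ℂ (y i) * y j) * R i j).PosSemidef := by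
    intro y hy
    have hherm : (Matrix.of fun i j => (1 - starRingEnd ℂ (y i) * y j) * R i j).IsHermitian := by
      ext i j
      simp only [Matrix.conjTranspose_apply, Matrix.of_apply, RCLike.star_def, map_mul, map_sub,
        map_one, hRh, Complex.conj_conj]
      ring
    refine Matrix.PosSemidef.of_dotProduct_mulVec_nonneg hherm fun v => ?_
    rw [Complex.nonneg_iff]
    refine ⟨?_, (hherm.im_star_dotProduct_mulVec_self v).symm⟩
    have h1 := hneg _ (hy v)
    have h2 := hpair (fun i j => (1 - y i * starRingEnd ℂ (y j)) * (v i * starRingEnd ℂ (v j)))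
      (by intro i j; simp only [map_mul, map_sub, map_one, Complex.conj_conj]; ring)
    have h3 : star v ⬝ᵥ ((Matrix.of fun i j => (1 - starRingEnd ℂ (y i) * y j) * R i j) *ᵥ v) =
        ∑ i, ∑ j, R i j * ((1 - y j * starRingEnd ℂ (y i)) * (v j * starRingEnd ℂ (v i))) := by
      simp only [dotProduct, mulVec, Finset.mul_sum, Matrix.of_apply, Pi.star_apply,
        RCLike.star_def]
      refine Finset.sum_congr rfl fun i _ => Finset.sum_congr rfl fun j _ => ?_
      ring
    rw [h3, h2]; linarith
  have hvv : ∀ v : Fin N → ℂ,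
      (Matrix.of fun i j => v i * starRingEnd ℂ (v j) : Matrix (Fin N) (Fin N) ℂ).PosSemidef :=
    fun v => Matrix.posSemidef_vecMulVec_self_star v
  have hfin := hdual R
    (hpsd (fun i => (lam i).1) fun v => ⟨_, 0, hvv v, Matrix.PosSemidef.zero, by simp⟩)
    (hpsd (fun i => (lam i).2) fun v => ⟨0, _, Matrix.PosSemidef.zero, hvv v, by simp⟩)
  rw [hpair M hMh] at hfin
  have : u < (f M).re := hu
  linarith

/-- Necessity, dual form. -/
theorem pbd_nec {N : ℕ} (lam : Fin N → ℂ × ℂ) (w : Fin N → ℂ)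
    (hlam : ∀ i, lam i ∈ Bidisk) (φ : ℂ × ℂ → ℂ) (hφ : DifferentiableOn ℂ φ Bidisk)
    (hb : ∀ p ∈ Bidisk, ‖φ p‖ ≤ 1) (hw : ∀ i, φ (lam i) = w i)
    (R : Matrix (Fin N) (Fin N) ℂ)
    (hR1 : (Matrix.of fun i j => (1 - starRingEnd ℂ (lam i).1 * (lam j).1) * R i j).PosSemidef)
    (hR2 : (Matrix.of fun i j => (1 - starRingEnd ℂ (lam i).2 * (lam j).2) * R i j).PosSemidef) :
    0 ≤ (∑ i, ∑ j, R i j * (1 - starRingEnd ℂ (w i) * w j)).re := by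
  obtain ⟨a', ha'⟩ := pbd_gram hR1
  obtain ⟨b, hbg⟩ := pbd_gram hR2
  simp only [Matrix.of_apply] at ha' hbg
  have hopen : IsOpen Bidisk := by
    have : Bidisk = {p : ℂ × ℂ | ‖p.1‖ < 1} ∩ {p : ℂ × ℂ | ‖p.2‖ < 1} := rfl
    rw [this]
    exact (isOpen_lt (by fun_prop) (by fun_prop)).inter (isOpen_lt (by fun_prop) (by fun_prop))
  have hz : ∀ i, ‖(lam i).2‖ < 1 := fun i => (hlam i).2
  have hx : ∀ i, ‖(lam i).1‖ < 1 := fun i => (hlam i).1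
  set Sa := Submodule.span ℂ (Set.range a') with hSa
  let a : Fin N → Sa := fun i => ⟨a' i, Submodule.subset_span ⟨i, rfl⟩⟩
  have hspan : Submodule.span ℂ (Set.range a) = ⊤ :=
    (Submodule.span_range_subtype_eq_top_iff Sa _).mpr rfl
  obtain ⟨Ψ, hΨd, hΨu, hΨe⟩ := pbd_transfer a b (fun i => (lam i).1) (fun i => (lam i).2) hz hspan
    (by
      intro i j
      have h1 : inner ℂ (a i) (a j) = inner ℂ (a' i) (a' j) := rfl
      rw [h1, ← ha', ← hbg]
      ring)
  set Φ : (Fin N → ℂ) → ℝ := fun v =>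
    (∑ i, ∑ j, (inner ℂ (b i) (b j) * (1 - starRingEnd ℂ (v i) * v j)) /
      (1 - starRingEnd ℂ ((lam i).2) * (lam j).2)).re with hΦ
  have hΦc : Continuous Φ := by
    refine Complex.continuous_re.comp (continuous_finsetSum _ fun i _ =>
      continuous_finsetSum _ fun j _ => ?_)
    refine Continuous.div_const ?_ _
    refine continuous_const.mul (continuous_const.sub ?_)
    exact (Complex.continuous_conj.comp (continuous_apply i)).mul (continuous_apply j)
  -- positivity at the dilated functions
  have hs : ∀ s : ℝ, 0 < s → s < 1 → 0 ≤ Φ (fun i => φ ((s : ℂ) * (lam i).1, (s : ℂ) * (lam i).2)) := by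
    intro s hs0 hs1
    have hρ : 1 < s⁻¹ := (one_lt_inv₀ hs0).mpr hs1
    set r : ℝ := (1 + s⁻¹) / 2 with hr
    have hr1 : 1 < r := by rw [hr]; linarith
    have hrρ : r < s⁻¹ := by rw [hr]; linarith
    have hr0 : 0 < r := by linarith
    have hq1 : r⁻¹ < 1 := inv_lt_one_of_one_lt₀ hr1
    have hin : ∀ y : ℂ, ‖y‖ < s⁻¹ → ‖(s : ℂ) * y‖ < 1 := by
      intro y hy
      rw [norm_mul, Complex.norm_real, Real.norm_of_nonneg hs0.le]
      calc s * ‖y‖ < s * s⁻¹ := by gcongr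
        _ = 1 := mul_inv_cancel₀ hs0.ne'
    set f : ℂ → ℂ → ℂ := fun ζ y => φ ((s : ℂ) * y, (s : ℂ) * ζ) with hf
    set ε : ℕ → ℝ := fun M => 2 * ((r⁻¹) ^ M * (1 - r⁻¹)⁻¹) with hε
    have hε0 : ∀ M, 0 ≤ ε M := by
      intro M
      have : 0 ≤ (1 - r⁻¹)⁻¹ := inv_nonneg.mpr (by linarith)
      simp only [hε]; positivity
    have hεl : Filter.Tendsto ε Filter.atTop (nhds 0) := by
      have h1 := tendsto_pow_atTop_nhds_zero_of_lt_one (inv_nonneg.mpr hr0.le) hq1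
      have h2 := (h1.mul_const ((1 - r⁻¹)⁻¹)).const_mul 2
      rw [zero_mul, mul_zero] at h2
      exact h2
    have happ : ∀ M, 0 < M → ∀ ζ y : ℂ, ‖ζ‖ ≤ 1 → ‖y‖ ≤ 1 →
        ‖∑ n ∈ Finset.range M, pbdCoef M (f ζ) n * y ^ n - f ζ y‖ ≤ ε M := by
      intro M hM ζ y hζ hy
      refine pbd_fold (f ζ) s⁻¹ r hr1 hrρ ?_ ?_ M hM y hy
      · refine hφ.comp (by fun_prop) ?_
        intro y hy
        exact ⟨hin y (by simpa using hy), hin ζ (by linarith)⟩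
      · intro y hy
        exact hb _ ⟨hin y (by simpa using hy), hin ζ (by linarith)⟩
    set v : ℕ → Fin N → ℂ := fun M i => ∑ n ∈ Finset.range M,
      (((1 + ε M : ℝ) : ℂ)⁻¹ * pbdCoef M (f (lam i).2) n) * (lam i).1 ^ n with hv
    have hvM : ∀ M, 0 < M → 0 ≤ Φ (v M) := by
      intro M hM
      have hε1 : 0 < 1 + ε M := by linarith [hε0 M]
      refine pbd_tangential b (fun i => (lam i).1) (fun i => (lam i).2) hz Ψ hΨd hΨu hΨe M
        (fun n ζ => ((1 + ε M : ℝ) : ℂ)⁻¹ * pbdCoef M (f ζ) n) ?_ ?_ (v M) (fun i => rfl)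
      · intro n ζ hζ
        refine DifferentiableAt.const_mul ?_ _
        unfold pbdCoef
        refine DifferentiableAt.const_mul ?_ _
        refine DifferentiableAt.fun_sum fun m _ => ?_
        refine DifferentiableAt.mul_const ?_ _
        have hmem : ((s : ℂ) * Complex.exp (2 * Real.pi * Complex.I / M) ^ m, (s : ℂ) * ζ) ∈ Bidisk := by
          refine ⟨hin _ ?_, hin _ (by linarith)⟩
          rw [norm_pow, (Complex.isPrimitiveRoot_exp M hM.ne').norm'_eq_one hM.ne', one_pow]
          exact hρ
        have h1 : DifferentiableAt ℂ φ _ := hφ.differentiableAt (hopen.mem_nhds hmem)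
        exact h1.comp ζ (f := fun ζ : ℂ =>
          ((s : ℂ) * Complex.exp (2 * Real.pi * Complex.I / M) ^ m, (s : ℂ) * ζ)) (by fun_prop)
      · intro ζ y hζ hy
        have h1 := happ M hM ζ y hζ.le hy.le
        have h2 : ‖f ζ y‖ ≤ 1 := hb _ ⟨hin y (by linarith), hin ζ (by linarith)⟩
        have h3 : ‖∑ n ∈ Finset.range M, pbdCoef M (f ζ) n * y ^ n‖ ≤ 1 + ε M := by
          have := norm_add_le (∑ n ∈ Finset.range M, pbdCoef M (f ζ) n * y ^ n - f ζ y) (f ζ y)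
          rw [sub_add_cancel] at this
          linarith
        simp only [mul_assoc]
        rw [← Finset.mul_sum, norm_mul, norm_inv, Complex.norm_real, Real.norm_of_nonneg hε1.le,
          inv_mul_le_iff₀ hε1, mul_one]
        exact h3
    have hvl : Filter.Tendsto v Filter.atTop
        (nhds (fun i => φ ((s : ℂ) * (lam i).1, (s : ℂ) * (lam i).2))) := by
      rw [tendsto_pi_nhds]
      intro i
      have h1 : Filter.Tendsto (fun M => ∑ n ∈ Finset.range M,
          pbdCoef M (f (lam i).2) n * (lam i).1 ^ n) Filter.atTop (nhds (f (lam i).2 (lam i).1)) := by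
        rw [tendsto_iff_norm_sub_tendsto_zero]
        refine squeeze_zero' (Filter.Eventually.of_forall fun _ => norm_nonneg _) ?_ hεl
        filter_upwards [Filter.eventually_gt_atTop 0] with M hM
        exact happ M hM _ _ (hz i).le (hx i).le
      have h2 : Filter.Tendsto (fun M => ((1 + ε M : ℝ) : ℂ)⁻¹) Filter.atTop (nhds 1) := by
        have h3 : Filter.Tendsto (fun M => 1 + ε M) Filter.atTop (nhds 1) := by
          simpa using hεl.const_add 1
        have h4 := (Complex.continuous_ofReal.tendsto _).comp h3
        simpa using h4.inv₀ (by simp)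
      have h5 := h2.mul h1
      rw [one_mul] at h5
      refine h5.congr fun M => ?_
      simp only [hv, Finset.mul_sum, mul_assoc]
    refine ge_of_tendsto ((hΦc.tendsto _).comp hvl) ?_
    filter_upwards [Filter.eventually_gt_atTop 0] with M hM
    exact hvM M hM
  have hlim : Filter.Tendsto (fun s : ℝ => Φ (fun i => φ ((s : ℂ) * (lam i).1, (s : ℂ) * (lam i).2)))
      (nhdsWithin 1 (Set.Iio 1)) (nhds (Φ w)) := by
    refine (hΦc.tendsto w).comp ?_
    rw [tendsto_pi_nhds]
    intro i
    have h1 : ContinuousAt φ (lam i) := (hφ.differentiableAt (hopen.mem_nhds (hlam i))).continuousAt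
    have h2 : Filter.Tendsto (fun s : ℝ => ((s : ℂ) * (lam i).1, (s : ℂ) * (lam i).2))
        (nhds 1) (nhds (lam i)) := by
      have : Continuous (fun s : ℝ => ((s : ℂ) * (lam i).1, (s : ℂ) * (lam i).2)) := by fun_prop
      simpa using this.tendsto 1
    rw [← hw i]
    exact (h1.tendsto.comp h2).mono_left nhdsWithin_le_nhds
  have hfin : 0 ≤ Φ w := by
    refine ge_of_tendsto hlim ?_
    filter_upwards [Ioo_mem_nhdsLT (show (0:ℝ) < 1 from one_pos)] with s hs'
    exact hs s hs'.1 hs'.2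
  convert hfin using 2
  refine Finset.sum_congr rfl fun i _ => Finset.sum_congr rfl fun j _ => ?_
  have hne : 1 - starRingEnd ℂ ((lam i).2) * (lam j).2 ≠ 0 := by
    intro h
    have h2 := congrArg norm (sub_eq_zero.mp h)
    rw [norm_mul, RCLike.norm_conj, norm_one] at h2
    nlinarith [norm_nonneg (lam i).2, norm_nonneg (lam j).2, hz i, hz j]
  rw [← hbg, eq_div_iff hne]
  ring

/-- Abstract realization: an isometric colligation yields a bounded analytic interpolant. -/
theorem pbd_realize {N : ℕ} (lam : Fin N → ℂ × ℂ) (w : Fin N → ℂ)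
    (hlam : ∀ i, lam i ∈ Bidisk) {F : Type*} [NormedAddCommGroup F] [InnerProductSpace ℂ F]
    [FiniteDimensional ℂ F] (P : ℂ × F →L[ℂ] ℂ × F)
    (hP : ∀ s t, ‖(P (s, t)).1‖ ^ 2 + ‖(P (s, t)).2‖ ^ 2 = ‖s‖ ^ 2 + ‖t‖ ^ 2)
    (p1 p2 : F →L[ℂ] F) (Δ : ℂ × ℂ → (F →L[ℂ] F)) (hΔdef : Δ = fun z => z.1 • p1 + z.2 • p2)
    (hΔn : ∀ z ∈ Bidisk, ∀ f : F, ‖Δ z f‖ ^ 2 ≤ ‖f‖ ^ 2 ∧ (f ≠ 0 → ‖Δ z f‖ ^ 2 < ‖f‖ ^ 2))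
    (b : Fin N → F) (hb : ∀ i, P (1, Δ (lam i) (b i)) = (w i, b i)) :
    ∃ φ : ℂ × ℂ → ℂ, DifferentiableOn ℂ φ Bidisk ∧
      (∀ z ∈ Bidisk, ‖φ z‖ ≤ 1) ∧ ∀ i, φ (lam i) = w i := by
  have : CompleteSpace F := FiniteDimensional.complete ℂ F
  set A : ℂ →L[ℂ] ℂ := ContinuousLinearMap.fst ℂ ℂ F ∘L P ∘L ContinuousLinearMap.inl ℂ ℂ F
  set B : F →L[ℂ] ℂ := ContinuousLinearMap.fst ℂ ℂ F ∘L P ∘L ContinuousLinearMap.inr ℂ ℂ F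
  set C : ℂ →L[ℂ] F := ContinuousLinearMap.snd ℂ ℂ F ∘L P ∘L ContinuousLinearMap.inl ℂ ℂ F
  set D : F →L[ℂ] F := ContinuousLinearMap.snd ℂ ℂ F ∘L P ∘L ContinuousLinearMap.inr ℂ ℂ F
  have hPsplit : ∀ s t, P (s, t) = (A s + B t, C s + D t) := by
    intro s t
    have : (s, t) = ((s, 0) : ℂ × F) + (0, t) := by simp
    rw [this, map_add]
    rfl
  have hDle : ∀ f, ‖D f‖ ^ 2 ≤ ‖f‖ ^ 2 := by
    intro f
    have := hP 0 f
    rw [hPsplit] at this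
    simp only [map_zero, zero_add, norm_zero] at this
    nlinarith [sq_nonneg ‖B f‖]
  have hinj : ∀ z ∈ Bidisk, ∀ f : F, f = D (Δ z f) → f = 0 := by
    intro z hz f hf
    by_contra hf0
    have h3 := (hΔn z hz f).2 hf0
    have h4 := hDle (Δ z f)
    rw [← hf] at h4
    linarith
  have hunit : ∀ z ∈ Bidisk, IsUnit (1 - D ∘L Δ z) := by
    intro z hz
    rw [ContinuousLinearMap.isUnit_iff_isUnit_toLinearMap, LinearMap.isUnit_iff_ker_eq_bot,
      LinearMap.ker_eq_bot']
    intro f hf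
    apply hinj z hz f
    have : f - D (Δ z f) = 0 := by simpa using hf
    exact sub_eq_zero.mp this
  let g : ℂ × ℂ → F := fun z => Ring.inverse (1 - D ∘L Δ z) (C 1)
  have hg : ∀ z ∈ Bidisk, g z = C 1 + D (Δ z (g z)) := by
    intro z hz
    have h3 := congrArg (fun T : F →L[ℂ] F => T (C 1)) (Ring.mul_inverse_cancel _ (hunit z hz))
    have h4 : g z - D (Δ z (g z)) = C 1 := by simpa [g] using h3
    rw [← h4]; abel
  refine ⟨fun z => A 1 + B (Δ z (g z)), ?_, ?_, ?_⟩
  · intro z hz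
    apply DifferentiableAt.differentiableWithinAt
    have hΔd : DifferentiableAt ℂ Δ z := by
      rw [hΔdef]
      exact (differentiableAt_fst.smul_const p1).add (differentiableAt_snd.smul_const p2)
    have h3 : DifferentiableAt ℂ (fun z => 1 - D ∘L Δ z) z :=
      (differentiableAt_const _).sub ((differentiableAt_const D).clm_comp hΔd)
    have h4 : DifferentiableAt ℂ (fun z => Ring.inverse (1 - D ∘L Δ z)) z :=
      DifferentiableAt.comp (g := (Ring.inverse : (F →L[ℂ] F) → (F →L[ℂ] F))) z
        (differentiableAt_inverse (𝕜 := ℂ) (hunit z hz)) h3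
    have h5 : DifferentiableAt ℂ g z := h4.clm_apply (differentiableAt_const _)
    exact (differentiableAt_const _).add (B.differentiableAt.comp z (hΔd.clm_apply h5))
  · intro z hz
    have h3 := hP 1 (Δ z (g z))
    rw [hPsplit, ← hg z hz] at h3
    have h4 := (hΔn z hz (g z)).1
    simp only [norm_one, one_pow] at h3
    have h5 : ‖A 1 + B (Δ z (g z))‖ ^ 2 ≤ 1 := by linarith
    exact (sq_le_one_iff₀ (norm_nonneg _)).mp h5
  · intro i
    have h3 := hb i
    rw [hPsplit] at h3
    have h4 := congrArg Prod.fst h3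
    have h5 := congrArg Prod.snd h3
    simp only at h4 h5
    have h6 : g (lam i) = b i := by
      apply sub_eq_zero.mp
      apply hinj (lam i) (hlam i)
      have h7 := hg (lam i) (hlam i)
      rw [map_sub, map_sub]
      nth_rewrite 1 [h7]
      nth_rewrite 1 [← h5]
      abel
    show A 1 + B (Δ (lam i) (g (lam i))) = w i
    rw [h6, h4]

/-- Sufficiency: the transfer function realization. -/
theorem pbd_suff {N : ℕ} (lam : Fin N → ℂ × ℂ) (w : Fin N → ℂ)
    (hlam : ∀ i, lam i ∈ Bidisk) (Γ₁ Γ₂ : Matrix (Fin N) (Fin N) ℂ) (h1 : Γ₁.PosSemidef)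
    (h2 : Γ₂.PosSemidef) (h : ∀ i j, 1 - w i * starRingEnd ℂ (w j) =
        (1 - (lam i).1 * starRingEnd ℂ ((lam j).1)) * Γ₁ i j +
        (1 - (lam i).2 * starRingEnd ℂ ((lam j).2)) * Γ₂ i j) :
    ∃ φ : ℂ × ℂ → ℂ, DifferentiableOn ℂ φ Bidisk ∧
      (∀ z ∈ Bidisk, ‖φ z‖ ≤ 1) ∧ ∀ i, φ (lam i) = w i := by
  obtain ⟨u, hu⟩ := pbd_gram h1.transpose
  obtain ⟨v, hv⟩ := pbd_gram h2.transpose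
  simp only [Matrix.transpose_apply] at hu hv
  let K := EuclideanSpace ℂ (Fin N)
  let F := WithLp 2 (K × K)
  let x : Fin N → WithLp 2 (ℂ × F) := fun i => WithLp.toLp 2
    (1, (WithLp.toLp 2 ((lam i).1 • u i, (lam i).2 • v i) : F))
  let y : Fin N → WithLp 2 (ℂ × F) := fun i => WithLp.toLp 2
    (w i, (WithLp.toLp 2 (u i, v i) : F))
  obtain ⟨V, hV⟩ := pbd_lurking x y (by
    intro i j
    simp only [x, y, F, WithLp.prod_inner_apply, inner_smul_left, inner_smul_right, ← hu, ← hv,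
      RCLike.inner_apply, map_one]
    linear_combination h j i)
  let P : ℂ × F →L[ℂ] ℂ × F :=
    (WithLp.prodContinuousLinearEquiv 2 ℂ ℂ F).toContinuousLinearMap ∘L
      V.toContinuousLinearMap ∘L (WithLp.prodContinuousLinearEquiv 2 ℂ ℂ F).symm.toContinuousLinearMap
  have hPV : ∀ s t, P (s, t) = (V (WithLp.toLp 2 (s, t))).ofLp := fun s t => rfl
  have hP : ∀ s t, ‖(P (s, t)).1‖ ^ 2 + ‖(P (s, t)).2‖ ^ 2 = ‖s‖ ^ 2 + ‖t‖ ^ 2 := by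
    intro s t
    have h1 := V.norm_map (WithLp.toLp 2 (s, t))
    have h2 := WithLp.prod_norm_sq_eq_of_L2 (V (WithLp.toLp 2 (s, t)))
    have h3 := WithLp.prod_norm_sq_eq_of_L2 (WithLp.toLp 2 (s, t) : WithLp 2 (ℂ × F))
    rw [h1, h3] at h2
    exact h2.symm
  let e := WithLp.prodContinuousLinearEquiv 2 ℂ K K
  let p1 : F →L[ℂ] F := e.symm.toContinuousLinearMap ∘L ContinuousLinearMap.inl ℂ K K ∘L
    ContinuousLinearMap.fst ℂ K K ∘L e.toContinuousLinearMap
  let p2 : F →L[ℂ] F := e.symm.toContinuousLinearMap ∘L ContinuousLinearMap.inr ℂ K K ∘L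
    ContinuousLinearMap.snd ℂ K K ∘L e.toContinuousLinearMap
  let Δ : ℂ × ℂ → (F →L[ℂ] F) := fun z => z.1 • p1 + z.2 • p2
  have hΔ : ∀ z (s t : K), Δ z (WithLp.toLp 2 (s, t)) = WithLp.toLp 2 (z.1 • s, z.2 • t) := by
    intro z s t
    apply (WithLp.equiv 2 (K × K)).injective
    show (z.1 • s, z.1 • (0 : K)) + (z.2 • (0 : K), z.2 • t) = (z.1 • s, z.2 • t)
    simp
  have hΔn : ∀ z ∈ Bidisk, ∀ f : F, ‖Δ z f‖ ^ 2 ≤ ‖f‖ ^ 2 ∧ (f ≠ 0 → ‖Δ z f‖ ^ 2 < ‖f‖ ^ 2) := by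
    intro z hz f
    have h3 : f = WithLp.toLp 2 (f.ofLp.1, f.ofLp.2) := rfl
    have h4 : ‖Δ z f‖ ^ 2 = ‖z.1‖ ^ 2 * ‖f.ofLp.1‖ ^ 2 + ‖z.2‖ ^ 2 * ‖f.ofLp.2‖ ^ 2 := by
      rw [h3, hΔ, WithLp.prod_norm_sq_eq_of_L2]
      show ‖z.1 • f.ofLp.1‖ ^ 2 + ‖z.2 • f.ofLp.2‖ ^ 2 = _
      rw [norm_smul, norm_smul, mul_pow, mul_pow]
    have h5 : ‖f‖ ^ 2 = ‖f.ofLp.1‖ ^ 2 + ‖f.ofLp.2‖ ^ 2 := WithLp.prod_norm_sq_eq_of_L2 f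
    have z1 : ‖z.1‖ ^ 2 < 1 := by nlinarith [hz.1, norm_nonneg z.1]
    have z2 : ‖z.2‖ ^ 2 < 1 := by nlinarith [hz.2, norm_nonneg z.2]
    have q1 := sq_nonneg ‖f.ofLp.1‖
    have q2 := sq_nonneg ‖f.ofLp.2‖
    refine ⟨by rw [h4, h5]; nlinarith, fun hf => ?_⟩
    have h6 : 0 < ‖f‖ ^ 2 := by have := norm_pos_iff.mpr hf; positivity
    rw [h4, h5]
    rw [h5] at h6
    rcases q1.lt_or_eq with q | q
    · nlinarith
    · rw [← q] at h6 ⊢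
      nlinarith
  refine pbd_realize lam w hlam P hP p1 p2 Δ rfl hΔn (fun i => WithLp.toLp 2 (u i, v i)) ?_
  intro i
  show P (1, Δ (lam i) (WithLp.toLp 2 (u i, v i))) = (w i, WithLp.toLp 2 (u i, v i))
  rw [hΔ, hPV]
  exact congrArg WithLp.ofLp (hV i)

/-- **Pick interpolation on the bidisk (Agler).** Given points `λ₁, …, λ_N ∈ 𝔻²` and
targets `w₁, …, w_N ∈ ℂ`, there is an analytic `φ : 𝔻² → ℂ` with `sup_{𝔻²}|φ| ≤ 1` and
`φ(λᵢ) = wᵢ` if and only if there exist positive semi-definite `N × N` matrices `Γ¹, Γ²`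
with `1 - wᵢw̄ⱼ = (1 - λᵢ¹λ̄ⱼ¹) Γ¹ᵢⱼ + (1 - λᵢ²λ̄ⱼ²) Γ²ᵢⱼ` for all `i, j`. -/
theorem pick_theorem_bidisk {N : ℕ} (lam : Fin N → ℂ × ℂ) (w : Fin N → ℂ)
    (hlam : ∀ i, lam i ∈ Bidisk) :
    (∃ φ : ℂ × ℂ → ℂ, DifferentiableOn ℂ φ Bidisk ∧
      (∀ z ∈ Bidisk, ‖φ z‖ ≤ 1) ∧ ∀ i, φ (lam i) = w i) ↔
    ∃ Γ₁ Γ₂ : Matrix (Fin N) (Fin N) ℂ, Γ₁.PosSemidef ∧ Γ₂.PosSemidef ∧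
      ∀ i j, 1 - w i * starRingEnd ℂ (w j) =
        (1 - (lam i).1 * starRingEnd ℂ ((lam j).1)) * Γ₁ i j +
        (1 - (lam i).2 * starRingEnd ℂ ((lam j).2)) * Γ₂ i j := by
  constructor
  · rintro ⟨φ, hφ, hb, hw⟩
    refine pbd_dual lam hlam (fun i j => 1 - w i * starRingEnd ℂ (w j)) ?_ ?_
    · intro i j
      simp only [map_sub, map_one, map_mul, Complex.conj_conj]
      ring
    · intro R hR1 hR2
      have := pbd_nec lam w hlam φ hφ hb hw R hR1 hR2
      simpa only [mul_comm (w _)] using this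
  · rintro ⟨Γ₁, Γ₂, h1, h2, h⟩
    exact pbd_suff lam w hlam Γ₁ Γ₂ h1 h2 h
end
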